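/- Let d ≥ 2, set s_d = d(d+1)/2, and let g be a Riemannian metric of class C² on the closed unit ball B̄₁ ⊂ ℝ^d. Then for every exponent α with 0 < α < 1/(1 + 2 s_d), every C¹ map u₀ : B̄₁ → ℝ^{d+1} that is short for g, and every ε > 0, there exists an isometric immersion u : B̄₁ → ℝ^{d+1} of (B̄₁, g) of class C^{1,α} with sup_{x ∈ B̄₁} |u(x) − u₀(x)| ≤ ε. (Conti–De Lellis–Székelyhidi, 2012.) -/

import Mathlib

noncomputable section
open Matrix Set Metric

attribute [local instance] Matrix.normedAddCommGroup Matrix.normedSpace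

/-- The Jacobian matrix (n×d) of a map `u : ℝᵈ → ℝⁿ` at a point `x`, with derivatives
taken within the closed unit ball. -/
def JacCB {d n : ℕ} (u : EuclideanSpace ℝ (Fin d) → EuclideanSpace ℝ (Fin n))
    (x : EuclideanSpace ℝ (Fin d)) : Matrix (Fin n) (Fin d) ℝ :=
  Matrix.of fun i j =>
    fderivWithin ℝ u (closedBall (0 : EuclideanSpace ℝ (Fin d)) 1) x (EuclideanSpace.single j 1) i

/-!
In codimension one the metric induced by an immersion `u` can be increased by a primitive metric
`a² ν ⊗ ν`, up to an error of order `μ⁻¹`, by adding the corrugation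
`μ⁻¹ (¼ sin 2t X + √2 cos t Y)`, `t = μ ⟪ν, y⟫`, where `X` is tangent and dual to `a² ν` and `Y` is
`a` times the unit normal. At defect of size `δ²` one stage first mollifies `u`, so that the
frequencies do not pile up through higher derivatives (the commutator estimate makes the metric
error quadratic in the mollification length), then splits the remaining defect into the `s_d`
primitive metrics with coefficients close to `δ²`, and corrugates once for each of them, multiplying
the frequency by a fixed power of the target ratio `κ` every time. A stage moves the map by `O(δ)`
in `C¹`, divides `δ` by `κ` and multiplies the `C²` norm by `κ ^ (2 s_d + o(1))`. Interpolating the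
increments between `C¹` and `C²` gives convergence in `C^{1,α}` as soon as `α (1 + 2 s_d) < 1`.

The iteration needs an initial map with defect `≈ δ² ∑ ν ⊗ ν`. An arbitrary short map is brought
there by Nash's qualitative version of the same step, starting from a small linear isometry plus a
multiple of `u₀`: this is an immersion, and the multiple is increased to one in small increments.
-/

namespace NashKuiper

set_option maxSynthPendingDepth 3

open scoped ContDiff RealInnerProductSpace

section Jets

variable {E V W G : Type*} [NormedAddCommGroup E] [NormedSpace ℝ E]
  [NormedAddCommGroup V] [NormedSpace ℝ V] [NormedAddCommGroup W] [NormedSpace ℝ W]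
  [NormedAddCommGroup G] [NormedSpace ℝ G] {s : Set E} {x : E} {A A' r : ℝ} {N : ℕ}

/-- `f` is smooth on `s`, and at the point `x` its derivatives of order `j ≤ N` are bounded by
`A * r ^ j`: amplitude `A`, frequency `r`. The bound is pointwise so that it also applies to
`f - f x`, whose amplitude at `x` vanishes. -/
structure JetBound (s : Set E) (f : E → V) (A r : ℝ) (N : ℕ) (x : E) : Prop where
  contDiffOn : ContDiffOn ℝ ∞ f s
  bound : ∀ j ≤ N, ‖iteratedFDerivWithin ℝ j f s x‖ ≤ A * r ^ j

namespace JetBound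

theorem norm_le {f : E → V} (h : JetBound s f A r N x) : ‖f x‖ ≤ A := by
  simpa using h.bound 0 N.zero_le

theorem nonneg {f : E → V} (h : JetBound s f A r N x) : 0 ≤ A :=
  (norm_nonneg _).trans h.norm_le

theorem mono {f : E → V} {r' : ℝ} {N' : ℕ} (h : JetBound s f A r N x)
    (hA : A ≤ A') (hr : 0 ≤ r) (hrr : r ≤ r') (hN : N' ≤ N) : JetBound s f A' r' N' x where
  contDiffOn := h.contDiffOn
  bound j hj := (h.bound j (hj.trans hN)).trans <| by
    have := h.nonneg.trans hA
    gcongr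

theorem congr {f g : E → V} (h : JetBound s f A r N x) (hfg : EqOn g f s) (hx : x ∈ s) :
    JetBound s g A r N x where
  contDiffOn := h.contDiffOn.congr hfg
  bound j hj := by
    rw [iteratedFDerivWithin_congr hfg hx]
    exact h.bound j hj

theorem norm_fderivWithin_le {f : E → V} (h : JetBound s f A r N x)
    (hs : UniqueDiffOn ℝ s) (hx : x ∈ s) (hN : 1 ≤ N) : ‖fderivWithin ℝ f s x‖ ≤ A * r := by
  have := h.bound 1 hN
  rwa [← zero_add 1, ← norm_iteratedFDerivWithin_fderivWithin hs hx,
    norm_iteratedFDerivWithin_zero, zero_add, pow_one] at this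

theorem fderivWithin {f : E → V} (h : JetBound s f A r (N + 1) x)
    (hs : UniqueDiffOn ℝ s) (hx : x ∈ s) : JetBound s (fderivWithin ℝ f s) (A * r) r N x where
  contDiffOn := h.contDiffOn.fderivWithin hs le_rfl
  bound j hj := by
    rw [norm_iteratedFDerivWithin_fderivWithin hs hx]
    exact (h.bound (j + 1) (by omega)).trans_eq (by ring)

theorem of_fderivWithin {f : E → V} (hf : DifferentiableOn ℝ f s)
    (h : JetBound s (_root_.fderivWithin ℝ f s) (A * r) r N x) (hA : ‖f x‖ ≤ A)
    (hs : UniqueDiffOn ℝ s) (hx : x ∈ s) : JetBound s f A r (N + 1) x where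
  contDiffOn := (contDiffOn_infty_iff_fderivWithin hs).2 ⟨hf, h.contDiffOn⟩
  bound
    | 0, _ => by simpa using hA
    | j + 1, hj => by
      rw [← norm_iteratedFDerivWithin_fderivWithin hs hx]
      exact (h.bound j (by omega)).trans_eq (by ring)

theorem of_norm_le {f : E → V} (hf : ContDiffOn ℝ ∞ f s)
    (h : ∀ j ≤ N, ‖iteratedFDerivWithin ℝ j f s x‖ ≤ A) (hr : 1 ≤ r) : JetBound s f A r N x where
  contDiffOn := hf
  bound j hj := (h j hj).trans <|
    le_mul_of_one_le_right ((norm_nonneg _).trans (h 0 N.zero_le)) (one_le_pow₀ hr)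

theorem const (c : V) (hr : 0 ≤ r) : JetBound s (fun _ => c) ‖c‖ r N x where
  contDiffOn := contDiffOn_const
  bound
    | 0, _ => by simp
    | j + 1, _ => by
      rw [iteratedFDerivWithin_const_of_ne j.succ_ne_zero, Pi.zero_apply, norm_zero]
      positivity

theorem add {f g : E → V} (hf : JetBound s f A r N x) (hg : JetBound s g A' r N x)
    (hs : UniqueDiffOn ℝ s) (hx : x ∈ s) : JetBound s (fun y => f y + g y) (A + A') r N x where
  contDiffOn := hf.contDiffOn.add hg.contDiffOn
  bound j hj := by
    have hj' : (j : WithTop ℕ∞) ≤ ∞ := mod_cast le_top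
    change ‖iteratedFDerivWithin ℝ j (f + g) s x‖ ≤ _
    rw [iteratedFDerivWithin_add_apply ((hf.contDiffOn x hx).of_le hj')
      ((hg.contDiffOn x hx).of_le hj') hs hx, add_mul]
    exact (norm_add_le _ _).trans (add_le_add (hf.bound j hj) (hg.bound j hj))

theorem sum {ι : Type*} (t : Finset ι) {f : ι → E → V} {A : ι → ℝ} (hr : 0 ≤ r)
    (hf : ∀ i ∈ t, JetBound s (f i) (A i) r N x) (hs : UniqueDiffOn ℝ s) (hx : x ∈ s) :
    JetBound s (fun y => ∑ i ∈ t, f i y) (∑ i ∈ t, A i) r N x := by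
  classical
  induction t using Finset.induction_on with
  | empty => simpa using const (s := s) (x := x) (N := N) (0 : V) hr
  | insert i t hi ih =>
    simp only [Finset.sum_insert hi]
    exact (hf i (t.mem_insert_self i)).add
      (ih fun k hk => hf k (Finset.mem_insert_of_mem hk)) hs hx

theorem clm_comp {f : E → V} (L : V →L[ℝ] W) (hf : JetBound s f A r N x)
    (hs : UniqueDiffOn ℝ s) (hx : x ∈ s) : JetBound s (fun y => L (f y)) (‖L‖ * A) r N x where
  contDiffOn := L.contDiff.comp_contDiffOn hf.contDiffOn
  bound j hj := by
    refine (L.norm_iteratedFDerivWithin_comp_left (hf.contDiffOn x hx) hs hx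
      (mod_cast le_top)).trans ?_
    rw [mul_assoc]
    gcongr
    exact hf.bound j hj

theorem const_smul {f : E → V} (c : ℝ) (hf : JetBound s f A r N x)
    (hs : UniqueDiffOn ℝ s) (hx : x ∈ s) : JetBound s (fun y => c • f y) (|c| * A) r N x where
  contDiffOn := hf.contDiffOn.const_smul c
  bound j hj := by
    change ‖iteratedFDerivWithin ℝ j (c • f) s x‖ ≤ _
    rw [iteratedFDerivWithin_const_smul_apply ((hf.contDiffOn x hx).of_le (mod_cast le_top)) hs hx,
      norm_smul, Real.norm_eq_abs, mul_assoc]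
    gcongr
    exact hf.bound j hj

theorem bilinear {f : E → V} {g : E → W} (L : V →L[ℝ] W →L[ℝ] G) (hL : ‖L‖ ≤ 1)
    (hf : JetBound s f A r N x) (hg : JetBound s g A' r N x)
    (hs : UniqueDiffOn ℝ s) (hx : x ∈ s) :
    JetBound s (fun y => L (f y) (g y)) (2 ^ N * (A * A')) r N x where
  contDiffOn := L.isBoundedBilinearMap.contDiff.comp_contDiffOn
    (hf.contDiffOn.prodMk hg.contDiffOn)
  bound j hj := by
    have hprod : ∀ i ≤ j, ‖iteratedFDerivWithin ℝ i f s x‖ *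
        ‖iteratedFDerivWithin ℝ (j - i) g s x‖ ≤ A * A' * r ^ j := fun i hi => by
      have h₁ := hf.bound i (hi.trans hj)
      calc _ ≤ (A * r ^ i) * (A' * r ^ (j - i)) :=
            mul_le_mul h₁ (hg.bound (j - i) (by omega)) (norm_nonneg _) ((norm_nonneg _).trans h₁)
        _ = A * A' * (r ^ i * r ^ (j - i)) := by ring
        _ = A * A' * r ^ j := by rw [← pow_add, Nat.add_sub_cancel' hi]
    have h0 : 0 ≤ A * A' * r ^ j := le_trans (by positivity) (hprod 0 j.zero_le)
    calc _ ≤ ∑ i ∈ Finset.range (j + 1), (j.choose i : ℝ) * ‖iteratedFDerivWithin ℝ i f s x‖ *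
            ‖iteratedFDerivWithin ℝ (j - i) g s x‖ :=
          L.norm_iteratedFDerivWithin_le_of_bilinear_of_le_one hf.contDiffOn hg.contDiffOn hs hx
            (mod_cast le_top) hL
      _ ≤ ∑ i ∈ Finset.range (j + 1), (j.choose i : ℝ) * (A * A' * r ^ j) := by
          refine Finset.sum_le_sum fun i hi => ?_
          rw [mul_assoc]
          exact mul_le_mul_of_nonneg_left (hprod i (Finset.mem_range_succ_iff.1 hi)) (by positivity)
      _ = 2 ^ j * (A * A' * r ^ j) := by
          rw [← Finset.sum_mul, ← Nat.cast_sum, Nat.sum_range_choose]; norm_num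
      _ ≤ 2 ^ N * (A * A' * r ^ j) := by gcongr; norm_num
      _ = _ := by ring

theorem smul {f : E → ℝ} {g : E → W} (hf : JetBound s f A r N x) (hg : JetBound s g A' r N x)
    (hs : UniqueDiffOn ℝ s) (hx : x ∈ s) :
    JetBound s (fun y => f y • g y) (2 ^ N * (A * A')) r N x :=
  bilinear (ContinuousLinearMap.lsmul ℝ ℝ) ContinuousLinearMap.opNorm_lsmul_le hf hg hs hx

end JetBound

theorem jetBound_comp {Φ : V → W} {U : Set V} {f : E → V} {C : ℝ}
    (hΦ : ContDiffOn ℝ ∞ Φ U) (hU : UniqueDiffOn ℝ U) (hfs : ContDiffOn ℝ ∞ f s)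
    (hs : UniqueDiffOn ℝ s) (hx : x ∈ s) (hmaps : MapsTo f s U)
    (hC : ∀ i ≤ N, ‖iteratedFDerivWithin ℝ i Φ U (f x)‖ ≤ C) (hA : 1 ≤ A) (hr : 0 ≤ r)
    (hf : ∀ j, 1 ≤ j → j ≤ N → ‖iteratedFDerivWithin ℝ j f s x‖ ≤ A * r ^ j) :
    JetBound s (fun y => Φ (f y)) (N.factorial * C * A ^ N) r N x where
  contDiffOn := hΦ.comp hfs hmaps
  bound j hj := by
    have hC0 : 0 ≤ C := (norm_nonneg _).trans (hC 0 N.zero_le)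
    have hf' : ∀ i, 1 ≤ i → i ≤ j → ‖iteratedFDerivWithin ℝ i f s x‖ ≤ (A * r) ^ i :=
      fun i h1 hi => (hf i h1 (hi.trans hj)).trans <| by
        rw [mul_pow]
        gcongr
        exact le_self_pow₀ hA (by omega)
    refine (norm_iteratedFDerivWithin_comp_le hΦ hfs (mod_cast le_top) hU hs hmaps hx
      (fun i hi => hC i (hi.trans hj)) hf').trans ?_
    rw [mul_pow, ← mul_assoc]
    gcongr

theorem exists_bound_iteratedFDerivWithin {f : E → V} {K : Set E} (hK : IsCompact K) (hKs : K ⊆ s)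
    (hs : UniqueDiffOn ℝ s) (hf : ContDiffOn ℝ ∞ f s) (N : ℕ) :
    ∃ C : ℝ, 0 ≤ C ∧ ∀ y ∈ K, ∀ i ≤ N, ‖iteratedFDerivWithin ℝ i f s y‖ ≤ C := by
  have h (i : ℕ) : ∃ C : ℝ, ∀ y ∈ K, ‖iteratedFDerivWithin ℝ i f s y‖ ≤ C :=
    hK.exists_bound_of_continuousOn
      ((hf.continuousOn_iteratedFDerivWithin (mod_cast le_top) hs).mono hKs)
  choose C hC using h
  refine ⟨∑ i ∈ Finset.range (N + 1), |C i|, by positivity, fun y hy i hi => ?_⟩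
  refine (hC i y hy).trans ((le_abs_self _).trans ?_)
  exact Finset.single_le_sum (f := fun i => |C i|) (fun i _ => abs_nonneg _)
    (Finset.mem_range_succ_iff.2 hi)

theorem exists_jetBound_comp {Φ : V → W} {U K : Set V} (hU : UniqueDiffOn ℝ U) (hK : IsCompact K)
    (hKU : K ⊆ U) (hΦ : ContDiffOn ℝ ∞ Φ U) (hs : UniqueDiffOn ℝ s) (A : ℝ) (N : ℕ) :
    ∃ C : ℝ, 0 ≤ C ∧ ∀ (f : E → V) (r : ℝ), MapsTo f s K → 0 ≤ r →
      (∀ x ∈ s, JetBound s f A r N x) → ∀ x ∈ s, JetBound s (fun y => Φ (f y)) C r N x := by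
  obtain ⟨C, hC0, hC⟩ := exists_bound_iteratedFDerivWithin hK hKU hU hΦ N
  refine ⟨N.factorial * C * max A 1 ^ N, by positivity, fun f r hm hr hf x hx => ?_⟩
  exact jetBound_comp hΦ hU (hf x hx).contDiffOn hs hx (fun y hy => hKU (hm hy))
    (fun i hi => hC _ (hm hx) i hi) (le_max_right _ _) hr fun j _ hj =>
      ((hf x hx).mono (le_max_left A 1) hr le_rfl le_rfl).bound j hj

theorem norm_iteratedFDerivWithin_clm_le (L : E →L[ℝ] V) (hs : UniqueDiffOn ℝ s) (hx : x ∈ s)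
    (hr : ‖L‖ ≤ A * r) (hr0 : 0 ≤ r) {j : ℕ} (hj : 1 ≤ j) :
    ‖iteratedFDerivWithin ℝ j L s x‖ ≤ A * r ^ j := by
  obtain ⟨k, rfl⟩ := Nat.exists_eq_add_of_le' hj
  have hL : EqOn (fderivWithin ℝ L s) (fun _ => L) s := fun y hy => L.fderivWithin (hs y hy)
  rw [← norm_iteratedFDerivWithin_fderivWithin hs hx, iteratedFDerivWithin_congr hL hx]
  exact ((JetBound.const L hr0).bound k le_rfl).trans <| by
    rw [pow_succ', ← mul_assoc]
    gcongr

theorem jetBound_comp_const_mul_clm {Φ : ℝ → ℝ} (hΦ : ContDiff ℝ ∞ Φ)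
    (hb : ∀ n y, |iteratedDeriv n Φ y| ≤ 1) (L : E →L[ℝ] ℝ) (hA : 1 ≤ A) (hL : ‖L‖ ≤ A)
    (hs : UniqueDiffOn ℝ s) (hx : x ∈ s) (hr : 0 ≤ r) (N : ℕ) :
    JetBound s (fun y => Φ (r * L y)) (N.factorial * A ^ N) r N x := by
  have hrL : ‖r • L‖ ≤ A * r := by
    rw [norm_smul, Real.norm_of_nonneg hr, mul_comm]
    gcongr
  have h := jetBound_comp (f := ⇑(r • L)) (U := univ) (C := 1) hΦ.contDiffOn uniqueDiffOn_univ
    (r • L).contDiff.contDiffOn hs hx (mapsTo_univ _ _)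
    (fun i (_ : i ≤ N) => by
      rw [iteratedFDerivWithin_univ, norm_iteratedFDeriv_eq_norm_iteratedDeriv]
      exact hb i _)
    hA hr (fun j hj _ => norm_iteratedFDerivWithin_clm_le _ hs hx hrL hr hj)
  simpa using h

end Jets

section UnitBall

variable {E V : Type*} [NormedAddCommGroup E] [NormedSpace ℝ E] [NormedAddCommGroup V]
  [NormedSpace ℝ V] {f : E → V} {ℓ : ℝ} {x : E}

local notation "𝔹" => closedBall (0 : E) 1

theorem uniqueDiffOn_unitBall : UniqueDiffOn ℝ 𝔹 :=
  uniqueDiffOn_convex (convex_closedBall _ _) (by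
    simp [interior_closedBall (0 : E) one_ne_zero])

theorem smul_sub_smul_mem_unitBall (h0 : 0 < ℓ) (h1 : ℓ ≤ 1) (hx : x ∈ 𝔹) {t : E} (ht : t ∈ 𝔹) :
    (1 - ℓ) • x - ℓ • t ∈ 𝔹 := by
  rw [mem_closedBall_zero_iff] at *
  calc ‖(1 - ℓ) • x - ℓ • t‖ ≤ ‖(1 - ℓ) • x‖ + ‖ℓ • t‖ := norm_sub_le _ _
    _ = (1 - ℓ) * ‖x‖ + ℓ * ‖t‖ := by
      rw [norm_smul, norm_smul, Real.norm_of_nonneg h0.le, Real.norm_of_nonneg (by linarith)]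
    _ ≤ 1 := by nlinarith

theorem dist_smul_sub_smul_le (h0 : 0 < ℓ) (hx : x ∈ 𝔹) {t : E} (ht : t ∈ 𝔹) :
    dist ((1 - ℓ) • x - ℓ • t) x ≤ 2 * ℓ := by
  rw [mem_closedBall_zero_iff] at *
  rw [dist_eq_norm, show (1 - ℓ) • x - ℓ • t - x = -(ℓ • (x + t)) by module, norm_neg, norm_smul,
    Real.norm_of_nonneg h0.le, mul_comm]
  gcongr
  linarith [norm_add_le x t]

theorem smul_div_smul_sub (h0 : ℓ ≠ 0) (x t : E) :
    ℓ • (((1 - ℓ) / ℓ) • x - t) = (1 - ℓ) • x - ℓ • t := by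
  rw [smul_sub, smul_smul, mul_div_cancel₀ _ h0]

theorem norm_sub_sub_fderivWithin_le {s : Set E} (hs : Convex ℝ s) (hf : DifferentiableOn ℝ f s)
    {y : E} (hx : x ∈ s) (hy : y ∈ s) {c : ℝ}
    (hc : ∀ z ∈ s, ‖z - x‖ ≤ ‖y - x‖ → ‖fderivWithin ℝ f s z - fderivWithin ℝ f s x‖ ≤ c) :
    ‖f y - f x - fderivWithin ℝ f s x (y - x)‖ ≤ c * ‖y - x‖ := by
  have hsub : segment ℝ x y ⊆ s := hs.segment_subset hx hy
  exact (convex_segment x y).norm_image_sub_le_of_norm_hasFDerivWithin_le'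
    (fun z hz => (hf z (hsub hz)).hasFDerivWithinAt.mono hsub)
    (fun z hz => hc z (hsub hz) (norm_sub_le_of_mem_segment hz))
    (left_mem_segment ℝ x y) (right_mem_segment ℝ x y)

end UnitBall

section Mollification

open MeasureTheory Filter
open scoped Convolution

theorem norm_iteratedFDeriv_convolution_le {E : Type} [NormedAddCommGroup E] [NormedSpace ℝ E]
    [FiniteDimensional ℝ E] [MeasurableSpace E] [BorelSpace E] {μ : Measure E}
    [μ.IsAddHaarMeasure] {V : Type*} [NormedAddCommGroup V] [NormedSpace ℝ V] {F : E → V}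
    (hF : LocallyIntegrable F μ) {K : Set E} {X : E} {A : ℝ} (hA0 : 0 ≤ A)
    (hA : ∀ t ∈ K, ‖F (X - t)‖ ≤ A) (j : ℕ) {G : Type} {W : Type*} [NormedAddCommGroup G]
    [NormedSpace ℝ G] [NormedAddCommGroup W] [NormedSpace ℝ W] (L : G →L[ℝ] V →L[ℝ] W) {φ : E → G}
    (hφ : ContDiff ℝ ∞ φ) (hc : HasCompactSupport φ) (hK : tsupport φ ⊆ K) :
    ‖iteratedFDeriv ℝ j (φ ⋆[L, μ] F) X‖ ≤ ‖L‖ * A * ∫ t, ‖iteratedFDeriv ℝ j φ t‖ ∂μ := by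
  induction j generalizing G W with
  | zero =>
    simp only [norm_iteratedFDeriv_zero, convolution_def]
    rw [← integral_const_mul]
    refine norm_integral_le_of_norm_le
      ((hφ.continuous.integrable_of_hasCompactSupport hc).norm.const_mul _) (.of_forall fun t => ?_)
    by_cases ht : t ∈ tsupport φ
    · calc ‖L (φ t) (F (X - t))‖ ≤ ‖L‖ * ‖φ t‖ * ‖F (X - t)‖ := L.le_opNorm₂ _ _
        _ ≤ ‖L‖ * ‖φ t‖ * A := by gcongr; exact hA t (hK ht)
        _ = _ := by ring
    · simp [image_eq_zero_of_notMem_tsupport ht]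
  | succ j ih =>
    have hd : fderiv ℝ (φ ⋆[L, μ] F) = (fderiv ℝ φ ⋆[L.precompL E, μ] F) := by
      ext1 y
      exact (hc.hasFDerivAt_convolution_left L (hφ.of_le (mod_cast le_top)) hF y).fderiv
    rw [← norm_iteratedFDeriv_fderiv, hd]
    refine (ih (L.precompL E) (hφ.fderiv_right (by simp)) (hc.fderiv ℝ)
      ((tsupport_fderiv_subset ℝ).trans hK)).trans ?_
    simp only [norm_iteratedFDeriv_fderiv]
    gcongr
    exact L.norm_precompL_le E

variable (E : Type) [NormedAddCommGroup E] [InnerProductSpace ℝ E] [FiniteDimensional ℝ E]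
  [MeasurableSpace E] [BorelSpace E]

/-- The smooth bump function underlying the mollification kernel. -/
def mollBump : ContDiffBump (0 : E) := ⟨1 / 2, 1, by norm_num, by norm_num⟩

/-- The mollification kernel: a smooth probability density supported in the unit ball. -/
def mollKernel : E → ℝ := (mollBump E).normed volume

variable {E}

theorem contDiff_mollKernel : ContDiff ℝ ∞ (mollKernel E) := (mollBump E).contDiff_normed

theorem hasCompactSupport_mollKernel : HasCompactSupport (mollKernel E) :=
  (mollBump E).hasCompactSupport_normed

theorem tsupport_mollKernel : tsupport (mollKernel E) = closedBall 0 1 :=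
  (mollBump E).tsupport_normed_eq

theorem mollKernel_nonneg (t : E) : 0 ≤ mollKernel E t := (mollBump E).nonneg_normed t

theorem integral_mollKernel : ∫ t, mollKernel E t = 1 := (mollBump E).integral_normed

theorem mollKernel_eq_zero {t : E} (ht : t ∉ closedBall (0 : E) 1) : mollKernel E t = 0 :=
  image_eq_zero_of_notMem_tsupport (tsupport_mollKernel (E := E) ▸ ht)

variable {V W : Type*} [NormedAddCommGroup V] [NormedSpace ℝ V] [NormedAddCommGroup W]
  [NormedSpace ℝ W]

local notation "𝔹" => closedBall (0 : E) 1

theorem integrable_mollKernel_smul {F : E → V} (hF : ContinuousOn F 𝔹) :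
    Integrable fun t => mollKernel E t • F t := by
  have h := (contDiff_mollKernel.continuous.continuousOn.smul hF).integrableOn_compact
    (μ := volume) (isCompact_closedBall _ _)
  rw [← integrable_indicator_iff isClosed_closedBall.measurableSet] at h
  refine h.congr (.of_forall fun t => ?_)
  by_cases ht : t ∈ 𝔹
  · simp [indicator_of_mem ht]
  · simp [indicator_of_notMem ht, mollKernel_eq_zero ht]

theorem norm_integral_mollKernel_smul_le {F : E → V} {a : ℝ} (hF : ∀ t ∈ 𝔹, ‖F t‖ ≤ a) :
    ‖∫ t, mollKernel E t • F t‖ ≤ a := by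
  calc ‖∫ t, mollKernel E t • F t‖ ≤ ∫ t, mollKernel E t * a := by
        refine norm_integral_le_of_norm_le
          (integrable_mollKernel_smul (F := fun _ => a) continuousOn_const) (.of_forall fun t => ?_)
        by_cases ht : t ∈ 𝔹
        · rw [norm_smul, Real.norm_of_nonneg (mollKernel_nonneg t)]
          exact mul_le_mul_of_nonneg_left (hF t ht) (mollKernel_nonneg t)
        · simp [mollKernel_eq_zero ht]
    _ = a := by rw [integral_mul_const, integral_mollKernel, one_mul]

/-- Mollification at scale `ℓ` on the closed unit ball. The average is taken around `(1 - ℓ) • x`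
rather than `x`, so that only values of `f` in the ball enter and no extension of `f` is needed. -/
def moll (ℓ : ℝ) (f : E → V) (x : E) : V :=
  ∫ t, mollKernel E t • f ((1 - ℓ) • x - ℓ • t)

variable {ℓ : ℝ} {f : E → V} {x : E}

theorem integrable_moll (h0 : 0 < ℓ) (h1 : ℓ ≤ 1) (hf : ContinuousOn f 𝔹) (hx : x ∈ 𝔹) :
    Integrable fun t => mollKernel E t • f ((1 - ℓ) • x - ℓ • t) :=
  integrable_mollKernel_smul
    (hf.comp (by fun_prop) fun _ ht => smul_sub_smul_mem_unitBall h0 h1 hx ht)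

theorem moll_const [CompleteSpace V] (ℓ : ℝ) (c : V) (x : E) : moll ℓ (fun _ => c) x = c := by
  rw [moll, integral_smul_const, integral_mollKernel, one_smul]

theorem moll_sub (h0 : 0 < ℓ) (h1 : ℓ ≤ 1) {g : E → V} (hf : ContinuousOn f 𝔹)
    (hg : ContinuousOn g 𝔹) (hx : x ∈ 𝔹) :
    moll ℓ (fun y => f y - g y) x = moll ℓ f x - moll ℓ g x := by
  simp only [moll, smul_sub]
  exact integral_sub (integrable_moll h0 h1 hf hx) (integrable_moll h0 h1 hg hx)

theorem moll_clm [CompleteSpace V] [CompleteSpace W] (h0 : 0 < ℓ) (h1 : ℓ ≤ 1)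
    (hf : ContinuousOn f 𝔹) (L : V →L[ℝ] W) (hx : x ∈ 𝔹) :
    moll ℓ (fun y => L (f y)) x = L (moll ℓ f x) := by
  simp only [moll, ← L.integral_comp_comm (integrable_moll h0 h1 hf hx), map_smul]

theorem norm_moll_le (h0 : 0 < ℓ) (h1 : ℓ ≤ 1) {a : ℝ} (hx : x ∈ 𝔹)
    (h : ∀ z ∈ 𝔹, dist z x ≤ 2 * ℓ → ‖f z‖ ≤ a) : ‖moll ℓ f x‖ ≤ a :=
  norm_integral_mollKernel_smul_le fun _ ht =>
    h _ (smul_sub_smul_mem_unitBall h0 h1 hx ht) (dist_smul_sub_smul_le h0 hx ht)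

theorem norm_moll_sub_le [CompleteSpace V] (h0 : 0 < ℓ) (h1 : ℓ ≤ 1) (hf : ContinuousOn f 𝔹)
    {c : V} {a : ℝ} (hx : x ∈ 𝔹) (h : ∀ z ∈ 𝔹, dist z x ≤ 2 * ℓ → ‖f z - c‖ ≤ a) :
    ‖moll ℓ f x - c‖ ≤ a := by
  rw [← moll_const ℓ c x, ← moll_sub h0 h1 hf continuousOn_const hx]
  exact norm_moll_le h0 h1 hx h

theorem locallyIntegrable_indicator_smul {V : Type*} [NormedAddCommGroup V] {f : E → V}
    (hf : ContinuousOn f 𝔹) (h0 : 0 < ℓ) :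
    LocallyIntegrable fun y : E => indicator 𝔹 f (ℓ • y) := by
  have h : Integrable (indicator 𝔹 f) :=
    (hf.integrableOn_compact (isCompact_closedBall _ _)).integrable_indicator
      isClosed_closedBall.measurableSet
  exact (h.comp_smul h0.ne').locallyIntegrable

theorem moll_eqOn_convolution (h0 : 0 < ℓ) (h1 : ℓ ≤ 1) (f : E → V) :
    EqOn (moll ℓ f) (fun x => (mollKernel E ⋆[ContinuousLinearMap.lsmul ℝ ℝ, volume]
      fun y => indicator 𝔹 f (ℓ • y)) (((1 - ℓ) / ℓ) • x)) 𝔹 := by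
  refine fun x hx => integral_congr_ae (.of_forall fun t => ?_)
  simp only [ContinuousLinearMap.lsmul_apply, smul_div_smul_sub h0.ne']
  by_cases ht : t ∈ 𝔹
  · rw [indicator_of_mem (smul_sub_smul_mem_unitBall h0 h1 hx ht)]
  · simp [mollKernel_eq_zero ht]

variable (E) in
/-- The constant in the derivative bounds for mollifications. -/
def mollConst (N : ℕ) : ℝ :=
  ∑ j ∈ Finset.range (N + 1), ∫ t, ‖iteratedFDeriv ℝ j (mollKernel E) t‖

theorem mollConst_nonneg (N : ℕ) : 0 ≤ mollConst E N :=
  Finset.sum_nonneg fun _ _ => integral_nonneg fun _ => norm_nonneg _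

theorem integral_norm_iteratedFDeriv_mollKernel_le {j N : ℕ} (hj : j ≤ N) :
    ∫ t, ‖iteratedFDeriv ℝ j (mollKernel E) t‖ ≤ mollConst E N :=
  Finset.single_le_sum (f := fun j => ∫ t, ‖iteratedFDeriv ℝ j (mollKernel E) t‖)
    (fun _ _ => integral_nonneg fun _ => norm_nonneg _) (Finset.mem_range_succ_iff.2 hj)

theorem norm_iteratedFDeriv_mollKernel_convolution_le (h0 : 0 < ℓ) (h1 : ℓ ≤ 1)
    (hf : ContinuousOn f 𝔹) {a : ℝ} (ha : 0 ≤ a) (hx : x ∈ 𝔹)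
    (h : ∀ z ∈ 𝔹, dist z x ≤ 2 * ℓ → ‖f z‖ ≤ a) {j N : ℕ} (hj : j ≤ N) :
    ‖iteratedFDeriv ℝ j (mollKernel E ⋆[ContinuousLinearMap.lsmul ℝ ℝ, volume]
      fun y => indicator 𝔹 f (ℓ • y)) (((1 - ℓ) / ℓ) • x)‖ ≤ mollConst E N * a := by
  have hbound : ∀ t ∈ 𝔹, ‖indicator 𝔹 f (ℓ • (((1 - ℓ) / ℓ) • x - t))‖ ≤ a := fun t ht => by
    have hmem := smul_sub_smul_mem_unitBall h0 h1 hx ht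
    rw [smul_div_smul_sub h0.ne', indicator_of_mem hmem]
    exact h _ hmem (dist_smul_sub_smul_le h0 hx ht)
  refine (norm_iteratedFDeriv_convolution_le (locallyIntegrable_indicator_smul hf h0) ha hbound j
    (ContinuousLinearMap.lsmul ℝ ℝ) contDiff_mollKernel hasCompactSupport_mollKernel
    tsupport_mollKernel.le).trans ?_
  rw [mul_comm (mollConst E N)]
  refine mul_le_mul (mul_le_of_le_one_left ha ContinuousLinearMap.opNorm_lsmul_le)
    (integral_norm_iteratedFDeriv_mollKernel_le hj) (integral_nonneg fun _ => norm_nonneg _) ha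

theorem jetBound_moll (h0 : 0 < ℓ) (h1 : ℓ ≤ 1) (hf : ContinuousOn f 𝔹) {a : ℝ} (hx : x ∈ 𝔹)
    (h : ∀ z ∈ 𝔹, dist z x ≤ 2 * ℓ → ‖f z‖ ≤ a) (N : ℕ) :
    JetBound 𝔹 (moll ℓ f) (mollConst E N * a) (1 / ℓ) N x := by
  have ha : 0 ≤ a := (norm_nonneg _).trans (h x hx (by simpa using h0.le))
  set Ψ := mollKernel E ⋆[ContinuousLinearMap.lsmul ℝ ℝ, volume] fun y => indicator 𝔹 f (ℓ • y)
  have hΨ : ContDiff ℝ ∞ Ψ := hasCompactSupport_mollKernel.contDiff_convolution_left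
    (ContinuousLinearMap.lsmul ℝ ℝ) contDiff_mollKernel (locallyIntegrable_indicator_smul hf h0)
  set L : E →L[ℝ] E := ((1 - ℓ) / ℓ) • ContinuousLinearMap.id ℝ E
  have hL : ‖L‖ ≤ 1 / ℓ := by
    rw [norm_smul, Real.norm_of_nonneg (div_nonneg (by linarith) h0.le)]
    refine (mul_le_of_le_one_right (div_nonneg (by linarith) h0.le)
      ContinuousLinearMap.norm_id_le).trans ?_
    gcongr
    linarith
  refine JetBound.congr ?_ (moll_eqOn_convolution h0 h1 f) hx
  change JetBound 𝔹 (Ψ ∘ L) _ _ _ _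
  have hΨL : ContDiff ℝ ∞ (Ψ ∘ L) := hΨ.comp L.contDiff
  refine ⟨hΨL.contDiffOn, fun j hj => ?_⟩
  rw [iteratedFDerivWithin_eq_iteratedFDeriv uniqueDiffOn_unitBall
    (hΨL.contDiffAt.of_le (mod_cast le_top)) hx, L.iteratedFDeriv_comp_right
      (hΨ.of_le (mod_cast le_top : (j : WithTop ℕ∞) ≤ ∞)) x le_rfl]
  refine (ContinuousMultilinearMap.norm_compContinuousLinearMap_le _ _).trans ?_
  rw [Finset.prod_const, Finset.card_univ, Fintype.card_fin]
  gcongr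
  · exact mul_nonneg (mollConst_nonneg N) ha
  · exact norm_iteratedFDeriv_mollKernel_convolution_le h0 h1 hf ha hx h hj

theorem contDiffOn_moll (h0 : 0 < ℓ) (h1 : ℓ ≤ 1) (hf : ContinuousOn f 𝔹) :
    ContDiffOn ℝ ∞ (moll ℓ f) 𝔹 := by
  obtain ⟨a, ha⟩ := (isCompact_closedBall (0 : E) 1).exists_bound_of_continuousOn hf
  exact (jetBound_moll h0 h1 hf (mem_closedBall_self zero_le_one) (fun z hz _ => ha z hz)
    0).contDiffOn

theorem moll_sub_moll_sub_eq_integral (h0 : 0 < ℓ) (h1 : ℓ ≤ 1) (hf : ContinuousOn f 𝔹)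
    {f' : E → E →L[ℝ] V} (hf' : ContinuousOn f' 𝔹) {y : E} (hx : x ∈ 𝔹) (hy : y ∈ 𝔹) :
    moll ℓ f y - moll ℓ f x - ((1 - ℓ) • moll ℓ f' x) (y - x) =
      ∫ t, mollKernel E t • (f ((1 - ℓ) • y - ℓ • t) - f ((1 - ℓ) • x - ℓ • t) -
        f' ((1 - ℓ) • x - ℓ • t) ((1 - ℓ) • y - ℓ • t - ((1 - ℓ) • x - ℓ • t))) := by
  have hf'x := integrable_moll h0 h1 hf' hx
  have hlin : ∀ t, mollKernel E t • f' ((1 - ℓ) • x - ℓ • t)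
      ((1 - ℓ) • y - ℓ • t - ((1 - ℓ) • x - ℓ • t)) =
        (mollKernel E t • f' ((1 - ℓ) • x - ℓ • t)) ((1 - ℓ) • (y - x)) := fun t => by
    rw [sub_sub_sub_cancel_right, ← smul_sub, _root_.smul_apply]
  simp only [smul_sub _ (_ - _), smul_sub _ (f _), hlin]
  have hfy := integrable_moll h0 h1 hf hy
  have hfx := integrable_moll h0 h1 hf hx
  have hfyx : Integrable fun t => mollKernel E t • f ((1 - ℓ) • y - ℓ • t) -
      mollKernel E t • f ((1 - ℓ) • x - ℓ • t) := hfy.sub hfx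
  rw [integral_sub hfyx (hf'x.apply_continuousLinearMap _), integral_sub hfy hfx,
    ← ContinuousLinearMap.integral_apply hf'x, map_smul]
  rfl

theorem hasFDerivWithinAt_moll (h0 : 0 < ℓ) (h1 : ℓ ≤ 1) (hf : ContDiffOn ℝ 1 f 𝔹) (hx : x ∈ 𝔹) :
    HasFDerivWithinAt (moll ℓ f) ((1 - ℓ) • moll ℓ (fderivWithin ℝ f 𝔹) x) 𝔹 x := by
  have hf' : ContinuousOn (fderivWithin ℝ f 𝔹) 𝔹 :=
    hf.continuousOn_fderivWithin uniqueDiffOn_unitBall le_rfl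
  rw [hasFDerivWithinAt_iff_isLittleO, Asymptotics.isLittleO_iff]
  intro c hc
  obtain ⟨η, hη, hηc⟩ := Metric.uniformContinuousOn_iff.1
    ((isCompact_closedBall (0 : E) 1).uniformContinuousOn_of_continuous hf') c hc
  filter_upwards [self_mem_nhdsWithin, mem_nhdsWithin_of_mem_nhds (ball_mem_nhds x hη)] with
    y hy hyx
  rw [moll_sub_moll_sub_eq_integral h0 h1 hf.continuousOn hf' hx hy]
  refine norm_integral_mollKernel_smul_le fun t ht => ?_
  have hX := smul_sub_smul_mem_unitBall h0 h1 hx ht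
  have hle : ‖(1 - ℓ) • y - ℓ • t - ((1 - ℓ) • x - ℓ • t)‖ ≤ ‖y - x‖ := by
    rw [sub_sub_sub_cancel_right, ← smul_sub, norm_smul, Real.norm_of_nonneg (by linarith)]
    exact mul_le_of_le_one_left (norm_nonneg _) (by linarith)
  refine (norm_sub_sub_fderivWithin_le (convex_closedBall 0 1) (hf.differentiableOn one_ne_zero) hX
    (smul_sub_smul_mem_unitBall h0 h1 hy ht) fun z hz hzx => ?_).trans (by gcongr)
  rw [← dist_eq_norm]
  refine (hηc z hz _ hX ?_).le
  rw [dist_eq_norm]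
  exact (hzx.trans hle).trans_lt (mem_ball_iff_norm.1 hyx)

section Commutator

theorem norm_bilinear_le_sq {B : V →L[ℝ] V →L[ℝ] W} (hB : ‖B‖ ≤ 1) {v w : V} {a : ℝ}
    (hv : ‖v‖ ≤ a) (hw : ‖w‖ ≤ a) :
    ‖B v w‖ ≤ a ^ 2 := by
  have ha := (norm_nonneg _).trans hv
  calc ‖B v w‖ ≤ ‖B‖ * ‖v‖ * ‖w‖ := B.le_opNorm₂ v w
    _ ≤ 1 * a * a := by gcongr
    _ = a ^ 2 := by ring

variable [CompleteSpace V] [CompleteSpace W] {γ : E → W} (B : V →L[ℝ] V →L[ℝ] W)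

theorem moll_sub_bilinear_moll_eq (h0 : 0 < ℓ) (h1 : ℓ ≤ 1) (hf : ContinuousOn f 𝔹)
    (hγ : ContinuousOn γ 𝔹) (c : V) (hx : x ∈ 𝔹) :
    moll ℓ γ x - B (moll ℓ f x) (moll ℓ f x) =
      moll ℓ (fun z => γ z - B (f z) (f z)) x + moll ℓ (fun z => B (f z - c) (f z - c)) x -
        B (moll ℓ (fun z => f z - c) x) (moll ℓ (fun z => f z - c) x) := by
  have hL : ContinuousOn (fun z => (B.flip c + B c) (f z)) 𝔹 := by fun_prop
  have hLc : ContinuousOn (fun z => (B.flip c + B c) (f z) - B c c) 𝔹 := by fun_prop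
  have hB : ContinuousOn (fun z => B (f z) (f z)) 𝔹 := by fun_prop
  have hexp : (fun z => B (f z - c) (f z - c)) =
      fun z => B (f z) (f z) - ((B.flip c + B c) (f z) - B c c) := by
    funext z
    simp only [map_sub, _root_.sub_apply, _root_.add_apply, ContinuousLinearMap.flip_apply]
    abel
  rw [hexp, moll_sub h0 h1 hγ hB hx, moll_sub h0 h1 hB hLc hx,
    moll_sub h0 h1 hL continuousOn_const hx, moll_sub h0 h1 hf continuousOn_const hx,
    moll_clm h0 h1 hf, moll_const, moll_const]
  · simp only [map_sub, _root_.sub_apply, _root_.add_apply, ContinuousLinearMap.flip_apply]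
    abel
  · exact hx

variable {B}

theorem jetBound_moll_sub_bilinear_moll (hB : ‖B‖ ≤ 1) (h0 : 0 < ℓ) (h1 : ℓ ≤ 1)
    (hf : ContinuousOn f 𝔹) (hγ : ContinuousOn γ 𝔹) (hx : x ∈ 𝔹) {a b : ℝ}
    (hb : ∀ z ∈ 𝔹, ‖γ z - B (f z) (f z)‖ ≤ b)
    (ha : ∀ z ∈ 𝔹, dist z x ≤ 2 * ℓ → ‖f z - f x‖ ≤ a) (N : ℕ) :
    JetBound 𝔹 (fun y => moll ℓ γ y - B (moll ℓ f y) (moll ℓ f y))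
      (mollConst E N * b + mollConst E N * a ^ 2 + 2 ^ N * (mollConst E N * a) ^ 2)
      (1 / ℓ) N x := by
  have hfx : ContinuousOn (fun z => f z - f x) 𝔹 := by fun_prop
  have hγB : ContinuousOn (fun z => γ z - B (f z) (f z)) 𝔹 := by fun_prop
  have hBfx : ContinuousOn (fun z => B (f z - f x) (f z - f x)) 𝔹 := by fun_prop
  have hjγ := jetBound_moll h0 h1 hγB hx (fun z hz _ => hb z hz) N
  have hjB := jetBound_moll h0 h1 hBfx hx
    (fun z hz hd => norm_bilinear_le_sq hB (ha z hz hd) (ha z hz hd)) N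
  have hjf := jetBound_moll h0 h1 hfx hx ha N
  have hjff := (hjf.bilinear B hB hjf uniqueDiffOn_unitBall hx).const_smul (-1)
    uniqueDiffOn_unitBall hx
  have hj := ((hjγ.add hjB uniqueDiffOn_unitBall hx).add hjff uniqueDiffOn_unitBall hx).congr
    (g := fun y => moll ℓ γ y - B (moll ℓ f y) (moll ℓ f y)) (fun y hy => by
      simp only [moll_sub_bilinear_moll_eq B h0 h1 hf hγ (f x) hy]
      module) hx
  refine hj.mono (le_of_eq ?_) (by positivity) le_rfl le_rfl
  rw [abs_neg, abs_one]
  ring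

theorem norm_moll_sub_bilinear_moll_sub_le (hB : ‖B‖ ≤ 1) (h0 : 0 < ℓ) (h1 : ℓ ≤ 1)
    (hf : ContinuousOn f 𝔹) (hγ : ContinuousOn γ 𝔹) (hx : x ∈ 𝔹) {a b : ℝ} {m : W}
    (hb : ∀ z ∈ 𝔹, ‖γ z - B (f z) (f z) - m‖ ≤ b)
    (ha : ∀ z ∈ 𝔹, dist z x ≤ 2 * ℓ → ‖f z - f x‖ ≤ a) :
    ‖moll ℓ γ x - B (moll ℓ f x) (moll ℓ f x) - m‖ ≤ b + 2 * a ^ 2 := by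
  have hγB : ContinuousOn (fun z => γ z - B (f z) (f z)) 𝔹 := by fun_prop
  have hγm := norm_moll_sub_le h0 h1 hγB hx fun z hz _ => hb z hz
  have hBm := norm_moll_le h0 h1 hx
    fun z hz hd => norm_bilinear_le_sq hB (ha z hz hd) (ha z hz hd)
  have hfm := norm_moll_le h0 h1 hx ha
  have hBfm := norm_bilinear_le_sq hB hfm hfm
  rw [moll_sub_bilinear_moll_eq B h0 h1 hf hγ (f x) hx, add_sub_assoc, add_sub_right_comm]
  refine (norm_add_le _ _).trans ?_
  linarith [norm_sub_le (moll ℓ (fun z => B (f z - f x) (f z - f x)) x)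
    (B (moll ℓ (fun z => f z - f x) x) (moll ℓ (fun z => f z - f x) x))]

end Commutator

section Smoothing

theorem jetBound_fderivWithin_moll (h0 : 0 < ℓ) (h1 : ℓ ≤ 1) (hf : ContDiffOn ℝ 1 f 𝔹) {μ : ℝ}
    (hμ : ∀ z ∈ 𝔹, ‖fderivWithin ℝ f 𝔹 z‖ ≤ μ) (hx : x ∈ 𝔹) (N : ℕ) :
    JetBound 𝔹 (fderivWithin ℝ (moll ℓ f) 𝔹) (mollConst E N * μ) (1 / ℓ) N x := by
  have hj := (jetBound_moll h0 h1 (hf.continuousOn_fderivWithin uniqueDiffOn_unitBall le_rfl) hx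
    (fun z hz _ => hμ z hz) N).const_smul (1 - ℓ) uniqueDiffOn_unitBall hx
  refine (hj.congr (fun y hy => (hasFDerivWithinAt_moll h0 h1 hf hy).fderivWithin
    (uniqueDiffOn_unitBall y hy)) hx).mono ?_ (by positivity) le_rfl le_rfl
  have hm := mollConst_nonneg (E := E) N
  have hμ0 := (norm_nonneg _).trans (hμ x hx)
  rw [abs_of_nonneg (by linarith)]
  exact mul_le_of_le_one_left (by positivity) (by linarith)

/-- The mollification of `u`, normalised to have derivative `moll ℓ (fderivWithin ℝ u 𝔹)` and to
agree with `u` at the origin. -/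
def smoothing (ℓ : ℝ) (u : E → V) (x : E) : V := u 0 + (1 - ℓ)⁻¹ • (moll ℓ u x - moll ℓ u 0)

theorem contDiffOn_smoothing (h0 : 0 < ℓ) (h1 : ℓ ≤ 1) (hf : ContinuousOn f 𝔹) :
    ContDiffOn ℝ ∞ (smoothing ℓ f) 𝔹 :=
  contDiffOn_const.add (((contDiffOn_moll h0 h1 hf).sub contDiffOn_const).const_smul _)

theorem fderivWithin_smoothing (h0 : 0 < ℓ) (h1 : ℓ < 1) (hf : ContDiffOn ℝ 1 f 𝔹) (hx : x ∈ 𝔹) :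
    fderivWithin ℝ (smoothing ℓ f) 𝔹 x = moll ℓ (fderivWithin ℝ f 𝔹) x := by
  have h := (((hasFDerivWithinAt_moll h0 h1.le hf hx).sub_const (moll ℓ f 0)).const_smul
    (1 - ℓ)⁻¹).const_add (f 0)
  rw [smul_smul, inv_mul_cancel₀ (by linarith), one_smul] at h
  exact h.fderivWithin (uniqueDiffOn_unitBall x hx)

variable {μ : ℝ}

theorem norm_fderivWithin_smoothing_sub_le [CompleteSpace V] (h0 : 0 < ℓ) (h1 : ℓ < 1)
    (hf : ContDiffOn ℝ 2 f 𝔹) (hμ : ∀ z ∈ 𝔹, ‖fderivWithin ℝ (fderivWithin ℝ f 𝔹) 𝔹 z‖ ≤ μ)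
    (hx : x ∈ 𝔹) :
    ‖fderivWithin ℝ (smoothing ℓ f) 𝔹 x - fderivWithin ℝ f 𝔹 x‖ ≤ μ * (2 * ℓ) := by
  have hf' : ContDiffOn ℝ 1 (fderivWithin ℝ f 𝔹) 𝔹 :=
    hf.fderivWithin uniqueDiffOn_unitBall (by norm_num)
  have hμ0 := (norm_nonneg _).trans (hμ x hx)
  rw [fderivWithin_smoothing h0 h1 (hf.of_le one_le_two) hx]
  refine norm_moll_sub_le h0 h1.le hf'.continuousOn hx fun z hz hd => ?_
  calc ‖fderivWithin ℝ f 𝔹 z - fderivWithin ℝ f 𝔹 x‖ ≤ μ * ‖z - x‖ :=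
        (convex_closedBall _ _).norm_image_sub_le_of_norm_fderivWithin_le
          (hf'.differentiableOn one_ne_zero) hμ hx hz
    _ ≤ μ * (2 * ℓ) := by rw [← dist_eq_norm]; gcongr

theorem norm_smoothing_sub_le (h0 : 0 < ℓ) (h1 : ℓ ≤ 1) (hf : ContDiffOn ℝ 1 f 𝔹) {a : ℝ}
    (ha : ∀ z ∈ 𝔹, ‖fderivWithin ℝ (smoothing ℓ f) 𝔹 z - fderivWithin ℝ f 𝔹 z‖ ≤ a)
    (hx : x ∈ 𝔹) : ‖smoothing ℓ f x - f x‖ ≤ a := by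
  have hv : DifferentiableOn ℝ (smoothing ℓ f) 𝔹 :=
    (contDiffOn_smoothing h0 h1 hf.continuousOn).differentiableOn (by simp)
  have hu : DifferentiableOn ℝ f 𝔹 := hf.differentiableOn one_ne_zero
  have h := (convex_closedBall (0 : E) 1).norm_image_sub_le_of_norm_fderivWithin_le
    (hv.sub hu) (fun y hy => by
      rw [fderivWithin_sub (uniqueDiffOn_unitBall y hy) (hv y hy) (hu y hy)]
      exact ha y hy)
    (mem_closedBall_self zero_le_one) hx
  have h00 : smoothing ℓ f 0 - f 0 = 0 := by simp [smoothing]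
  simp only [Pi.sub_apply, h00, sub_zero] at h
  exact h.trans (mul_le_of_le_one_right ((norm_nonneg _).trans (ha x hx)) (by simpa using hx))

theorem exists_contDiffOn_infty_approx [CompleteSpace V] (hf : ContDiffOn ℝ 1 f 𝔹) {σ : ℝ}
    (hσ : 0 < σ) :
    ∃ v : E → V, ContDiffOn ℝ ∞ v 𝔹 ∧ (∀ x ∈ 𝔹, ‖v x - f x‖ ≤ σ) ∧
      ∀ x ∈ 𝔹, ‖fderivWithin ℝ v 𝔹 x - fderivWithin ℝ f 𝔹 x‖ ≤ σ := by
  have hDf := hf.continuousOn_fderivWithin uniqueDiffOn_unitBall le_rfl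
  obtain ⟨ρ, hρ, hunif⟩ := Metric.uniformContinuousOn_iff_le.1
    ((isCompact_closedBall (0 : E) 1).uniformContinuousOn_of_continuous hDf) σ hσ
  set ℓ := min (1 / 2) (ρ / 2)
  have h0 : 0 < ℓ := by positivity
  have h1 : ℓ < 1 := (min_le_left _ _).trans_lt (by norm_num)
  have hℓρ : 2 * ℓ ≤ ρ := by linarith [min_le_right (1 / 2) (ρ / 2)]
  have hD (y : E) (hy : y ∈ 𝔹) :
      ‖fderivWithin ℝ (smoothing ℓ f) 𝔹 y - fderivWithin ℝ f 𝔹 y‖ ≤ σ := by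
    rw [fderivWithin_smoothing h0 h1 hf hy]
    refine norm_moll_sub_le h0 h1.le hDf hy fun z hz hzy => ?_
    rw [← dist_eq_norm]
    exact hunif z hz y hy (hzy.trans hℓρ)
  exact ⟨smoothing ℓ f, contDiffOn_smoothing h0 h1.le hf.continuousOn,
    fun x hx => norm_smoothing_sub_le h0 h1.le hf hD hx, hD⟩

theorem jetBound_fderivWithin_fderivWithin_smoothing (h0 : 0 < ℓ) (h1 : ℓ < 1)
    (hf : ContDiffOn ℝ 2 f 𝔹) (hμ : ∀ z ∈ 𝔹, ‖fderivWithin ℝ (fderivWithin ℝ f 𝔹) 𝔹 z‖ ≤ μ)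
    (hx : x ∈ 𝔹) (N : ℕ) :
    JetBound 𝔹 (fderivWithin ℝ (fderivWithin ℝ (smoothing ℓ f) 𝔹) 𝔹) (mollConst E N * μ)
      (1 / ℓ) N x :=
  (jetBound_fderivWithin_moll h0 h1.le (hf.fderivWithin uniqueDiffOn_unitBall (by norm_num)) hμ hx
    N).congr (fun y hy => fderivWithin_congr (fun z hz =>
      fderivWithin_smoothing h0 h1 (hf.of_le one_le_two) hz)
      (fderivWithin_smoothing h0 h1 (hf.of_le one_le_two) hy)) hx

end Smoothing

end Mollification

variable {d : ℕ}

local notation "𝔼" => EuclideanSpace ℝ (Fin d)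
local notation "𝔽" => EuclideanSpace ℝ (Fin (d + 1))
local notation "𝔹" => closedBall (0 : EuclideanSpace ℝ (Fin d)) 1
local notation "𝔇" => fderivWithin ℝ

section Frame

open ContinuousLinearMap (adjoint)

section DualTangent

variable {E F : Type*} [NormedAddCommGroup E] [InnerProductSpace ℝ E] [CompleteSpace E]
  [NormedAddCommGroup F] [InnerProductSpace ℝ F] [CompleteSpace F]

/-- The vector `A (Aᵀ A)⁻¹ ν` tangent to the range of `A` and dual to the covector `ν`. -/
def dualTangent (ν : E) (A : E →L[ℝ] F) : F := A (Ring.inverse (adjoint A ∘L A) ν)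

theorem contDiff_adjoint_comp : ContDiff ℝ ∞ fun A : E →L[ℝ] F => adjoint A ∘L A :=
  (adjoint (𝕜 := ℝ) (E := E) (F := F)).toContinuousLinearEquiv.contDiff.clm_comp contDiff_id

variable [FiniteDimensional ℝ E]

theorem isUnit_adjoint_comp {A : E →L[ℝ] F} (hA : Function.Injective A) :
    IsUnit (adjoint A ∘L A) := by
  have hinj : Function.Injective (adjoint A ∘L A) := by
    rw [injective_iff_map_eq_zero]
    intro w hw
    refine (injective_iff_map_eq_zero A).1 hA w (inner_self_eq_zero (𝕜 := ℝ).1 ?_)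
    rw [← ContinuousLinearMap.adjoint_inner_right, ← ContinuousLinearMap.comp_apply, hw,
      inner_zero_right]
  rw [ContinuousLinearMap.isUnit_iff_bijective]
  exact ⟨hinj, (LinearMap.injective_iff_surjective (f := (adjoint A ∘L A).toLinearMap)).1 hinj⟩

theorem contDiffOn_dualTangent (ν : E) :
    ContDiffOn ℝ ∞ (dualTangent (F := F) ν) {A | Function.Injective A} := by
  intro A hA
  obtain ⟨a, ha⟩ := isUnit_adjoint_comp hA
  have hinv : ContDiffAt ℝ ∞ (fun A : E →L[ℝ] F => Ring.inverse (adjoint A ∘L A)) A := by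
    refine ContDiffAt.comp A (g := Ring.inverse) ?_ contDiff_adjoint_comp.contDiffAt
    rw [← ha]
    exact contDiffAt_ringInverse ℝ a
  exact (contDiffAt_id.clm_apply (hinv.clm_apply contDiffAt_const)).contDiffWithinAt

theorem inner_apply_dualTangent {A : E →L[ℝ] F} (hA : Function.Injective A) (ν w : E) :
    ⟪A w, dualTangent ν A⟫ = ⟪w, ν⟫ := by
  rw [dualTangent, ← ContinuousLinearMap.adjoint_inner_right]
  change ⟪w, ((adjoint A ∘L A) * Ring.inverse (adjoint A ∘L A)) ν⟫ = _
  rw [Ring.mul_inverse_cancel _ (isUnit_adjoint_comp hA)]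
  rfl

end DualTangent

theorem sum_apply_smul_single {ι : Type*} [Fintype ι] [DecidableEq ι] (w : EuclideanSpace ℝ ι) :
    ∑ i, w i • EuclideanSpace.single i (1 : ℝ) = w := by
  simpa using (EuclideanSpace.basisFun ι ℝ).sum_repr w

/-- The columns of `A`, completed by `w`. -/
def colsSnoc (A : 𝔼 →L[ℝ] 𝔽) (w : 𝔽) : Fin (d + 1) → 𝔽 :=
  Fin.snoc (fun j => A (EuclideanSpace.single j 1)) w

/-- The determinant of the columns of `A` completed by `w`. -/
def colsDet (A : 𝔼 →L[ℝ] 𝔽) (w : 𝔽) : ℝ :=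
  (EuclideanSpace.basisFun (Fin (d + 1)) ℝ).toBasis.det (colsSnoc A w)

/-- The generalized cross product of the columns of `A`. -/
def crossProd (A : 𝔼 →L[ℝ] 𝔽) : 𝔽 :=
  ∑ i, colsDet A (EuclideanSpace.single i 1) • EuclideanSpace.single i (1 : ℝ)

theorem colsDet_sum_smul (A : 𝔼 →L[ℝ] 𝔽) {ι : Type*} (t : Finset ι) (c : ι → ℝ) (v : ι → 𝔽) :
    colsDet A (∑ i ∈ t, c i • v i) = ∑ i ∈ t, c i * colsDet A (v i) := by
  have hupd (z : 𝔽) : colsSnoc A z = Function.update (colsSnoc A 0) (Fin.last d) z := by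
    simp only [colsSnoc, Fin.update_snoc_last]
  simp only [colsDet]
  simp_rw [hupd (Finset.sum _ _), AlternatingMap.map_update_sum, AlternatingMap.map_update_smul,
    ← hupd, smul_eq_mul]

theorem inner_crossProd (A : 𝔼 →L[ℝ] 𝔽) (w : 𝔽) : ⟪w, crossProd A⟫ = colsDet A w := by
  conv_rhs => rw [← sum_apply_smul_single w, colsDet_sum_smul]
  simp only [crossProd, inner_sum, real_inner_smul_right, EuclideanSpace.inner_single_right]
  simp [mul_comm]

theorem inner_apply_crossProd (A : 𝔼 →L[ℝ] 𝔽) (w : 𝔼) : ⟪A w, crossProd A⟫ = 0 := by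
  rw [← sum_apply_smul_single w, map_sum, sum_inner]
  refine Finset.sum_eq_zero fun i _ => ?_
  have hcol : colsDet A (A (EuclideanSpace.single i 1)) = 0 :=
    AlternatingMap.map_eq_zero_of_eq _ _ (i := i.castSucc) (j := Fin.last d) (by simp [colsSnoc])
      (Fin.castSucc_lt_last i).ne
  rw [map_smul, real_inner_smul_left, inner_crossProd, hcol, mul_zero]

theorem contDiff_crossProd : ContDiff ℝ ∞ (crossProd (d := d)) := by
  refine ContDiff.sum fun i _ => ContDiff.fun_smul ?_ contDiff_const
  simp only [colsDet, Module.Basis.det_apply, Matrix.det_apply]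
  refine ContDiff.sum fun σ _ => ContDiff.const_smul _ (contDiff_prod fun k _ => ?_)
  refine Fin.lastCases ?_ (fun j => ?_) k
  · simp only [Module.Basis.toMatrix_apply, colsSnoc, Fin.snoc_last]
    exact contDiff_const
  · simp only [Module.Basis.toMatrix_apply, colsSnoc, Fin.snoc_castSucc]
    exact (EuclideanSpace.proj (𝕜 := ℝ) (σ (Fin.castSucc j))).contDiff.comp
      (ContinuousLinearMap.apply ℝ 𝔽 (EuclideanSpace.single j 1 : 𝔼)).contDiff

theorem crossProd_ne_zero {A : 𝔼 →L[ℝ] 𝔽} (hA : Function.Injective A) : crossProd A ≠ 0 := by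
  have hli : LinearIndependent ℝ fun j : Fin d => A (EuclideanSpace.single j 1) := by
    simpa [Function.comp_def] using
      (EuclideanSpace.basisFun (Fin d) ℝ).toBasis.linearIndependent.map' A.toLinearMap
        (LinearMap.ker_eq_bot.2 hA)
  obtain ⟨w, hw⟩ : ∃ w, w ∉ Submodule.span ℝ
      (range fun j : Fin d => A (EuclideanSpace.single j 1)) := by
    by_contra! hspan
    have hrank := finrank_span_eq_card hli
    rw [Submodule.eq_top_iff'.2 hspan, finrank_top] at hrank
    simp at hrank
  have hli' : LinearIndependent ℝ (colsSnoc A w) := hli.finSnoc hw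
  have hunit : IsUnit (colsDet A w) := by
    rw [colsDet, ← Module.Basis.is_basis_iff_det]
    exact ⟨hli', hli'.span_eq_top_of_card_eq_finrank' (by simp)⟩
  intro h0
  rw [← inner_crossProd, h0, inner_zero_right] at hunit
  exact not_isUnit_zero hunit

/-- The unit normal to the range of an injective `A`. -/
def unitNormal (A : 𝔼 →L[ℝ] 𝔽) : 𝔽 := ‖crossProd A‖⁻¹ • crossProd A

theorem contDiffOn_unitNormal :
    ContDiffOn ℝ ∞ (unitNormal (d := d)) {A | Function.Injective A} := fun A hA => by
  have h : ContDiffAt ℝ ∞ (crossProd (d := d)) A := contDiff_crossProd.contDiffAt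
  exact (((h.norm ℝ (crossProd_ne_zero hA)).inv (norm_ne_zero_iff.2 (crossProd_ne_zero hA))).smul
    h).contDiffWithinAt

theorem norm_unitNormal {A : 𝔼 →L[ℝ] 𝔽} (hA : Function.Injective A) : ‖unitNormal A‖ = 1 := by
  rw [unitNormal, norm_smul, norm_inv, norm_norm,
    inv_mul_cancel₀ (norm_ne_zero_iff.2 (crossProd_ne_zero hA))]

theorem inner_apply_unitNormal (A : 𝔼 →L[ℝ] 𝔽) (w : 𝔼) : ⟪A w, unitNormal A⟫ = 0 := by
  rw [unitNormal, real_inner_smul_right, inner_apply_crossProd, mul_zero]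

end Frame

section Bilipschitz

variable {E F : Type*} [NormedAddCommGroup E] [NormedSpace ℝ E] [NormedAddCommGroup F]
  [NormedSpace ℝ F]

variable (E F) in
/-- The linear maps `A` with `c * ‖w‖ ≤ ‖A w‖` for all `w` and `‖A‖ ≤ C`. -/
def bilipSet (c C : ℝ) : Set (E →L[ℝ] F) := {A | ‖A‖ ≤ C ∧ ∀ w, c * ‖w‖ ≤ ‖A w‖}

theorem isCompact_bilipSet [FiniteDimensional ℝ E] [FiniteDimensional ℝ F] (c C : ℝ) :
    IsCompact (bilipSet E F c C) := by
  have : ProperSpace (E →L[ℝ] F) := FiniteDimensional.proper_real _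
  have h : bilipSet E F c C = closedBall 0 C ∩ ⋂ w, {A | c * ‖w‖ ≤ ‖A w‖} := by
    ext A
    simp [bilipSet]
  rw [h]
  exact (isCompact_closedBall _ _).inter_right (isClosed_iInter fun w =>
    isClosed_le continuous_const (ContinuousLinearMap.apply ℝ F w).continuous.norm)

theorem injective_of_mem_bilipSet {c C : ℝ} (hc : 0 < c) {A : E →L[ℝ] F}
    (hA : A ∈ bilipSet E F c C) : Function.Injective A := by
  refine (injective_iff_map_eq_zero A).2 fun w hw => ?_
  have := hA.2 w
  rw [hw, norm_zero] at this
  exact norm_eq_zero.1 (le_antisymm (nonpos_of_mul_nonpos_right this hc) (norm_nonneg _))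

end Bilipschitz

section InnerForm

variable {E F : Type*} [NormedAddCommGroup E] [NormedSpace ℝ E] [NormedAddCommGroup F]
  [InnerProductSpace ℝ F]

/-- The bilinear form `⟪A ·, B ·⟫`, as a continuous bilinear function of `A` and `B`. -/
def innerForm : (E →L[ℝ] F) →L[ℝ] (E →L[ℝ] F) →L[ℝ] E →L[ℝ] E →L[ℝ] ℝ :=
  LinearMap.mkContinuous₂ (LinearMap.mk₂ ℝ (fun A B => (innerSL ℝ).bilinearComp A B)
    (fun A A' B => by ext; simp)
    (fun c A B => by ext; simp)
    (fun A B B' => by ext; simp [inner_add_right])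
    (fun c A B => by ext; simp)) 1 fun A B => by
      refine ContinuousLinearMap.opNorm_le_bound₂ _ (by positivity) fun w w' => ?_
      calc ‖⟪A w, B w'⟫‖ ≤ ‖A w‖ * ‖B w'‖ := norm_inner_le_norm _ _
        _ ≤ (‖A‖ * ‖w‖) * (‖B‖ * ‖w'‖) := by gcongr <;> exact ContinuousLinearMap.le_opNorm _ _
        _ = 1 * ‖A‖ * ‖B‖ * ‖w‖ * ‖w'‖ := by ring

@[simp]
theorem innerForm_apply (A B : E →L[ℝ] F) (w w' : E) : innerForm A B w w' = ⟪A w, B w'⟫ := rfl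

theorem norm_innerForm_le : ‖innerForm (E := E) (F := F)‖ ≤ 1 :=
  LinearMap.mkContinuous₂_norm_le _ zero_le_one _

/-- The metric `Aᵀ A` induced by a linear map `A`, as a bilinear form. -/
def inducedMetric (A : E →L[ℝ] F) : E →L[ℝ] E →L[ℝ] ℝ := innerForm A A

@[simp]
theorem inducedMetric_apply (A : E →L[ℝ] F) (w w' : E) : inducedMetric A w w' = ⟪A w, A w'⟫ := rfl

theorem norm_le_of_forall_unit_sphere {L : E →L[ℝ] E →L[ℝ] ℝ} {C : ℝ} (hC : 0 ≤ C)
    (h : ∀ w w' : E, ‖w‖ = 1 → ‖w'‖ = 1 → |L w w'| ≤ C) : ‖L‖ ≤ C :=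
  ContinuousLinearMap.opNorm_le_of_unit_norm hC fun w hw =>
    ContinuousLinearMap.opNorm_le_of_unit_norm hC fun w' hw' => h w w' hw hw'

theorem continuous_inducedMetric : Continuous (inducedMetric (E := E) (F := F)) :=
  (innerForm (E := E) (F := F)).continuous.clm_apply continuous_id

end InnerForm

section Dyad

variable {E : Type*} [NormedAddCommGroup E] [InnerProductSpace ℝ E]

/-- The primitive metric `ν ⊗ ν`. -/
def dyad (ν : E) : E →L[ℝ] E →L[ℝ] ℝ := (innerSL ℝ ν).smulRight (innerSL ℝ ν)

@[simp]
theorem dyad_apply (ν w w' : E) : dyad ν w w' = ⟪ν, w⟫ * ⟪ν, w'⟫ := by simp [dyad]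

end Dyad

section Profile

variable {E F : Type*} [NormedAddCommGroup E] [InnerProductSpace ℝ E]
  [NormedAddCommGroup F] [InnerProductSpace ℝ F]

/-- The corrugation profile with tangential part `X` and normal part `Y`. -/
def corrVec (t : ℝ) (X Y : F) : F := (1 / 4 * Real.sin (2 * t)) • X + (√2 * Real.cos t) • Y

/-- The derivative of `corrVec` in the phase `t`. -/
def corrVecDeriv (t : ℝ) (X Y : F) : F :=
  (1 / 2 * Real.cos (2 * t)) • X - (√2 * Real.sin t) • Y

theorem abs_sqrt_two_mul_le {c : ℝ} (hc : |c| ≤ 1) : |√2 * c| ≤ 2 := by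
  rw [abs_mul, abs_of_nonneg (Real.sqrt_nonneg 2)]
  have h2 : √2 ≤ 2 := by
    rw [Real.sqrt_le_left (by norm_num)]
    norm_num
  nlinarith [abs_nonneg c]

theorem abs_const_mul_le_one {b c : ℝ} (hb : |b| ≤ 1) (hc : |c| ≤ 1) : |b * c| ≤ 1 := by
  rw [abs_mul]
  exact mul_le_one₀ hb (abs_nonneg _) hc

theorem norm_corrVec_le (t : ℝ) (X Y : F) : ‖corrVec t X Y‖ ≤ ‖X‖ + 2 * ‖Y‖ := by
  refine (norm_add_le _ _).trans ?_
  simp only [norm_smul, Real.norm_eq_abs]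
  gcongr
  · refine mul_le_of_le_one_left (norm_nonneg _) ?_
    exact abs_const_mul_le_one (by norm_num) (Real.abs_sin_le_one _)
  · exact abs_sqrt_two_mul_le (Real.abs_cos_le_one _)

theorem norm_corrVecDeriv_le (t : ℝ) (X Y : F) : ‖corrVecDeriv t X Y‖ ≤ ‖X‖ + 2 * ‖Y‖ := by
  refine (norm_sub_le _ _).trans ?_
  simp only [norm_smul, Real.norm_eq_abs]
  gcongr
  · refine mul_le_of_le_one_left (norm_nonneg _) ?_
    exact abs_const_mul_le_one (by norm_num) (Real.abs_cos_le_one _)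
  · exact abs_sqrt_two_mul_le (Real.abs_sin_le_one _)

theorem abs_inner_corrVec_le (p : F) (t : ℝ) (X Y : F) :
    |⟪p, corrVec t X Y⟫| ≤ |⟪p, X⟫| + 2 * |⟪p, Y⟫| := by
  rw [corrVec, inner_add_right, real_inner_smul_right, real_inner_smul_right]
  refine (abs_add_le _ _).trans ?_
  rw [abs_mul, abs_mul (√2 * Real.cos t)]
  gcongr
  · refine mul_le_of_le_one_left (abs_nonneg _) ?_
    exact abs_const_mul_le_one (by norm_num) (Real.abs_sin_le_one _)
  · exact abs_sqrt_two_mul_le (Real.abs_cos_le_one _)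

theorem norm_inv_smul_corrVec_le {X Y : F} {B δ r Λ : ℝ} (hB : 0 ≤ B) (hδ : 0 ≤ δ) (hδ1 : δ ≤ 1)
    (hr : 0 < r) (hΛ : 0 < Λ) (hX : ‖X‖ ≤ B * δ ^ 2 * r) (hY : ‖Y‖ ≤ B * δ * r) (t : ℝ) :
    ‖(Λ * r)⁻¹ • corrVec t X Y‖ ≤ 3 * B * δ / Λ := by
  have hδδ : B * (δ * δ) ≤ B * (δ * 1) := by gcongr
  calc ‖(Λ * r)⁻¹ • corrVec t X Y‖ ≤ (Λ * r)⁻¹ * (B * δ ^ 2 * r + 2 * (B * δ * r)) := by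
        rw [norm_smul, Real.norm_of_nonneg (by positivity)]
        gcongr
        exact (norm_corrVec_le _ _ _).trans (by gcongr)
    _ = (B * (δ * δ) + 2 * (B * δ)) / Λ := by field_simp
    _ ≤ 3 * B * δ / Λ := by
        gcongr
        linarith

theorem abs_inner_inv_smul_corrVec_le {p X Y : F} {B δ r Λ : ℝ} (hr : 0 < r) (hΛ : 0 < Λ)
    (hX : |⟪p, X⟫| ≤ B * (B * δ ^ 2 * r)) (hY : |⟪p, Y⟫| ≤ B * δ * r * (B * δ)) (t : ℝ) :
    |⟪p, (Λ * r)⁻¹ • corrVec t X Y⟫| ≤ 3 * B ^ 2 * δ ^ 2 / Λ := by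
  calc |⟪p, (Λ * r)⁻¹ • corrVec t X Y⟫|
      ≤ (Λ * r)⁻¹ * (B * (B * δ ^ 2 * r) + 2 * (B * δ * r * (B * δ))) := by
        rw [real_inner_smul_right, abs_mul, abs_of_nonneg (by positivity : 0 ≤ (Λ * r)⁻¹)]
        gcongr
        exact (abs_inner_corrVec_le _ _ _ _).trans (by gcongr)
    _ = 3 * B ^ 2 * δ ^ 2 / Λ := by
        field_simp
        ring

/-- The profile is chosen so that the linear contribution of the tangential part and the quadratic
contribution of the normal part add up to `a²`, as `cos (2t) + 2 sin² t = 1`. -/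
theorem inner_add_smul_corrVecDeriv {p p' X Y : F} {n n' a : ℝ} (hpX : ⟪p, X⟫ = a ^ 2 * n)
    (hpX' : ⟪p', X⟫ = a ^ 2 * n') (hpY : ⟪p, Y⟫ = 0) (hpY' : ⟪p', Y⟫ = 0) (hXY : ⟪X, Y⟫ = 0)
    (hY : ‖Y‖ = |a|) (t : ℝ) :
    ⟪p + n • corrVecDeriv t X Y, p' + n' • corrVecDeriv t X Y⟫ =
      ⟪p, p'⟫ + a ^ 2 * (n * n') + n * n' * (1 / 4 * Real.cos (2 * t) ^ 2 * ‖X‖ ^ 2) := by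
  have h2 : √2 * √2 = 2 := Real.mul_self_sqrt (by norm_num)
  have hYY : ⟪Y, Y⟫ = a ^ 2 := by rw [real_inner_self_eq_norm_sq, hY, sq_abs]
  simp only [corrVecDeriv, inner_add_left, inner_add_right, inner_sub_left, inner_sub_right,
    real_inner_smul_left, real_inner_smul_right, real_inner_comm p' X, real_inner_comm p' Y,
    real_inner_comm X Y, hpX, hpX', hpY, hpY', hXY, hYY, real_inner_self_eq_norm_sq X]
  linear_combination (a ^ 2 * (n * n')) * Real.cos_two_mul t +
    (2 * a ^ 2 * (n * n')) * Real.sin_sq_add_cos_sq t +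
    (n * n' * Real.sin t ^ 2 * a ^ 2) * h2

theorem abs_inner_add_add_sub_inner_le (P P' r r' : F) :
    |⟪P + r, P' + r'⟫ - ⟪P, P'⟫| ≤ |⟪P, r'⟫| + |⟪P', r⟫| + ‖r‖ * ‖r'‖ := by
  have h : ⟪P + r, P' + r'⟫ - ⟪P, P'⟫ = ⟪P, r'⟫ + ⟪P', r⟫ + ⟪r, r'⟫ := by
    simp only [inner_add_left, inner_add_right, real_inner_comm P' r]
    ring
  rw [h]
  exact (abs_add_three _ _ _).trans (by gcongr; exact abs_real_inner_le_norm _ _)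

/-- The corrugation in the direction `ν` with frequency `μ`. -/
def corrugation (ν : E) (μ : ℝ) (X Y : E → F) (y : E) : F :=
  μ⁻¹ • corrVec (μ * ⟪ν, y⟫) (X y) (Y y)

theorem fderivWithin_corrugation_apply {ν : E} {μ : ℝ} (hμ : μ ≠ 0) {X Y : E → F} {s : Set E}
    {x : E} (hs : UniqueDiffWithinAt ℝ s x) (hX : DifferentiableWithinAt ℝ X s x)
    (hY : DifferentiableWithinAt ℝ Y s x) (w : E) :
    𝔇 (corrugation ν μ X Y) s x w = ⟪ν, w⟫ • corrVecDeriv (μ * ⟪ν, x⟫) (X x) (Y x) +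
      μ⁻¹ • corrVec (μ * ⟪ν, x⟫) (𝔇 X s x w) (𝔇 Y s x w) := by
  have hphase : HasFDerivWithinAt (fun y : E => μ * ⟪ν, y⟫) (μ • innerSL ℝ ν) s x :=
    (innerSL ℝ ν).hasFDerivWithinAt.const_mul μ
  have hsin := ((hphase.const_mul 2).sin.const_mul (1 / 4)).smul hX.hasFDerivWithinAt
  have hcos := (hphase.cos.const_mul √2).smul hY.hasFDerivWithinAt
  have h := ((hsin.add hcos).const_smul μ⁻¹).fderivWithin hs
  change 𝔇 (corrugation ν μ X Y) s x = _ at h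
  rw [h]
  simp only [corrVec, corrVecDeriv, _root_.add_apply, _root_.smul_apply,
    ContinuousLinearMap.smulRight_apply, innerSL_apply_apply, smul_eq_mul]
  match_scalars <;> (field_simp; try ring)

/-- The constant of `jetBound_corrugation`. -/
def corrConst (ν : E) (N : ℕ) : ℝ := 2 * 2 ^ N * (N.factorial * max 1 (2 * ‖ν‖) ^ N)

theorem jetBound_corrugation (ν : E) {μ A A' : ℝ} (hμ : 0 < μ) {X Y : E → F} {s : Set E} {N : ℕ}
    {x : E} (hX : JetBound s X A μ N x) (hY : JetBound s Y A' μ N x) (hs : UniqueDiffOn ℝ s)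
    (hx : x ∈ s) :
    JetBound s (corrugation ν μ X Y) (corrConst ν N * (A + A') / μ) μ N x := by
  set b : ℝ := max 1 (2 * ‖ν‖)
  have hsin := ((jetBound_comp_const_mul_clm (A := b) Real.contDiff_sin
    (fun n y => Real.abs_iteratedDeriv_sin_le_one n y) ((2 : ℝ) • innerSL ℝ ν) (le_max_left _ _)
    (by simp [b, norm_smul]) hs hx hμ.le N).const_smul (1 / 4) hs hx).smul hX hs hx
  have hcos := ((jetBound_comp_const_mul_clm (A := b) Real.contDiff_cos
    (fun n y => Real.abs_iteratedDeriv_cos_le_one n y) (innerSL ℝ ν) (le_max_left _ _)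
    (by rw [innerSL_apply_norm]; exact le_max_of_le_right (by linarith [norm_nonneg ν]))
    hs hx hμ.le N).const_smul √2 hs hx).smul hY hs hx
  refine (((hsin.add hcos hs hx).const_smul μ⁻¹ hs hx).congr (fun y _ => ?_) hx).mono ?_ hμ.le
    le_rfl le_rfl
  · simp only [corrugation, corrVec, _root_.smul_apply, innerSL_apply_apply, smul_eq_mul]
    rw [mul_left_comm]
  · have hA := hX.nonneg
    have hA' := hY.nonneg
    have h4 : |(1 / 4 : ℝ)| ≤ 2 := by norm_num
    have h2 : |√2| ≤ 2 := by simpa using abs_sqrt_two_mul_le (c := 1) (by simp)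
    calc |μ⁻¹| * (2 ^ N * (|1 / 4| * (N.factorial * b ^ N) * A) +
          2 ^ N * (|√2| * (N.factorial * b ^ N) * A'))
        ≤ μ⁻¹ * (2 ^ N * (2 * (N.factorial * b ^ N) * A) +
          2 ^ N * (2 * (N.factorial * b ^ N) * A')) := by
          rw [abs_of_pos (inv_pos.2 hμ)]
          gcongr
      _ = corrConst ν N * (A + A') / μ := by
          rw [corrConst]
          ring

theorem inner_apply_fderivWithin_of_inner_eq_zero {f : E → E →L[ℝ] F} {Y : E → F} {s : Set E}
    {x : E} (hs : UniqueDiffWithinAt ℝ s x) (hx : x ∈ s) (hf : DifferentiableWithinAt ℝ f s x)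
    (hY : DifferentiableWithinAt ℝ Y s x) (w w' : E) (h : ∀ y ∈ s, ⟪f y w, Y y⟫ = 0) :
    ⟪f x w, 𝔇 Y s x w'⟫ = -⟪𝔇 f s x w' w, Y x⟫ := by
  have hfw : HasFDerivWithinAt (fun y => f y w)
      ((ContinuousLinearMap.apply ℝ F w).comp (𝔇 f s x)) s x :=
    (ContinuousLinearMap.apply ℝ F w).hasFDerivAt.comp_hasFDerivWithinAt x hf.hasFDerivWithinAt
  have hzero : HasFDerivWithinAt (fun y => ⟪f y w, Y y⟫) (0 : E →L[ℝ] ℝ) s x :=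
    (hasFDerivWithinAt_const (0 : ℝ) x s).congr h (h x hx)
  have := congrArg (fun L : E →L[ℝ] ℝ => L w')
    (hs.eq (hfw.inner ℝ hY.hasFDerivWithinAt) hzero)
  simp only [ContinuousLinearMap.comp_apply, ContinuousLinearMap.prod_apply,
    fderivInnerCLM_apply, ContinuousLinearMap.apply_apply, _root_.zero_apply] at this
  linarith

theorem abs_inner_corrugation_sub_le {p p' X Y r r' : F} {n n' a B δ Λ : ℝ} (hB : 1 ≤ B)
    (hδ : 0 ≤ δ) (hδ1 : δ ≤ 1) (hΛ : 1 ≤ Λ) (hpX : ⟪p, X⟫ = a ^ 2 * n)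
    (hpX' : ⟪p', X⟫ = a ^ 2 * n') (hpY : ⟪p, Y⟫ = 0) (hpY' : ⟪p', Y⟫ = 0) (hXY : ⟪X, Y⟫ = 0)
    (hYa : ‖Y‖ = |a|) (hX : ‖X‖ ≤ B * δ ^ 2) (hY : ‖Y‖ ≤ B * δ) (hn : |n| ≤ B) (hn' : |n'| ≤ B)
    (hr : ‖r‖ ≤ 3 * B * δ / Λ) (hr' : ‖r'‖ ≤ 3 * B * δ / Λ)
    (hpr : |⟪p, r'⟫| ≤ 3 * B ^ 2 * δ ^ 2 / Λ) (hpr' : |⟪p', r⟫| ≤ 3 * B ^ 2 * δ ^ 2 / Λ) (t : ℝ) :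
    |⟪p + n • corrVecDeriv t X Y + r, p' + n' • corrVecDeriv t X Y + r'⟫ - ⟪p, p'⟫
      - a ^ 2 * (n * n')| ≤ 33 * B ^ 4 * (δ ^ 2 / Λ + δ ^ 4) := by
  have hm : ‖corrVecDeriv t X Y‖ ≤ 3 * B * δ := (norm_corrVecDeriv_le t X Y).trans <| by
    nlinarith [mul_le_mul_of_nonneg_left hδ1 hδ]
  have hcross {q z : F} {k : ℝ} (hk : |k| ≤ B) (hz : ‖z‖ ≤ 3 * B * δ / Λ)
      (hq : |⟪q, z⟫| ≤ 3 * B ^ 2 * δ ^ 2 / Λ) :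
      |⟪q + k • corrVecDeriv t X Y, z⟫| ≤ 12 * B ^ 4 * (δ ^ 2 / Λ) := by
    rw [inner_add_left, real_inner_smul_left]
    calc |⟪q, z⟫ + k * ⟪corrVecDeriv t X Y, z⟫|
        ≤ |⟪q, z⟫| + |k| * (‖corrVecDeriv t X Y‖ * ‖z‖) := by
          refine (abs_add_le _ _).trans ?_
          rw [abs_mul]
          gcongr
          exact abs_real_inner_le_norm _ _
      _ ≤ 3 * B ^ 2 * δ ^ 2 / Λ + B * (3 * B * δ * (3 * B * δ / Λ)) := by gcongr
      _ = (3 * B ^ 2 + 9 * B ^ 3) * (δ ^ 2 / Λ) := by ring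
      _ ≤ (3 * B ^ 4 + 9 * B ^ 4) * (δ ^ 2 / Λ) := by gcongr <;> norm_num
      _ = 12 * B ^ 4 * (δ ^ 2 / Λ) := by ring
  have hrr : ‖r‖ * ‖r'‖ ≤ 9 * B ^ 4 * (δ ^ 2 / Λ) := by
    calc ‖r‖ * ‖r'‖ ≤ 3 * B * δ / Λ * (3 * B * δ / 1) := by
          gcongr
          exact hr'.trans (by gcongr)
      _ = 9 * B ^ 2 * (δ ^ 2 / Λ) := by ring
      _ ≤ 9 * B ^ 4 * (δ ^ 2 / Λ) := by gcongr; norm_num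
  have hquad : |n * n' * (1 / 4 * Real.cos (2 * t) ^ 2 * ‖X‖ ^ 2)| ≤ B ^ 4 * δ ^ 4 := by
    rw [abs_mul, abs_mul, abs_of_nonneg (by positivity : 0 ≤ 1 / 4 * _ * ‖X‖ ^ 2)]
    calc |n| * |n'| * (1 / 4 * Real.cos (2 * t) ^ 2 * ‖X‖ ^ 2)
        ≤ B * B * (1 * 1 * (B * δ ^ 2) ^ 2) := by
          gcongr
          · norm_num
          · exact Real.cos_sq_le_one _
      _ = B ^ 4 * δ ^ 4 := by ring
  have hperturb := abs_inner_add_add_sub_inner_le (p + n • corrVecDeriv t X Y)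
    (p' + n' • corrVecDeriv t X Y) r r'
  rw [inner_add_smul_corrVecDeriv hpX hpX' hpY hpY' hXY hYa] at hperturb
  have h₁ := hcross hn hr' hpr
  have h₂ := hcross hn' hr hpr'
  have hΛδ : 0 ≤ B ^ 4 * δ ^ 4 := by positivity
  rw [abs_le] at hperturb hquad ⊢
  constructor <;> linarith

end Profile

section Step

variable {s : Set (EuclideanSpace ℝ (Fin d))}

/-- The tangential part of the corrugation of `u` with amplitude `a` in the direction `ν`. -/
def tangentField (ν : 𝔼) (s : Set 𝔼) (u : 𝔼 → 𝔽) (a : 𝔼 → ℝ) (y : 𝔼) : 𝔽 :=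
  a y • a y • dualTangent ν (𝔇 u s y)

/-- The normal part of the corrugation of `u` with amplitude `a`. -/
def normalField (s : Set 𝔼) (u : 𝔼 → 𝔽) (a : 𝔼 → ℝ) (y : 𝔼) : 𝔽 := a y • unitNormal (𝔇 u s y)

theorem inner_tangentField {ν : 𝔼} {u : 𝔼 → 𝔽} {x : 𝔼} (hA : Function.Injective (𝔇 u s x))
    (a : 𝔼 → ℝ) (w : 𝔼) : ⟪𝔇 u s x w, tangentField ν s u a x⟫ = a x ^ 2 * ⟪ν, w⟫ := by
  rw [tangentField, real_inner_smul_right, real_inner_smul_right, inner_apply_dualTangent hA,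
    real_inner_comm ν]
  ring

theorem inner_normalField (u : 𝔼 → 𝔽) (a : 𝔼 → ℝ) (x w : 𝔼) :
    ⟪𝔇 u s x w, normalField s u a x⟫ = 0 := by
  rw [normalField, real_inner_smul_right, inner_apply_unitNormal, mul_zero]

theorem inner_tangentField_normalField (ν : 𝔼) (u : 𝔼 → 𝔽) (a : 𝔼 → ℝ) (x : 𝔼) :
    ⟪tangentField ν s u a x, normalField s u a x⟫ = 0 := by
  rw [tangentField, real_inner_smul_left, real_inner_smul_left, dualTangent, inner_normalField]
  simp

theorem norm_normalField {u : 𝔼 → 𝔽} {x : 𝔼} (hA : Function.Injective (𝔇 u s x)) (a : 𝔼 → ℝ) :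
    ‖normalField s u a x‖ = |a x| := by
  rw [normalField, norm_smul, norm_unitNormal hA, mul_one, Real.norm_eq_abs]

theorem exists_jetBound_fields (ν : 𝔼) {K : Set (𝔼 →L[ℝ] 𝔽)} (hK : IsCompact K)
    (hKi : K ⊆ {A | Function.Injective A}) (hs : UniqueDiffOn ℝ s) {A : ℝ} (hA : 0 ≤ A) (N : ℕ) :
    ∃ C : ℝ, 0 ≤ C ∧ ∀ (δ r : ℝ) (u : 𝔼 → 𝔽) (a : 𝔼 → ℝ), 0 ≤ δ → δ ≤ 1 → 0 ≤ r →
      DifferentiableOn ℝ (𝔇 u s) s → MapsTo (𝔇 u s) s K →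
      (∀ x ∈ s, JetBound s (𝔇 (𝔇 u s) s) (A * δ * r) r N x) →
      (∀ x ∈ s, JetBound s a (A * δ) r (N + 1) x) → ∀ x ∈ s,
      JetBound s (tangentField ν s u a) (C * δ ^ 2) r (N + 1) x ∧
        JetBound s (normalField s u a) (C * δ) r (N + 1) x := by
  obtain ⟨b, hb⟩ := hK.isBounded.exists_norm_le
  have hopen : UniqueDiffOn ℝ {A : 𝔼 →L[ℝ] 𝔽 | Function.Injective A} :=
    ContinuousLinearMap.isOpen_injective.uniqueDiffOn
  obtain ⟨cT, hcT, hT⟩ := exists_jetBound_comp hopen hK hKi (contDiffOn_dualTangent ν) hs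
    (max A b) (N + 1)
  obtain ⟨cN, hcN, hN⟩ := exists_jetBound_comp hopen hK hKi contDiffOn_unitNormal hs
    (max A b) (N + 1)
  set q : ℝ := 2 ^ (N + 1) * A
  refine ⟨q * (q * cT) + q * cN, by positivity, fun δ r u a hδ hδ1 hr hu hmaps hu2 ha x hx => ?_⟩
  have hjet (y : 𝔼) (hy : y ∈ s) : JetBound s (𝔇 u s) (max A b) r (N + 1) y := by
    refine .of_fderivWithin hu ((hu2 y hy).mono ?_ hr le_rfl le_rfl)
      ((hb _ (hmaps hy)).trans (le_max_right _ _)) hs hy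
    gcongr
    exact (mul_le_of_le_one_right hA hδ1).trans (le_max_left _ _)
  have hX := (ha x hx).smul ((ha x hx).smul (hT _ r hmaps hr hjet x hx) hs hx) hs hx
  have hY := (ha x hx).smul (hN _ r hmaps hr hjet x hx) hs hx
  constructor
  · refine hX.mono ?_ hr le_rfl le_rfl
    calc _ = q * (q * cT) * δ ^ 2 := by ring
      _ ≤ _ := by gcongr; exact le_add_of_nonneg_right (by positivity)
  · refine hY.mono ?_ hr le_rfl le_rfl
    calc _ = q * cN * δ := by ring
      _ ≤ _ := by gcongr; exact le_add_of_nonneg_left (by positivity)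

theorem JetBound.fderivWithin_fderivWithin_add {E V : Type*} [NormedAddCommGroup E]
    [NormedSpace ℝ E] [NormedAddCommGroup V] [NormedSpace ℝ V] {s : Set E} {u P : E → V}
    {A A' μ : ℝ} {N : ℕ} {x : E} (hs : UniqueDiffOn ℝ s) (hu : DifferentiableOn ℝ u s)
    (hu' : DifferentiableOn ℝ (𝔇 u s) s) (h : JetBound s (𝔇 (𝔇 u s) s) A μ N x)
    (hP : JetBound s P A' μ (N + 2) x) (hx : x ∈ s) :
    JetBound s (𝔇 (𝔇 (fun y => u y + P y) s) s) (A + A' * μ * μ) μ N x := by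
  have hP' := hP.fderivWithin hs hx
  have hD : EqOn (𝔇 (fun y => u y + P y) s) (fun y => 𝔇 u s y + 𝔇 P s y) s := fun y hy =>
    fderivWithin_fun_add (hs y hy) (hu y hy) (hP.contDiffOn.differentiableOn (by simp) y hy)
  refine (h.add (hP'.fderivWithin hs hx) hs hx).congr (fun y hy => ?_) hx
  rw [fderivWithin_congr hD (hD hy)]
  exact fderivWithin_fun_add (hs y hy) (hu' y hy)
    (hP'.contDiffOn.differentiableOn (by simp) y hy)

theorem norm_inducedMetric_corrugation_sub_le {ν : 𝔼} {u : 𝔼 → 𝔽} {a : 𝔼 → ℝ} {B δ r Λ : ℝ}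
    {x : 𝔼} (hs : UniqueDiffOn ℝ s) (hx : x ∈ s) (hB : 1 ≤ B) (hδ : 0 ≤ δ) (hδ1 : δ ≤ 1)
    (hr : 0 < r) (hΛ : 1 ≤ Λ) (hν : ‖ν‖ ≤ B) (hu : DifferentiableWithinAt ℝ u s x)
    (hu' : DifferentiableWithinAt ℝ (𝔇 u s) s x) (hinj : Function.Injective (𝔇 u s x))
    (hDu : ‖𝔇 u s x‖ ≤ B) (hDDu : ‖𝔇 (𝔇 u s) s x‖ ≤ B * δ * r)
    (hX : JetBound s (tangentField ν s u a) (B * δ ^ 2) r 1 x)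
    (hY : JetBound s (normalField s u a) (B * δ) r 1 x) :
    ‖inducedMetric (𝔇 (fun y => u y +
        corrugation ν (Λ * r) (tangentField ν s u a) (normalField s u a) y) s x) -
      inducedMetric (𝔇 u s x) - a x ^ 2 • dyad ν‖ ≤ 33 * B ^ 4 * (δ ^ 2 / Λ + δ ^ 4) := by
  set X := tangentField ν s u a
  set Y := normalField s u a
  set t := Λ * r * ⟪ν, x⟫
  set R : 𝔼 → 𝔽 := fun w => (Λ * r)⁻¹ • corrVec t (𝔇 X s x w) (𝔇 Y s x w)
  have hXd := hX.contDiffOn.differentiableOn (by simp) x hx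
  have hYd := hY.contDiffOn.differentiableOn (by simp) x hx
  have hμ : 0 < Λ * r := by positivity
  have hrμ : r ≤ Λ * r := le_mul_of_one_le_left hr.le hΛ
  have hDu' {w : 𝔼} (hw : ‖w‖ = 1) : ‖𝔇 u s x w‖ ≤ B := by
    simpa [hw] using (𝔇 u s x).le_of_opNorm_le hDu w
  have hDDu' {w w' : 𝔼} (hw : ‖w‖ = 1) (hw' : ‖w'‖ = 1) :
      ‖𝔇 (𝔇 u s) s x w w'‖ ≤ B * δ * r := by
    simpa using (𝔇 (𝔇 u s) s x).le_of_opNorm₂_le_of_le hDDu hw.le hw'.le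
  have hDX {w : 𝔼} (hw : ‖w‖ = 1) : ‖𝔇 X s x w‖ ≤ B * δ ^ 2 * r := by
    simpa [hw] using (𝔇 X s x).le_of_opNorm_le (hX.norm_fderivWithin_le hs hx le_rfl) w
  have hDY {w : 𝔼} (hw : ‖w‖ = 1) : ‖𝔇 Y s x w‖ ≤ B * δ * r := by
    simpa [hw] using (𝔇 Y s x).le_of_opNorm_le (hY.norm_fderivWithin_le hs hx le_rfl) w
  have hpDX {w w' : 𝔼} (hw : ‖w‖ = 1) (hw' : ‖w'‖ = 1) :
      |⟪𝔇 u s x w, 𝔇 X s x w'⟫| ≤ B * (B * δ ^ 2 * r) :=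
    (abs_real_inner_le_norm _ _).trans (by gcongr <;> [exact hDu' hw; exact hDX hw'])
  have hpDY {w w' : 𝔼} (hw : ‖w‖ = 1) (hw' : ‖w'‖ = 1) :
      |⟪𝔇 u s x w, 𝔇 Y s x w'⟫| ≤ B * δ * r * (B * δ) := by
    rw [inner_apply_fderivWithin_of_inner_eq_zero (hs x hx) hx hu' hYd w w'
      fun y _ => inner_normalField u a y w, abs_neg]
    refine (abs_real_inner_le_norm _ _).trans ?_
    gcongr <;> [exact hDDu' hw' hw; exact hY.norm_le]
  have hR {w : 𝔼} (hw : ‖w‖ = 1) : ‖R w‖ ≤ 3 * B * δ / Λ :=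
    norm_inv_smul_corrVec_le (by positivity) hδ hδ1 hr (by positivity) (hDX hw) (hDY hw) t
  have hpR {w w' : 𝔼} (hw : ‖w‖ = 1) (hw' : ‖w'‖ = 1) :
      |⟪𝔇 u s x w, R w'⟫| ≤ 3 * B ^ 2 * δ ^ 2 / Λ :=
    abs_inner_inv_smul_corrVec_le hr (by positivity) (hpDX hw hw') (hpDY hw hw') t
  have hn {w : 𝔼} (hw : ‖w‖ = 1) : |⟪ν, w⟫| ≤ B :=
    (abs_real_inner_le_norm _ _).trans (by simpa [hw] using hν)
  refine norm_le_of_forall_unit_sphere (by positivity) fun w w' hw hw' => ?_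
  have hP : DifferentiableWithinAt ℝ (corrugation ν (Λ * r) X Y) s x :=
    (jetBound_corrugation ν hμ (hX.mono le_rfl hr.le hrμ le_rfl) (hY.mono le_rfl hr.le hrμ le_rfl)
      hs hx).contDiffOn.differentiableOn (by simp) x hx
  simp only [_root_.sub_apply, _root_.smul_apply, inducedMetric_apply, dyad_apply, smul_eq_mul,
    fderivWithin_fun_add (hs x hx) hu hP, _root_.add_apply,
    fderivWithin_corrugation_apply hμ.ne' (hs x hx) hXd hYd, ← add_assoc]
  exact abs_inner_corrugation_sub_le hB hδ hδ1 hΛ (inner_tangentField hinj a w)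
    (inner_tangentField hinj a w') (inner_normalField u a x w) (inner_normalField u a x w')
    (inner_tangentField_normalField ν u a x) (norm_normalField hinj a) hX.norm_le hY.norm_le
    (hn hw) (hn hw') (hR hw) (hR hw') (hpR hw hw') (hpR hw' hw) _

/-- The map `v` arises from `u` by adding oscillations of amplitude `δ` and of frequencies between
`r` and `R`, successive frequencies having ratio `Λ`, so as to add `H` to the induced metric. All
estimates share the constant `C`; derivatives of `v` are controlled up to the order `N + 2`. -/
structure CorrugationBound {E F : Type*} [NormedAddCommGroup E] [NormedSpace ℝ E]
    [NormedAddCommGroup F] [InnerProductSpace ℝ F] (s : Set E) (u v : E → F)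
    (H : E → E →L[ℝ] E →L[ℝ] ℝ) (C δ r R Λ : ℝ) (N : ℕ) : Prop where
  contDiffOn : ContDiffOn ℝ ∞ v s
  jetBound : ∀ x ∈ s, JetBound s (𝔇 (𝔇 v s) s) (C * δ * R) R N x
  norm_fderivWithin_sub_le : ∀ x ∈ s, ‖𝔇 v s x - 𝔇 u s x‖ ≤ C * δ
  norm_sub_le : ∀ x ∈ s, ‖v x - u x‖ ≤ C * δ / r
  norm_inducedMetric_sub_le : ∀ x ∈ s,
    ‖inducedMetric (𝔇 v s x) - inducedMetric (𝔇 u s x) - H x‖ ≤ C * (δ ^ 2 / Λ + δ ^ 4)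

namespace CorrugationBound

variable {E F : Type*} [NormedAddCommGroup E] [NormedSpace ℝ E] [NormedAddCommGroup F]
  [InnerProductSpace ℝ F] {t : Set E} {u v v' : E → F} {H H' : E → E →L[ℝ] E →L[ℝ] ℝ}
  {C C' δ r r' R R' Λ : ℝ} {N N' : ℕ}

theorem refl (hu : ContDiffOn ℝ ∞ u t) (hC : 0 ≤ C) (hδ : 0 ≤ δ) (hr : 0 ≤ r) (hΛ : 0 ≤ Λ)
    (h : ∀ x ∈ t, JetBound t (𝔇 (𝔇 u t) t) (C * δ * r) r N x) :
    CorrugationBound t u u (fun _ => 0) C δ r r Λ N where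
  contDiffOn := hu
  jetBound := h
  norm_fderivWithin_sub_le x _ := by simpa using mul_nonneg hC hδ
  norm_sub_le x _ := by simpa using by positivity
  norm_inducedMetric_sub_le x _ := by simpa using by positivity

theorem trans (h : CorrugationBound t u v H C δ r R Λ N)
    (h' : CorrugationBound t v v' H' C' δ r' R' Λ N') (hC : 0 ≤ C) (hC' : 0 ≤ C') (hδ : 0 ≤ δ)
    (hr : 0 < r) (hrr : r ≤ r') (hR' : 0 ≤ R') :
    CorrugationBound t u v' (fun x => H x + H' x) (C + C') δ r R' Λ N' where
  contDiffOn := h'.contDiffOn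
  jetBound x hx := (h'.jetBound x hx).mono (by gcongr; linarith) hR' le_rfl le_rfl
  norm_fderivWithin_sub_le x hx := by
    linarith [norm_sub_le_norm_sub_add_norm_sub (𝔇 v' t x) (𝔇 v t x) (𝔇 u t x),
      h.norm_fderivWithin_sub_le x hx, h'.norm_fderivWithin_sub_le x hx]
  norm_sub_le x hx := by
    calc ‖v' x - u x‖ ≤ ‖v' x - v x‖ + ‖v x - u x‖ := norm_sub_le_norm_sub_add_norm_sub _ _ _
      _ ≤ C' * δ / r + C * δ / r := by
        gcongr
        exacts [(h'.norm_sub_le x hx).trans (by gcongr), h.norm_sub_le x hx]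
      _ = (C + C') * δ / r := by ring
  norm_inducedMetric_sub_le x hx := by
    have hsplit : inducedMetric (𝔇 v' t x) - inducedMetric (𝔇 u t x) - (H x + H' x) =
        (inducedMetric (𝔇 v' t x) - inducedMetric (𝔇 v t x) - H' x) +
          (inducedMetric (𝔇 v t x) - inducedMetric (𝔇 u t x) - H x) := by abel
    rw [hsplit]
    linarith [norm_add_le_of_le (h'.norm_inducedMetric_sub_le x hx)
      (h.norm_inducedMetric_sub_le x hx)]

end CorrugationBound

theorem corrugationBound_corrugation {ν : 𝔼} {u : 𝔼 → 𝔽} {a : 𝔼 → ℝ} {A B δ r Λ : ℝ} {N : ℕ}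
    (hs : UniqueDiffOn ℝ s) (hA : 0 ≤ A) (hAB : A ≤ B) (hB : 1 ≤ B) (hδ : 0 ≤ δ) (hδ1 : δ ≤ 1)
    (hr : 0 < r) (hΛ : 1 ≤ Λ) (hν : ‖ν‖ ≤ B) (hu : ContDiffOn ℝ ∞ u s)
    (hinj : ∀ x ∈ s, Function.Injective (𝔇 u s x)) (hDu : ∀ x ∈ s, ‖𝔇 u s x‖ ≤ B)
    (hDDu : ∀ x ∈ s, JetBound s (𝔇 (𝔇 u s) s) (A * δ * r) r N x)
    (hX : ∀ x ∈ s, JetBound s (tangentField ν s u a) (B * δ ^ 2) r (N + 2) x)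
    (hY : ∀ x ∈ s, JetBound s (normalField s u a) (B * δ) r (N + 2) x) :
    CorrugationBound s u
      (fun y => u y + corrugation ν (Λ * r) (tangentField ν s u a) (normalField s u a) y)
      (fun x => a x ^ 2 • dyad ν) (A + 2 * corrConst ν (N + 2) * B + 33 * B ^ 4)
      δ r (Λ * r) Λ N := by
  set P := corrugation ν (Λ * r) (tangentField ν s u a) (normalField s u a)
  set c := 2 * corrConst ν (N + 2) * B
  have hc : 0 ≤ c := by unfold c corrConst; positivity
  have hB4 : 0 ≤ B ^ 4 := by positivity
  have hcC : c ≤ A + c + 33 * B ^ 4 := by linarith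
  have hμ : 0 < Λ * r := by positivity
  have hrμ : r ≤ Λ * r := le_mul_of_one_le_left hr.le hΛ
  have hu1 : DifferentiableOn ℝ u s := hu.differentiableOn (by simp)
  have hu2 : DifferentiableOn ℝ (𝔇 u s) s :=
    (hu.fderivWithin hs (m := ∞) le_rfl).differentiableOn (by simp)
  have hP (x : 𝔼) (hx : x ∈ s) : JetBound s P (c * δ / (Λ * r)) (Λ * r) (N + 2) x := by
    refine (jetBound_corrugation ν hμ ((hX x hx).mono (?_ : _ ≤ B * δ) hr.le hrμ le_rfl)
      ((hY x hx).mono le_rfl hr.le hrμ le_rfl) hs hx).mono (le_of_eq ?_) hμ.le le_rfl le_rfl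
    · gcongr
      exact pow_le_of_le_one hδ hδ1 two_ne_zero
    · ring
  have hPd : DifferentiableOn ℝ P s := fun x hx =>
    (hP x hx).contDiffOn.differentiableOn (by simp) x hx
  refine ⟨hu.add fun x hx => (hP x hx).contDiffOn x hx, fun x hx => ?_, fun x hx => ?_,
    fun x hx => ?_, fun x hx => ?_⟩
  · refine (((hDDu x hx).mono (?_ : _ ≤ A * δ * (Λ * r)) hr.le hrμ
      le_rfl).fderivWithin_fderivWithin_add hs hu1 hu2 (hP x hx) hx).mono ?_ hμ.le le_rfl le_rfl
    · gcongr
    · calc A * δ * (Λ * r) + c * δ / (Λ * r) * (Λ * r) * (Λ * r)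
          = (A + c) * δ * (Λ * r) := by field_simp
        _ ≤ (A + c + 33 * B ^ 4) * δ * (Λ * r) := by gcongr ?_ * _ * _; linarith
  · rw [fderivWithin_fun_add (hs x hx) (hu1 x hx) (hPd x hx), add_sub_cancel_left]
    refine ((hP x hx).norm_fderivWithin_le hs hx (by simp)).trans ?_
    rw [div_mul_cancel₀ _ hμ.ne']
    gcongr
  · rw [add_sub_cancel_left]
    exact (hP x hx).norm_le.trans (by gcongr)
  · refine (norm_inducedMetric_corrugation_sub_le hs hx hB hδ hδ1 hr hΛ hν (hu1 x hx) (hu2 x hx)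
      (hinj x hx) (hDu x hx) ((hDDu x hx).norm_le.trans (by gcongr))
      ((hX x hx).mono le_rfl hr.le le_rfl (by simp))
      ((hY x hx).mono le_rfl hr.le le_rfl (by simp))).trans ?_
    gcongr
    exact le_add_of_nonneg_left (by positivity)

theorem exists_corrugation (ν : 𝔼) {K : Set (𝔼 →L[ℝ] 𝔽)} (hK : IsCompact K)
    (hKi : K ⊆ {A | Function.Injective A}) (hs : UniqueDiffOn ℝ s) {A : ℝ} (hA : 0 ≤ A) (N : ℕ) :
    ∃ C : ℝ, 0 ≤ C ∧ ∀ (δ r Λ : ℝ) (u : 𝔼 → 𝔽) (a : 𝔼 → ℝ), 0 ≤ δ → δ ≤ 1 → 0 < r → 1 ≤ Λ →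
      ContDiffOn ℝ ∞ u s → MapsTo (𝔇 u s) s K →
      (∀ x ∈ s, JetBound s (𝔇 (𝔇 u s) s) (A * δ * r) r (N + 1) x) →
      (∀ x ∈ s, JetBound s a (A * δ) r (N + 2) x) →
      ∃ v, CorrugationBound s u v (fun x => a x ^ 2 • dyad ν) C δ r (Λ * r) Λ N := by
  obtain ⟨b, hb⟩ := hK.isBounded.exists_norm_le
  obtain ⟨C₀, hC₀, hfields⟩ := exists_jetBound_fields ν hK hKi hs hA (N + 1)
  set B : ℝ := 1 + A + |b| + ‖ν‖ + C₀
  have hAB : A ≤ B := by unfold B; linarith [abs_nonneg b, norm_nonneg ν]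
  have hB : 1 ≤ B := by unfold B; linarith [abs_nonneg b, norm_nonneg ν]
  have hbB : b ≤ B := by unfold B; linarith [le_abs_self b, norm_nonneg ν]
  have hνB : ‖ν‖ ≤ B := by unfold B; linarith [abs_nonneg b]
  have hCB : C₀ ≤ B := by unfold B; linarith [abs_nonneg b, norm_nonneg ν]
  refine ⟨A + 2 * corrConst ν (N + 2) * B + 33 * B ^ 4, by unfold corrConst; positivity,
    fun δ r Λ u a hδ hδ1 hr hΛ hu hmaps hDDu ha => ⟨_, corrugationBound_corrugation (a := a) hs hA
      hAB hB hδ hδ1 hr hΛ hνB hu (fun x hx => hKi (hmaps hx))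
      (fun x hx => (hb _ (hmaps hx)).trans hbB)
      (fun x hx => (hDDu x hx).mono le_rfl hr.le le_rfl (by simp)) (fun x hx => ?_)
      fun x hx => ?_⟩⟩
  all_goals
    have h := hfields δ r u a hδ hδ1 hr.le
      ((hu.fderivWithin hs (m := ∞) le_rfl).differentiableOn (by simp)) hmaps hDDu ha x hx
  · exact h.1.mono (by gcongr) hr.le le_rfl le_rfl
  · exact h.2.mono (by gcongr) hr.le le_rfl le_rfl

theorem exists_corrugation_sum {ι : Type*} (ν : ι → 𝔼) {K : Set (𝔼 →L[ℝ] 𝔽)} (hK : IsCompact K)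
    (hKi : K ⊆ {A | Function.Injective A}) (hs : UniqueDiffOn ℝ s) {A : ℝ} (hA : 0 ≤ A)
    (I : Finset ι) (N : ℕ) :
    ∃ C δ₁ : ℝ, 0 ≤ C ∧ 0 < δ₁ ∧ ∀ (δ r Λ : ℝ) (u : 𝔼 → 𝔽) (a : ι → 𝔼 → ℝ),
      0 ≤ δ → δ ≤ δ₁ → 0 < r → 1 ≤ Λ → ContDiffOn ℝ ∞ u s → MapsTo (𝔇 u s) s K →
      (∀ x ∈ s, JetBound s (𝔇 (𝔇 u s) s) (A * δ * r) r (N + I.card) x) →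
      (∀ i ∈ I, ∀ x ∈ s, JetBound s (a i) (A * δ) r (N + I.card + 1) x) →
      ∃ v, CorrugationBound s u v (fun x => ∑ i ∈ I, a i x ^ 2 • dyad (ν i)) C δ r
        (Λ ^ I.card * r) Λ N := by
  classical
  induction I using Finset.induction_on generalizing N with
  | empty =>
    refine ⟨A, 1, hA, one_pos, fun δ r Λ u a hδ _ hr hΛ hu _ hDDu _ => ⟨u, ?_⟩⟩
    simpa using CorrugationBound.refl (Λ := Λ) hu hA hδ hr.le (by linarith) hDDu
  | insert i I hi ih =>
    obtain ⟨C₁, δ₁, hC₁, hδ₁, h₁⟩ := ih (N + 1)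
    obtain ⟨ρ, hρ, hρi⟩ :=
      hK.exists_cthickening_subset_open ContinuousLinearMap.isOpen_injective hKi
    obtain ⟨C₂, hC₂, h₂⟩ := exists_corrugation (ν i) (hK.cthickening (r := ρ)) hρi hs
      (add_nonneg hA hC₁) N
    refine ⟨C₁ + C₂, min (min δ₁ 1) (ρ / (C₁ + 1)), by positivity, by positivity,
      fun δ r Λ u a hδ hδ' hr hΛ hu hmaps hDDu ha => ?_⟩
    simp only [le_min_iff] at hδ'
    simp only [Finset.card_insert_of_notMem hi, Finset.mem_insert] at hDDu ha ⊢
    have hrr : r ≤ Λ ^ I.card * r := le_mul_of_one_le_left hr.le (one_le_pow₀ hΛ)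
    obtain ⟨v, hv⟩ := h₁ δ r Λ u a hδ hδ'.1.1 hr hΛ hu hmaps
      (fun x hx => (hDDu x hx).mono le_rfl hr.le le_rfl (by lia))
      fun j hj x hx => (ha j (.inr hj) x hx).mono le_rfl hr.le le_rfl (by lia)
    have hρδ : C₁ * δ ≤ ρ := by
      linarith [(le_div_iff₀ (by positivity)).1 hδ'.2]
    obtain ⟨v', hv'⟩ := h₂ δ (Λ ^ I.card * r) Λ v (a i) hδ hδ'.1.2 (by positivity) hΛ hv.contDiffOn
      (fun x hx => mem_cthickening_of_dist_le _ _ _ _ (hmaps hx) <| by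
        rw [dist_eq_norm]
        exact (hv.norm_fderivWithin_sub_le x hx).trans hρδ)
      (fun x hx => (hv.jetBound x hx).mono (by gcongr; linarith) (by positivity) le_rfl le_rfl)
      fun x hx => (ha i (.inl rfl) x hx).mono (by gcongr; linarith) hr.le hrr (by lia)
    refine ⟨v', ?_⟩
    convert hv.trans hv' hC₁ hC₂ hδ hr hrr (by positivity) using 1
    · simp only [Finset.sum_insert hi, add_comm]
    · ring

end Step

section Decomposition

/-- Pairs `i ≤ j` of indices, which label the primitive metrics. -/
abbrev PairIdx (ι : Type*) [LE ι] : Type _ := {p : ι × ι // p.1 ≤ p.2}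

theorem card_pairIdx (ι : Type*) [LinearOrder ι] [Fintype ι] :
    Fintype.card (PairIdx ι) = (Fintype.card ι + 1).choose 2 := by
  rw [← Fintype.card_congr (Sym2.sortEquiv (α := ι)), Sym2.card]

theorem card_pairIdx_fin (d : ℕ) : (Fintype.card (PairIdx (Fin d)) : ℝ) = d * (d + 1) / 2 := by
  rw [card_pairIdx, Fintype.card_fin, Nat.cast_choose_two]
  push_cast
  ring

theorem sum_sum_eq_sum_pairIdx {ι M : Type*} [LinearOrder ι] [Fintype ι] [AddCommMonoid M]
    (f : ι → ι → M) :
    ∑ i, ∑ j, f i j = ∑ p : PairIdx ι, if p.1.1 = p.1.2 then f p.1.1 p.1.2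
      else f p.1.1 p.1.2 + f p.1.2 p.1.1 := by
  have hsplit (i j : ι) : f i j = (if i ≤ j then f i j else 0) + if j < i then f i j else 0 := by
    rcases lt_or_ge j i with h | h
    · simp [h, h.not_ge]
    · simp [h, h.not_gt]
  calc ∑ i, ∑ j, f i j
      = ∑ i, ∑ j, ((if i ≤ j then f i j else 0) + if i < j then f j i else 0) := by
        simp_rw [Finset.sum_add_distrib]
        rw [Finset.sum_comm (f := fun i j => if i < j then f j i else 0)]
        simp_rw [← Finset.sum_add_distrib, ← hsplit]
    _ = ∑ q : ι × ι with q.1 ≤ q.2, if q.1 = q.2 then f q.1 q.2 else f q.1 q.2 + f q.2 q.1 := by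
        rw [← Fintype.sum_prod_type', Finset.sum_filter]
        refine Finset.sum_congr rfl fun q _ => ?_
        rcases lt_trichotomy q.1 q.2 with h | h | h
        · simp [h.le, h.ne, h]
        · simp [h]
        · simp [h.not_ge, h.not_gt]
    _ = _ := Finset.sum_subtype _ (by simp) _

/-- The direction of the primitive metric labelled by `p`. -/
def primDir (p : PairIdx (Fin d)) : 𝔼 :=
  if p.1.1 = p.1.2 then EuclideanSpace.single p.1.1 1
  else EuclideanSpace.single p.1.1 1 + EuclideanSpace.single p.1.2 1

/-- The entry `H eᵢ eⱼ` of a bilinear form `H`, as a functional of `H`. -/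
def entry (i j : Fin d) : (𝔼 →L[ℝ] 𝔼 →L[ℝ] ℝ) →L[ℝ] ℝ :=
  (ContinuousLinearMap.apply ℝ ℝ (EuclideanSpace.single j (1 : ℝ))).comp
    (ContinuousLinearMap.apply ℝ (𝔼 →L[ℝ] ℝ) (EuclideanSpace.single i (1 : ℝ)))

/-- The coefficient of the primitive metric labelled by `p` in a symmetric form. -/
def primCoef (p : PairIdx (Fin d)) : (𝔼 →L[ℝ] 𝔼 →L[ℝ] ℝ) →L[ℝ] ℝ :=
  if p.1.1 = p.1.2 then (2 : ℝ) • entry p.1.1 p.1.1 - ∑ j, entry p.1.1 j else entry p.1.1 p.1.2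

theorem sum_entry_mul (H : 𝔼 →L[ℝ] 𝔼 →L[ℝ] ℝ) (w w' : 𝔼) :
    ∑ i, ∑ j, entry i j H * (w i * w' j) = H w w' := by
  conv_rhs => rw [← sum_apply_smul_single w, ← sum_apply_smul_single w']
  simp only [map_sum, map_smul, FunLike.coe_sum, Finset.sum_apply, FunLike.coe_smul, Pi.smul_apply,
    smul_eq_mul, Finset.mul_sum]
  rw [Finset.sum_comm]
  refine Finset.sum_congr rfl fun i _ => Finset.sum_congr rfl fun j _ => ?_
  simp only [entry, ContinuousLinearMap.comp_apply, ContinuousLinearMap.apply_apply]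
  ring

theorem sum_primCoef_smul_dyad {H : 𝔼 →L[ℝ] 𝔼 →L[ℝ] ℝ} (hH : ∀ w w', H w w' = H w' w) :
    ∑ p, primCoef p H • dyad (primDir p) = H := by
  ext w w'
  have hsymm (i j : Fin d) : entry i j H = entry j i H := hH _ _
  have hrow : ∑ i, ∑ j, entry i j H * (w i * w' i) = ∑ p : PairIdx (Fin d),
      if p.1.1 = p.1.2 then (∑ j, entry p.1.1 j H) * (w p.1.1 * w' p.1.1) else 0 := by
    have h := sum_sum_eq_sum_pairIdx fun i j : Fin d =>
      if i = j then (∑ k, entry i k H) * (w i * w' i) else 0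
    simp only [Finset.sum_ite_eq, Finset.mem_univ, if_true, Finset.sum_mul] at h ⊢
    rw [h]
    refine Finset.sum_congr rfl fun p _ => ?_
    split_ifs <;> simp_all
  have hsum : ∑ p, (primCoef p H • dyad (primDir p)) w w' + ∑ i, ∑ j, entry i j H * (w i * w' i) =
      ∑ i, ∑ j, entry i j H * (w i * w' j) + ∑ i, ∑ j, entry i j H * (w i * w' i) := by
    conv_lhs => rw [hrow]
    rw [sum_sum_eq_sum_pairIdx, sum_sum_eq_sum_pairIdx, ← Finset.sum_add_distrib,
      ← Finset.sum_add_distrib]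
    refine Finset.sum_congr rfl fun p _ => ?_
    unfold primCoef primDir
    split_ifs with h
    · simp [h, EuclideanSpace.inner_single_left]
      ring
    · simp [hsymm p.1.2 p.1.1, EuclideanSpace.inner_single_left, inner_add_left]
      ring
  simpa [sum_entry_mul] using hsum

/-- The metric all of whose primitive coefficients equal one. -/
def unitMetric (d : ℕ) : EuclideanSpace ℝ (Fin d) →L[ℝ] EuclideanSpace ℝ (Fin d) →L[ℝ] ℝ :=
  ((d : ℝ) - 1) • inducedMetric (ContinuousLinearMap.id ℝ _) +
    dyad (∑ i, EuclideanSpace.single i 1)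

theorem unitMetric_comm (w w' : 𝔼) : unitMetric d w w' = unitMetric d w' w := by
  simp only [unitMetric, _root_.add_apply, _root_.smul_apply, inducedMetric_apply,
    ContinuousLinearMap.id_apply, dyad_apply, real_inner_comm w w', mul_comm]

theorem primCoef_unitMetric (p : PairIdx (Fin d)) : primCoef p (unitMetric d) = 1 := by
  have hentry (i j : Fin d) :
      entry i j (unitMetric d) = ((d : ℝ) - 1) * (if i = j then 1 else 0) + 1 := by
    simp [entry, unitMetric, EuclideanSpace.inner_single_right, Pi.single_apply, eq_comm]
  unfold primCoef
  split_ifs with h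
  · simp [hentry, Finset.sum_add_distrib]
    ring
  · simp [hentry, h]

end Decomposition

section Amplitude

variable {s : Set (EuclideanSpace ℝ (Fin d))}

/-- The relative size of the admissible deviation of a metric defect from `unitMetric d`. -/
def metricTol (d : ℕ) : ℝ := 1 / (8 * (1 + ∑ p : PairIdx (Fin d), ‖primCoef p‖))

theorem metricTol_pos (d : ℕ) : 0 < metricTol d := by
  unfold metricTol
  positivity

theorem metricTol_le (d : ℕ) : metricTol d ≤ 1 / 8 := by
  unfold metricTol
  gcongr
  exact le_mul_of_one_le_right (by norm_num) (le_add_of_nonneg_right (by positivity))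

theorem norm_primCoef_le_sum (p : PairIdx (Fin d)) :
    ‖primCoef p‖ ≤ 1 + ∑ q : PairIdx (Fin d), ‖primCoef q‖ :=
  (Finset.single_le_sum (f := fun q => ‖primCoef q‖) (fun _ _ => norm_nonneg _)
    (Finset.mem_univ p)).trans (le_add_of_nonneg_left zero_le_one)

theorem primCoef_mem_Icc {H : 𝔼 →L[ℝ] 𝔼 →L[ℝ] ℝ} {θ : ℝ} (hθ : 3 / 4 ≤ θ) (hθ1 : θ ≤ 1)
    (hH : ‖H - θ • unitMetric d‖ ≤ 2 * metricTol d) (p : PairIdx (Fin d)) :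
    primCoef p H ∈ Icc (1 / 2 : ℝ) (3 / 2) := by
  have hdev : |primCoef p H - θ| ≤ 1 / 4 := by
    calc |primCoef p H - θ| = ‖primCoef p (H - θ • unitMetric d)‖ := by
          rw [map_sub, map_smul, primCoef_unitMetric, smul_eq_mul, mul_one, Real.norm_eq_abs]
      _ ≤ ‖primCoef p‖ * ‖H - θ • unitMetric d‖ := (primCoef p).le_opNorm _
      _ ≤ (1 + ∑ q : PairIdx (Fin d), ‖primCoef q‖) * (2 * metricTol d) := by
          gcongr
          exact norm_primCoef_le_sum p
      _ = 1 / 4 := by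
          unfold metricTol
          field_simp
          norm_num
  rw [abs_le] at hdev
  constructor <;> linarith

theorem exists_jetBound_sqrt_primCoef (hs : UniqueDiffOn ℝ s) (A : ℝ) (N : ℕ) :
    ∃ C : ℝ, 0 ≤ C ∧ ∀ (H : 𝔼 → 𝔼 →L[ℝ] 𝔼 →L[ℝ] ℝ) (r : ℝ) (p : PairIdx (Fin d)), 0 ≤ r →
      (∀ x ∈ s, JetBound s H A r N x) → (∀ x ∈ s, primCoef p (H x) ∈ Icc (1 / 2 : ℝ) (3 / 2)) →
      ∀ x ∈ s, JetBound s (fun y => √(primCoef p (H y))) C r N x := by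
  obtain ⟨C, hC, hcomp⟩ := exists_jetBound_comp (s := s) (Φ := Real.sqrt) (U := Ioi 0)
    (K := Icc (1 / 2) (3 / 2)) isOpen_Ioi.uniqueDiffOn isCompact_Icc
    (fun x hx => lt_of_lt_of_le (by norm_num) hx.1)
    (fun x hx => (Real.contDiffAt_sqrt (ne_of_gt hx)).contDiffWithinAt) hs
    ((1 + ∑ p : PairIdx (Fin d), ‖primCoef p‖) * A) N
  refine ⟨C, hC, fun H r p hr hH hmem => hcomp _ r hmem hr fun x hx => ?_⟩
  refine ((hH x hx).clm_comp (primCoef p) hs hx).mono ?_ hr le_rfl le_rfl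
  gcongr
  exacts [(hH x hx).nonneg, norm_primCoef_le_sum p]

theorem exists_sum_sq_smul_dyad_eq (hs : UniqueDiffOn ℝ s) (A : ℝ) (N : ℕ) :
    ∃ C : ℝ, 0 ≤ C ∧ ∀ (D : 𝔼 → 𝔼 →L[ℝ] 𝔼 →L[ℝ] ℝ) (δ r θ : ℝ), 0 < δ → 0 ≤ r →
      3 / 4 ≤ θ → θ ≤ 1 → (∀ x ∈ s, ∀ w w', D x w w' = D x w' w) →
      (∀ x ∈ s, ‖D x - (θ * δ ^ 2) • unitMetric d‖ ≤ 2 * metricTol d * δ ^ 2) →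
      (∀ x ∈ s, JetBound s D (A * δ ^ 2) r N x) →
      ∃ a : PairIdx (Fin d) → 𝔼 → ℝ, (∀ p, ∀ x ∈ s, JetBound s (a p) (C * δ) r N x) ∧
        ∀ x ∈ s, ∑ p, a p x ^ 2 • dyad (primDir p) = D x := by
  obtain ⟨C, hC, hsqrt⟩ := exists_jetBound_sqrt_primCoef hs A N
  refine ⟨C, hC, fun D δ r θ hδ hr hθ hθ1 hsymm hD hjet => ?_⟩
  have hjet' : ∀ x ∈ s, JetBound s (fun y => (1 / δ ^ 2) • D y) A r N x := fun x hx =>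
    ((hjet x hx).const_smul (1 / δ ^ 2) hs hx).mono (le_of_eq (by
      rw [abs_of_nonneg (by positivity)]
      field_simp)) hr le_rfl le_rfl
  have hmem (p) : ∀ x ∈ s, primCoef p ((1 / δ ^ 2) • D x) ∈ Icc (1 / 2 : ℝ) (3 / 2) :=
    fun x hx => primCoef_mem_Icc hθ hθ1 (by
      have hscale : (1 / δ ^ 2) • D x - θ • unitMetric d =
          (1 / δ ^ 2) • (D x - (θ * δ ^ 2) • unitMetric d) := by
        rw [smul_sub, smul_smul, show 1 / δ ^ 2 * (θ * δ ^ 2) = θ by field_simp]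
      rw [hscale, norm_smul, Real.norm_of_nonneg (by positivity), one_div,
        inv_mul_le_iff₀ (by positivity), mul_comm (δ ^ 2)]
      exact hD x hx) p
  refine ⟨fun p x => δ • √(primCoef p ((1 / δ ^ 2) • D x)), fun p x hx => ?_, fun x hx => ?_⟩
  · refine ((hsqrt _ r p hr hjet' (hmem p) x hx).const_smul δ hs hx).mono (le_of_eq ?_) hr
      le_rfl le_rfl
    rw [abs_of_pos hδ, mul_comm]
  · have hsq (p) : (δ • √(primCoef p ((1 / δ ^ 2) • D x))) ^ 2 = primCoef p (D x) := by
      rw [smul_eq_mul, mul_pow, Real.sq_sqrt (by linarith [(hmem p x hx).1]), map_smul, smul_eq_mul]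
      field_simp
    simp only [hsq]
    exact sum_primCoef_smul_dyad (hsymm x hx)

end Amplitude

section Ellipticity

theorem exists_mul_sq_le_apply_apply {X E : Type*} [TopologicalSpace X] [NormedAddCommGroup E]
    [NormedSpace ℝ E] [FiniteDimensional ℝ E] {s : Set X} (hs : IsCompact s)
    {g : X → E →L[ℝ] E →L[ℝ] ℝ} (hg : ContinuousOn g s)
    (hpos : ∀ x ∈ s, ∀ w, w ≠ 0 → 0 < g x w w) :
    ∃ c : ℝ, 0 < c ∧ ∀ x ∈ s, ∀ w, c ^ 2 * ‖w‖ ^ 2 ≤ g x w w := by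
  have : ProperSpace E := FiniteDimensional.proper_real E
  have hcont : ContinuousOn (fun p : X × E => g p.1 p.2 p.2) (s ×ˢ sphere 0 1) :=
    ((hg.comp continuousOn_fst fun p hp => hp.1).clm_apply continuousOn_snd).clm_apply
      continuousOn_snd
  obtain ⟨a, ha, hle⟩ := (hs.prod (isCompact_sphere (0 : E) 1)).exists_forall_le' hcont (a := 0)
    fun p hp => hpos p.1 hp.1 p.2 (ne_zero_of_mem_unit_sphere ⟨p.2, hp.2⟩)
  refine ⟨√a, Real.sqrt_pos.2 ha, fun x hx w => ?_⟩
  rw [Real.sq_sqrt ha.le]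
  rcases eq_or_ne w 0 with rfl | hw
  · simp
  · have hw' : 0 < ‖w‖ := norm_pos_iff.2 hw
    have h : a ≤ g x (‖w‖⁻¹ • w) (‖w‖⁻¹ • w) :=
      hle (x, ‖w‖⁻¹ • w) ⟨hx, by simp [norm_smul, hw'.ne']⟩
    simp only [map_smul, _root_.smul_apply, smul_eq_mul] at h
    rwa [← mul_assoc, ← mul_inv, inv_mul_eq_div, le_div_iff₀ (by positivity), ← sq] at h

variable {E F : Type*} [NormedAddCommGroup E] [NormedSpace ℝ E] [NormedAddCommGroup F]

theorem mem_bilipSet_of_norm_sub_inducedMetric_le [InnerProductSpace ℝ F] {A : E →L[ℝ] F}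
    {H : E →L[ℝ] E →L[ℝ] ℝ} {a b c C e : ℝ} (h : ‖H - inducedMetric A‖ ≤ e)
    (ha : ∀ w, a * ‖w‖ ^ 2 ≤ H w w) (hb : ‖H‖ ≤ b) (hc : c ^ 2 ≤ a - e) (hC : b + e ≤ C ^ 2)
    (hC0 : 0 ≤ C) : A ∈ bilipSet E F c C := by
  have hA (w) : |H w w - ‖A w‖ ^ 2| ≤ e * ‖w‖ ^ 2 := by
    have hw := (H - inducedMetric A).le_opNorm₂ w w
    rw [_root_.sub_apply, _root_.sub_apply, inducedMetric_apply, real_inner_self_eq_norm_sq,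
      mul_assoc, ← sq] at hw
    exact hw.trans (by gcongr)
  refine ⟨A.opNorm_le_bound hC0 fun w => ?_, fun w => ?_⟩
  · have hH : H w w ≤ b * ‖w‖ ^ 2 := by
      refine (le_abs_self _).trans ((H.le_opNorm₂ w w).trans ?_)
      rw [mul_assoc, ← sq]
      gcongr
    refine le_of_sq_le_sq ?_ (by positivity)
    nlinarith [abs_le.1 (hA w), sq_nonneg ‖w‖]
  · refine le_of_sq_le_sq ?_ (norm_nonneg _)
    nlinarith [abs_le.1 (hA w), sq_nonneg ‖w‖, ha w]

theorem mem_bilipSet_of_norm_sub_le [NormedSpace ℝ F] {A B : E →L[ℝ] F} {c C e : ℝ}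
    (hA : A ∈ bilipSet E F c C) (h : ‖B - A‖ ≤ e) : B ∈ bilipSet E F (c - e) (C + e) := by
  refine ⟨?_, fun w => ?_⟩
  · linarith [norm_le_norm_add_norm_sub' B A, hA.1]
  · have hBA := (B - A).le_of_opNorm_le h w
    rw [_root_.sub_apply] at hBA
    linarith [norm_le_norm_add_norm_sub (B w) (A w), hA.2 w]

end Ellipticity

section Stage

/-- A Lipschitz Riemannian metric on the closed unit ball, as a field of bilinear forms. -/
structure IsLipschitzMetric (g : 𝔼 → 𝔼 →L[ℝ] 𝔼 →L[ℝ] ℝ) : Prop where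
  exists_lipschitzOnWith : ∃ L, LipschitzOnWith L g 𝔹
  comm : ∀ x ∈ 𝔹, ∀ w w', g x w w' = g x w' w
  pos : ∀ x ∈ 𝔹, ∀ w, w ≠ 0 → 0 < g x w w

theorem IsLipschitzMetric.continuousOn {g : 𝔼 → 𝔼 →L[ℝ] 𝔼 →L[ℝ] ℝ} (hg : IsLipschitzMetric g) :
    ContinuousOn g 𝔹 :=
  hg.exists_lipschitzOnWith.choose_spec.continuousOn

/-- The state of the iteration: a smooth map whose metric defect is `δ ^ 2 • unitMetric d` up to a
relative error `metricTol d`, with second derivative bounded by `μ`. -/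
structure NearIsometry (g : 𝔼 → 𝔼 →L[ℝ] 𝔼 →L[ℝ] ℝ) (δ μ : ℝ) (u : 𝔼 → 𝔽) : Prop where
  contDiffOn : ContDiffOn ℝ ∞ u 𝔹
  norm_defect_le : ∀ x ∈ 𝔹, ‖g x - δ ^ 2 • unitMetric d - inducedMetric (𝔇 u 𝔹 x)‖ ≤
    metricTol d * δ ^ 2
  norm_fderivWithin_fderivWithin_le : ∀ x ∈ 𝔹, ‖𝔇 (𝔇 u 𝔹) 𝔹 x‖ ≤ μ

namespace NearIsometry

variable {g : EuclideanSpace ℝ (Fin d) → EuclideanSpace ℝ (Fin d) →L[ℝ]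
    EuclideanSpace ℝ (Fin d) →L[ℝ] ℝ} {δ μ κ : ℝ}
  {u : EuclideanSpace ℝ (Fin d) → EuclideanSpace ℝ (Fin (d + 1))} {x : EuclideanSpace ℝ (Fin d)}

theorem contDiffOn_fderivWithin (hu : NearIsometry g δ μ u) : ContDiffOn ℝ ∞ (𝔇 u 𝔹) 𝔹 :=
  hu.contDiffOn.fderivWithin uniqueDiffOn_unitBall le_rfl

theorem norm_fderivWithin_sub_le (hu : NearIsometry g δ μ u) {z : 𝔼} (hz : z ∈ 𝔹) (hx : x ∈ 𝔹) :
    ‖𝔇 u 𝔹 z - 𝔇 u 𝔹 x‖ ≤ μ * ‖z - x‖ :=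
  (convex_closedBall _ _).norm_image_sub_le_of_norm_fderivWithin_le
    (hu.contDiffOn_fderivWithin.differentiableOn (by simp))
    hu.norm_fderivWithin_fderivWithin_le hx hz

theorem norm_sub_inducedMetric_le (hu : NearIsometry g δ μ u) (hx : x ∈ 𝔹) :
    ‖g x - inducedMetric (𝔇 u 𝔹 x)‖ ≤ (‖unitMetric d‖ + 1) * δ ^ 2 := by
  have hsplit : g x - inducedMetric (𝔇 u 𝔹 x) =
      (g x - δ ^ 2 • unitMetric d - inducedMetric (𝔇 u 𝔹 x)) + δ ^ 2 • unitMetric d := by abel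
  calc ‖g x - inducedMetric (𝔇 u 𝔹 x)‖ ≤ metricTol d * δ ^ 2 + ‖δ ^ 2 • unitMetric d‖ := by
        rw [hsplit]
        exact norm_add_le_of_le (hu.norm_defect_le x hx) le_rfl
    _ ≤ 1 * δ ^ 2 + δ ^ 2 * ‖unitMetric d‖ := by
        rw [norm_smul, Real.norm_of_nonneg (sq_nonneg δ)]
        gcongr
        linarith [metricTol_le d]
    _ = (‖unitMetric d‖ + 1) * δ ^ 2 := by ring

theorem fderivWithin_smoothing_mem_bilipSet (hu : NearIsometry g δ μ u) {b c ℓ : ℝ}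
    (hg : ∀ x ∈ 𝔹, ∀ w, c ^ 2 * ‖w‖ ^ 2 ≤ g x w w) (hb : ∀ x ∈ 𝔹, ‖g x‖ ≤ b) (hδ : 0 < δ)
    (hδ1 : δ ≤ 1) (hδc : δ * (2 * (‖unitMetric d‖ + 1)) ≤ c) (h0 : 0 < ℓ) (h1 : ℓ < 1)
    (hμℓ : μ * (2 * ℓ) ≤ δ / 4) (hx : x ∈ 𝔹) :
    𝔇 (smoothing ℓ u) 𝔹 x ∈ bilipSet 𝔼 𝔽 (c / 4) (b + ‖unitMetric d‖ + 3) := by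
  have hm := norm_nonneg (unitMetric d)
  have hb0 : 0 ≤ b := (norm_nonneg _).trans (hb x hx)
  have hδsq : (2 * ((‖unitMetric d‖ + 1) * δ)) ^ 2 ≤ c ^ 2 := by
    gcongr
    linarith
  have hmem : 𝔇 u 𝔹 x ∈ bilipSet 𝔼 𝔽 (c / 2) (b + ‖unitMetric d‖ + 2) := by
    refine mem_bilipSet_of_norm_sub_inducedMetric_le (hu.norm_sub_inducedMetric_le hx) (hg x hx)
      (hb x hx) ?_ ?_ (by positivity)
    · nlinarith [mul_nonneg (mul_nonneg (norm_nonneg (unitMetric d)) (sq_nonneg δ))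
        (by positivity : 0 ≤ ‖unitMetric d‖ + 1)]
    · nlinarith [mul_le_of_le_one_right (by positivity : 0 ≤ ‖unitMetric d‖ + 1)
        (pow_le_one₀ hδ.le hδ1 : δ ^ 2 ≤ 1)]
  have h := mem_bilipSet_of_norm_sub_le hmem ((norm_fderivWithin_smoothing_sub_le h0 h1
    (hu.contDiffOn.of_le ENat.LEInfty.out) hu.norm_fderivWithin_fderivWithin_le
    hx).trans hμℓ)
  have hδc' : δ ≤ c := (le_mul_of_one_le_right hδ.le (by linarith)).trans hδc
  exact ⟨by linarith [h.1], fun w => le_trans (by gcongr; linarith) (h.2 w)⟩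

/-- The metric defect of the mollification at scale `ℓ`, when the target defect is
`(δ / κ) ^ 2 • unitMetric d`; the metric `g` is mollified as well. -/
def smoothedDefect (g : 𝔼 → 𝔼 →L[ℝ] 𝔼 →L[ℝ] ℝ) (u : 𝔼 → 𝔽) (δ κ ℓ : ℝ) (x : 𝔼) :
    𝔼 →L[ℝ] 𝔼 →L[ℝ] ℝ :=
  moll ℓ (fun z => g z - (δ / κ) ^ 2 • unitMetric d) x - inducedMetric (moll ℓ (𝔇 u 𝔹) x)

theorem smoothedDefect_comm (hg : IsLipschitzMetric g) (u : 𝔼 → 𝔽) (δ κ : ℝ) {ℓ : ℝ}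
    (h0 : 0 < ℓ) (h1 : ℓ ≤ 1) (hx : x ∈ 𝔹) (w w' : 𝔼) :
    smoothedDefect g u δ κ ℓ x w w' = smoothedDefect g u δ κ ℓ x w' w := by
  let L : (𝔼 →L[ℝ] 𝔼 →L[ℝ] ℝ) →L[ℝ] ℝ :=
    ContinuousLinearMap.apply ℝ ℝ w' ∘L ContinuousLinearMap.apply ℝ _ w -
      ContinuousLinearMap.apply ℝ ℝ w ∘L ContinuousLinearMap.apply ℝ _ w'
  have hcont : ContinuousOn (fun z => g z - (δ / κ) ^ 2 • unitMetric d) 𝔹 :=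
    hg.continuousOn.sub continuousOn_const
  have hmoll : ‖moll ℓ (fun z => L (g z - (δ / κ) ^ 2 • unitMetric d)) x‖ ≤ 0 :=
    norm_moll_le h0 h1 hx fun z hz _ => le_of_eq (norm_eq_zero.2 (by
      simp [L, hg.comm z hz w w', unitMetric_comm w w']))
  rw [norm_le_zero_iff, moll_clm h0 h1 hcont L hx] at hmoll
  simp only [L, _root_.sub_apply, ContinuousLinearMap.comp_apply, ContinuousLinearMap.apply_apply,
    sub_eq_zero] at hmoll
  simp only [smoothedDefect, _root_.sub_apply, inducedMetric_apply, hmoll, real_inner_comm]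

theorem norm_fderivWithin_sub_le_of_dist_le (hu : NearIsometry g δ μ u) {ℓ a : ℝ} (hx : x ∈ 𝔹)
    (ha : μ * (2 * ℓ) ≤ a) : ∀ z ∈ 𝔹, dist z x ≤ 2 * ℓ → ‖𝔇 u 𝔹 z - 𝔇 u 𝔹 x‖ ≤ a :=
  fun z hz hzx => (hu.norm_fderivWithin_sub_le hz hx).trans <| by
    have hμ := (norm_nonneg _).trans (hu.norm_fderivWithin_fderivWithin_le x hx)
    rw [← dist_eq_norm]
    exact (mul_le_mul_of_nonneg_left hzx hμ).trans ha

theorem norm_smoothedDefect_sub_le (hg : ContinuousOn g 𝔹) (hu : NearIsometry g δ μ u) {ℓ : ℝ}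
    (h0 : 0 < ℓ) (h1 : ℓ ≤ 1) (hℓ : μ * (2 * ℓ) ≤ 2 * metricTol d * δ) (hx : x ∈ 𝔹) :
    ‖smoothedDefect g u δ κ ℓ x - ((1 - 1 / κ ^ 2) * δ ^ 2) • unitMetric d‖ ≤
      2 * metricTol d * δ ^ 2 := by
  refine (norm_moll_sub_bilinear_moll_sub_le (B := innerForm) (f := 𝔇 u 𝔹)
    (γ := fun z => g z - (δ / κ) ^ 2 • unitMetric d) norm_innerForm_le h0 h1
    hu.contDiffOn_fderivWithin.continuousOn (hg.sub continuousOn_const) hx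
    (b := metricTol d * δ ^ 2) (fun z hz => ?_)
    (hu.norm_fderivWithin_sub_le_of_dist_le hx hℓ)).trans ?_
  · refine (le_of_eq (congrArg norm ?_)).trans (hu.norm_defect_le z hz)
    rw [← inducedMetric, div_pow]
    module
  · nlinarith [sq_nonneg δ, mul_le_mul_of_nonneg_left (metricTol_le d) (metricTol_pos d).le]

theorem jetBound_smoothedDefect (hg : ContinuousOn g 𝔹) (hu : NearIsometry g δ μ u) {ℓ : ℝ}
    (hδ : 0 ≤ δ) (hκ : 1 ≤ κ) (h0 : 0 < ℓ) (h1 : ℓ ≤ 1) (hℓ : μ * (2 * ℓ) ≤ δ) (hx : x ∈ 𝔹)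
    (N : ℕ) :
    JetBound 𝔹 (smoothedDefect g u δ κ ℓ) ((mollConst 𝔼 N * (2 * ‖unitMetric d‖ + 1) +
      mollConst 𝔼 N + 2 ^ N * mollConst 𝔼 N ^ 2) * δ ^ 2) (1 / ℓ) N x := by
  have hδκ : (δ / κ) ^ 2 ≤ δ ^ 2 := by
    gcongr
    exact div_le_self hδ hκ
  refine (jetBound_moll_sub_bilinear_moll (B := innerForm) (f := 𝔇 u 𝔹)
    (γ := fun z => g z - (δ / κ) ^ 2 • unitMetric d) norm_innerForm_le h0 h1
    hu.contDiffOn_fderivWithin.continuousOn (hg.sub continuousOn_const) hx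
    (b := (2 * ‖unitMetric d‖ + 1) * δ ^ 2) (fun z hz => ?_)
    (hu.norm_fderivWithin_sub_le_of_dist_le hx hℓ) N).mono (le_of_eq (by ring))
    (by positivity) le_rfl le_rfl
  calc ‖g z - (δ / κ) ^ 2 • unitMetric d - inducedMetric (𝔇 u 𝔹 z)‖
      = ‖(g z - inducedMetric (𝔇 u 𝔹 z)) - (δ / κ) ^ 2 • unitMetric d‖ := by rw [sub_right_comm]
    _ ≤ (‖unitMetric d‖ + 1) * δ ^ 2 + (δ / κ) ^ 2 * ‖unitMetric d‖ := by
        refine norm_sub_le_of_le (hu.norm_sub_inducedMetric_le hz) (le_of_eq ?_)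
        rw [norm_smul, Real.norm_of_nonneg (sq_nonneg _)]
    _ ≤ (‖unitMetric d‖ + 1) * δ ^ 2 + δ ^ 2 * ‖unitMetric d‖ := by gcongr
    _ = (2 * ‖unitMetric d‖ + 1) * δ ^ 2 := by ring

theorem exists_amplitude (hg : IsLipschitzMetric g) (N : ℕ) :
    ∃ C : ℝ, 0 ≤ C ∧ ∀ (δ μ κ ℓ : ℝ) (u : 𝔼 → 𝔽), 0 < δ → 2 ≤ κ → 0 < ℓ → ℓ ≤ 1 →
      μ * (2 * ℓ) ≤ 2 * metricTol d * δ → NearIsometry g δ μ u →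
      ∃ a : PairIdx (Fin d) → 𝔼 → ℝ, (∀ p, ∀ x ∈ 𝔹, JetBound 𝔹 (a p) (C * δ) (1 / ℓ) N x) ∧
        ∀ x ∈ 𝔹, ∑ p, a p x ^ 2 • dyad (primDir p) = smoothedDefect g u δ κ ℓ x := by
  obtain ⟨C, hC, hamp⟩ := exists_sum_sq_smul_dyad_eq (d := d) uniqueDiffOn_unitBall
    (mollConst 𝔼 N * (2 * ‖unitMetric d‖ + 1) + mollConst 𝔼 N + 2 ^ N * mollConst 𝔼 N ^ 2) N
  refine ⟨C, hC, fun δ μ κ ℓ u hδ hκ h0 h1 hℓ hu => ?_⟩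
  have hκ4 : 1 / κ ^ 2 ≤ 1 / 4 := by
    gcongr
    nlinarith
  have hκ0 : 0 < 1 / κ ^ 2 := by positivity
  have hℓ' : μ * (2 * ℓ) ≤ δ := hℓ.trans (by nlinarith [metricTol_le d])
  exact hamp (smoothedDefect g u δ κ ℓ) δ (1 / ℓ) (1 - 1 / κ ^ 2) hδ (by positivity)
    (by linarith) (by linarith) (fun x hx => smoothedDefect_comm hg u δ κ h0 h1 hx)
    (fun x hx => hu.norm_smoothedDefect_sub_le hg.continuousOn h0 h1 hℓ hx)
    fun x hx => hu.jetBound_smoothedDefect hg.continuousOn hδ.le (by linarith) h0 h1 hℓ' hx N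

theorem exists_corrugationBound_smoothing (hg : IsLipschitzMetric g) :
    ∃ C δ₀ : ℝ, 0 ≤ C ∧ 0 < δ₀ ∧ δ₀ ≤ 1 ∧ ∀ (δ μ κ Λ ℓ : ℝ) (u : 𝔼 → 𝔽), 0 < δ → δ ≤ δ₀ →
      2 ≤ κ → 1 ≤ Λ → 0 < ℓ → ℓ < 1 → μ * ℓ = metricTol d * δ → NearIsometry g δ μ u →
      ∃ v, CorrugationBound 𝔹 (smoothing ℓ u) v (smoothedDefect g u δ κ ℓ) C δ (1 / ℓ)
        (Λ ^ Fintype.card (PairIdx (Fin d)) * (1 / ℓ)) Λ 0 := by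
  set n := Fintype.card (PairIdx (Fin d))
  have hσ := metricTol_pos d
  obtain ⟨c, hc, hgc⟩ :=
    exists_mul_sq_le_apply_apply (isCompact_closedBall (0 : 𝔼) 1) hg.continuousOn hg.pos
  obtain ⟨b, hb⟩ := (isCompact_closedBall (0 : 𝔼) 1).exists_bound_of_continuousOn hg.continuousOn
  obtain ⟨Ca, hCa, hamp⟩ := exists_amplitude hg (n + 1)
  have hm := mollConst_nonneg (E := 𝔼) n
  set A : ℝ := Ca + mollConst 𝔼 n * metricTol d
  obtain ⟨C, δ₁, hC, hδ₁, hstep⟩ := exists_corrugation_sum (d := d) primDir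
    (isCompact_bilipSet (c / 4) (b + ‖unitMetric d‖ + 3))
    (fun _ => injective_of_mem_bilipSet (by positivity)) uniqueDiffOn_unitBall
    (A := A) (by positivity) Finset.univ 0
  simp only [zero_add, Finset.card_univ] at hstep
  refine ⟨C, min (min δ₁ 1) (c / (2 * (‖unitMetric d‖ + 1))), hC, by positivity,
    (min_le_left _ _).trans (min_le_right _ _), fun δ μ κ Λ ℓ u hδ hδ₀ hκ hΛ h0 h1 hℓ hu => ?_⟩
  simp only [le_min_iff, le_div_iff₀ (by positivity : 0 < 2 * (‖unitMetric d‖ + 1))] at hδ₀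
  obtain ⟨a, haj, ha⟩ := hamp δ μ κ ℓ u hδ hκ h0 h1.le (by linarith) hu
  obtain ⟨v, hv⟩ := hstep δ (1 / ℓ) Λ (smoothing ℓ u) a hδ.le hδ₀.1.1 (by positivity) hΛ
    (contDiffOn_smoothing h0 h1.le hu.contDiffOn.continuousOn)
    (fun x hx => hu.fderivWithin_smoothing_mem_bilipSet hgc hb hδ hδ₀.1.2 hδ₀.2 h0 h1
      (by nlinarith [metricTol_le d]) hx)
    (fun x hx => (jetBound_fderivWithin_fderivWithin_smoothing h0 h1
      (hu.contDiffOn.of_le ENat.LEInfty.out) hu.norm_fderivWithin_fderivWithin_le hx n).mono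
      (by
        rw [eq_div_of_mul_eq h0.ne' hℓ, mul_one_div, mul_div_assoc', ← mul_assoc]
        gcongr
        exact le_add_of_nonneg_left hCa) (by positivity) le_rfl le_rfl)
    (fun p _ x hx => (haj p x hx).mono (by
      gcongr
      exact le_add_of_nonneg_right (by positivity)) (by positivity) le_rfl le_rfl)
  exact ⟨v, hv.contDiffOn, hv.jetBound, hv.norm_fderivWithin_sub_le, hv.norm_sub_le,
    fun x hx => ha x hx ▸ hv.norm_inducedMetric_sub_le x hx⟩

theorem of_corrugationBound {L : NNReal} {C ℓ r R Λ : ℝ} {v : 𝔼 → 𝔽} {N : ℕ}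
    (hg : LipschitzOnWith L g 𝔹) (hu : NearIsometry g δ μ u) (h0 : 0 < ℓ) (h1 : ℓ < 1)
    (hv : CorrugationBound 𝔹 (smoothing ℓ u) v (smoothedDefect g u δ κ ℓ) C δ r R Λ N)
    (herr : L * (2 * ℓ) + C * (δ ^ 2 / Λ + δ ^ 4) ≤ metricTol d * (δ / κ) ^ 2) :
    NearIsometry g (δ / κ) (C * δ * R) v := by
  refine ⟨hv.contDiffOn, fun x hx => ?_, fun x hx => (hv.jetBound x hx).norm_le⟩
  let γ : 𝔼 → 𝔼 →L[ℝ] 𝔼 →L[ℝ] ℝ := fun z => g z - (δ / κ) ^ 2 • unitMetric d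
  have hcont : ContinuousOn γ 𝔹 := hg.continuousOn.sub continuousOn_const
  have hγ : ‖moll ℓ γ x - γ x‖ ≤ L * (2 * ℓ) :=
    norm_moll_sub_le h0 h1.le hcont hx fun z hz hzx => by
      rw [sub_sub_sub_cancel_right, ← dist_eq_norm]
      exact (hg.dist_le_mul z hz x hx).trans (by gcongr)
  have hsplit : γ x - inducedMetric (𝔇 v 𝔹 x) = -(moll ℓ γ x - γ x) -
      (inducedMetric (𝔇 v 𝔹 x) - inducedMetric (𝔇 (smoothing ℓ u) 𝔹 x) -
        smoothedDefect g u δ κ ℓ x) := by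
    rw [smoothedDefect, fderivWithin_smoothing h0 h1 (hu.contDiffOn.of_le ENat.LEInfty.out) hx]
    abel
  calc ‖γ x - inducedMetric (𝔇 v 𝔹 x)‖ ≤ L * (2 * ℓ) + C * (δ ^ 2 / Λ + δ ^ 4) := by
        rw [hsplit]
        exact norm_sub_le_of_le ((norm_neg _).trans_le hγ) (hv.norm_inducedMetric_sub_le x hx)
    _ ≤ metricTol d * (δ / κ) ^ 2 := herr

theorem mono (hu : NearIsometry g δ μ u) {μ' : ℝ} (hμ : μ ≤ μ') : NearIsometry g δ μ' u :=
  ⟨hu.contDiffOn, hu.norm_defect_le,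
    fun x hx => (hu.norm_fderivWithin_fderivWithin_le x hx).trans hμ⟩

end NearIsometry

theorem stage_error_le {C σ κ L δ μ : ℝ} (hC : 0 ≤ C) (hσ : 0 < σ) (hκ : 1 ≤ κ) (hδ : 0 < δ)
    (hδ1 : δ ≤ 1) (hμ : 0 < μ) (hL : 8 * κ ^ 2 * L ≤ μ * δ) (hδκ : δ * (4 * κ ^ 2 * (C + 1)) ≤ σ) :
    L * (2 * (σ * δ / μ)) + C * (δ ^ 2 / ((1 + 4 * C / σ) * κ ^ 2) + δ ^ 4) ≤
      σ * (δ / κ) ^ 2 := by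
  have hmetric : L * (2 * (σ * δ / μ)) ≤ σ * (δ / κ) ^ 2 / 4 := by
    calc L * (2 * (σ * δ / μ)) = σ * δ / (4 * κ ^ 2 * μ) * (8 * κ ^ 2 * L) := by field_simp; ring
      _ ≤ σ * δ / (4 * κ ^ 2 * μ) * (μ * δ) := by gcongr
      _ = σ * (δ / κ) ^ 2 / 4 := by field_simp
  have hfreq : C * (δ ^ 2 / ((1 + 4 * C / σ) * κ ^ 2)) ≤ σ * (δ / κ) ^ 2 / 4 := by
    calc C * (δ ^ 2 / ((1 + 4 * C / σ) * κ ^ 2))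
        = 4 * C / (σ + 4 * C) * (σ * (δ / κ) ^ 2 / 4) := by field_simp
      _ ≤ 1 * (σ * (δ / κ) ^ 2 / 4) := by
        gcongr
        exact div_le_one_of_le₀ (by linarith) (by positivity)
      _ = σ * (δ / κ) ^ 2 / 4 := one_mul _
  have hquartic : C * δ ^ 4 ≤ σ * (δ / κ) ^ 2 / 4 := by
    calc C * δ ^ 4 = δ ^ 2 / (4 * κ ^ 2) * (δ * (4 * κ ^ 2 * C) * δ) := by field_simp
      _ ≤ δ ^ 2 / (4 * κ ^ 2) * (δ * (4 * κ ^ 2 * (C + 1)) * 1) := by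
        gcongr
        exact le_add_of_nonneg_right zero_le_one
      _ ≤ δ ^ 2 / (4 * κ ^ 2) * (σ * 1) := by gcongr
      _ = σ * (δ / κ) ^ 2 / 4 := by field_simp
  have hpos : 0 ≤ σ * (δ / κ) ^ 2 / 4 := by positivity
  rw [mul_add]
  linarith

/-- Each corrugation has to be finer than the previous one by a factor of order `κ ^ 2`, whence the
exponent in the growth of the second derivatives. -/
theorem exists_stage {g : 𝔼 → 𝔼 →L[ℝ] 𝔼 →L[ℝ] ℝ} (hg : IsLipschitzMetric g) :
    ∃ C : ℝ, 1 ≤ C ∧ ∀ κ : ℝ, 2 ≤ κ → ∃ δ₁ M : ℝ, 0 < δ₁ ∧ 0 < M ∧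
      ∀ (δ μ : ℝ) (u : 𝔼 → 𝔽), 0 < δ → δ ≤ δ₁ → M ≤ μ * δ → NearIsometry g δ μ u →
        ∃ v, NearIsometry g (δ / κ) (C * κ ^ (2 * Fintype.card (PairIdx (Fin d))) * μ) v ∧
          (∀ x ∈ 𝔹, ‖𝔇 v 𝔹 x - 𝔇 u 𝔹 x‖ ≤ C * δ) ∧ ∀ x ∈ 𝔹, ‖v x - u x‖ ≤ C * δ := by
  set n := Fintype.card (PairIdx (Fin d))
  obtain ⟨L, hL⟩ := hg.exists_lipschitzOnWith
  obtain ⟨C, δ₀, hC, hδ₀, hδ₀1, hstep⟩ := NearIsometry.exists_corrugationBound_smoothing hg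
  set σ := metricTol d
  have hσ : 0 < σ := metricTol_pos d
  have hσ8 : σ ≤ 1 / 8 := metricTol_le d
  have hCn : 0 ≤ C / σ * (1 + 4 * C / σ) ^ n := by positivity
  refine ⟨1 + C + C / σ * (1 + 4 * C / σ) ^ n, by linarith, fun κ hκ =>
    ⟨min δ₀ (σ / (4 * κ ^ 2 * (C + 1))), 1 + 8 * κ ^ 2 * L, by positivity, by positivity,
      fun δ μ u hδ hδ₁ hM hu => ?_⟩⟩
  rw [le_min_iff, le_div_iff₀ (by positivity)] at hδ₁
  have hδ1 : δ ≤ 1 := hδ₁.1.trans hδ₀1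
  have hκL : 0 ≤ 8 * κ ^ 2 * (L : ℝ) := by positivity
  have hμ : 1 ≤ μ := by nlinarith
  set ℓ : ℝ := σ * δ / μ with hℓ
  have hμℓ : μ * ℓ = σ * δ := by rw [hℓ]; field_simp
  have h0 : 0 < ℓ := by positivity
  have h1 : ℓ < 1 := by
    rw [hℓ, div_lt_one (by positivity)]
    nlinarith
  obtain ⟨v, hv⟩ := hstep δ μ κ ((1 + 4 * C / σ) * κ ^ 2) ℓ u hδ hδ₁.1 hκ
    (one_le_mul_of_one_le_of_one_le (le_add_of_nonneg_right (by positivity))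
      (one_le_pow₀ (by linarith))) h0 h1 hμℓ hu
  have hCδ : C * δ + μ * (2 * ℓ) ≤ (1 + C + C / σ * (1 + 4 * C / σ) ^ n) * δ := by nlinarith
  have hu2 : ContDiffOn ℝ 2 u 𝔹 := hu.contDiffOn.of_le ENat.LEInfty.out
  refine ⟨v, (hu.of_corrugationBound hL h0 h1 hv (stage_error_le hC hσ (by linarith) hδ hδ1
    (by linarith) (by linarith) hδ₁.2)).mono ?_, fun x hx => ?_, fun x hx => ?_⟩
  · calc C * δ * (((1 + 4 * C / σ) * κ ^ 2) ^ n * (1 / ℓ))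
        = C / σ * (1 + 4 * C / σ) ^ n * κ ^ (2 * n) * μ := by
          rw [hℓ, mul_pow, ← pow_mul]
          field_simp
      _ ≤ (1 + C + C / σ * (1 + 4 * C / σ) ^ n) * κ ^ (2 * n) * μ := by
          gcongr
          linarith
  · exact (norm_sub_le_norm_sub_add_norm_sub _ (𝔇 (smoothing ℓ u) 𝔹 x) _).trans
      ((add_le_add (hv.norm_fderivWithin_sub_le x hx) (norm_fderivWithin_smoothing_sub_le h0 h1 hu2
        hu.norm_fderivWithin_fderivWithin_le hx)).trans hCδ)
  · have hvℓ : ‖v x - smoothing ℓ u x‖ ≤ C * δ := (hv.norm_sub_le x hx).trans <| by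
      rw [div_div_eq_mul_div, div_one]
      exact mul_le_of_le_one_right (by positivity) h1.le
    exact (norm_sub_le_norm_sub_add_norm_sub _ (smoothing ℓ u x) _).trans
      ((add_le_add hvℓ (norm_smoothing_sub_le h0 h1.le (hu2.of_le one_le_two)
        (fun z hz => norm_fderivWithin_smoothing_sub_le h0 h1 hu2
          hu.norm_fderivWithin_fderivWithin_le hz) hx)).trans hCδ)

end Stage

section Limit

open Filter Topology

variable {α A B ρ Θ : ℝ}

theorem le_rpow_one_sub_mul_rpow {t a b : ℝ} (ht : 0 ≤ t) (hα : 0 ≤ α) (hα1 : α ≤ 1)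
    (ha : t ≤ a) (hb : t ≤ b) : t ≤ a ^ (1 - α) * b ^ α := by
  have ha0 : 0 ≤ a := ht.trans ha
  calc t = t ^ (1 - α) * t ^ α := by
        rw [← Real.rpow_add' ht (by simp), sub_add_cancel, Real.rpow_one]
    _ ≤ a ^ (1 - α) * b ^ α := by gcongr

theorem mul_pow_rpow_mul_mul_pow_rpow {a b : ℝ} (ha : 0 ≤ a) (hb : 0 ≤ b) (hρ : 0 ≤ ρ)
    (hΘ : 0 ≤ Θ) (n : ℕ) :
    (a * ρ ^ n) ^ (1 - α) * (b * Θ ^ n) ^ α = a ^ (1 - α) * b ^ α * (ρ ^ (1 - α) * Θ ^ α) ^ n := by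
  rw [Real.mul_rpow ha (by positivity), Real.mul_rpow hb (by positivity), mul_pow,
    ← Real.rpow_pow_comm hρ, ← Real.rpow_pow_comm hΘ]
  ring

-- The increments of `f n x - f n y` are bounded both by `ρ ^ n` and by `Θ ^ n * dist x y`;
-- interpolating makes them `dist x y ^ α` times a summable geometric sequence.
theorem exists_holder_of_geometric {X G : Type*} [PseudoMetricSpace X] [NormedAddCommGroup G]
    {s : Set X} (hs : Bornology.IsBounded s) {f : ℕ → X → G} {f' : X → G} (hA : 0 ≤ A)
    (hB : 0 ≤ B) (hρ : 0 ≤ ρ) (hΘ : 0 ≤ Θ) (hα : 0 ≤ α) (hα1 : α ≤ 1)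
    (hτ : ρ ^ (1 - α) * Θ ^ α < 1) (hf : ∀ n, ∀ x ∈ s, ‖f (n + 1) x - f n x‖ ≤ A * ρ ^ n)
    (hLip : ∀ n, ∀ x ∈ s, ∀ y ∈ s, ‖f n x - f n y‖ ≤ B * Θ ^ n * dist x y)
    (hlim : ∀ x ∈ s, Tendsto (fun n => f n x) atTop (𝓝 (f' x))) :
    ∃ C : ℝ, ∀ x ∈ s, ∀ y ∈ s, ‖f' x - f' y‖ ≤ C * dist x y ^ α := by
  obtain ⟨D, hD⟩ := Metric.isBounded_iff.1 hs
  let C₁ : ℝ := (2 * A) ^ (1 - α) * (B * (1 + Θ)) ^ α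
  refine ⟨C₁ / (1 - ρ ^ (1 - α) * Θ ^ α) + B * D ^ (1 - α), fun x hx y hy => ?_⟩
  have hincr : ∀ n, dist (f n x - f n y) (f (n + 1) x - f (n + 1) y) ≤
      C₁ * dist x y ^ α * (ρ ^ (1 - α) * Θ ^ α) ^ n := fun n => by
    have hsmall : dist (f n x - f n y) (f (n + 1) x - f (n + 1) y) ≤ 2 * A * ρ ^ n := by
      rw [dist_comm, dist_eq_norm, sub_sub_sub_comm]
      exact (norm_sub_le_of_le (hf n x hx) (hf n y hy)).trans_eq (by ring)
    have hlarge : dist (f n x - f n y) (f (n + 1) x - f (n + 1) y) ≤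
        B * (1 + Θ) * dist x y * Θ ^ n := by
      rw [dist_eq_norm]
      exact (norm_sub_le_of_le (hLip n x hx y hy) (hLip (n + 1) x hx y hy)).trans_eq (by ring)
    refine (le_rpow_one_sub_mul_rpow dist_nonneg hα hα1 hsmall hlarge).trans_eq ?_
    rw [mul_pow_rpow_mul_mul_pow_rpow (by positivity) (by positivity) hρ hΘ,
      Real.mul_rpow (by positivity) dist_nonneg]
    ring
  have hsum : ‖f 0 x - f 0 y - (f' x - f' y)‖ ≤
      C₁ * dist x y ^ α / (1 - ρ ^ (1 - α) * Θ ^ α) := by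
    rw [← dist_eq_norm]
    exact dist_le_of_le_geometric_of_tendsto₀ _ _ hτ hincr ((hlim x hx).sub (hlim y hy))
  have hfirst : ‖f 0 x - f 0 y‖ ≤ B * (D ^ (1 - α) * dist x y ^ α) :=
    (hLip 0 x hx y hy).trans <| by
      rw [pow_zero, mul_one]
      gcongr
      exact le_rpow_one_sub_mul_rpow dist_nonneg hα hα1 (hD hx hy) le_rfl
  calc ‖f' x - f' y‖ ≤ C₁ * dist x y ^ α / (1 - ρ ^ (1 - α) * Θ ^ α) +
        B * (D ^ (1 - α) * dist x y ^ α) := by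
        rw [← sub_sub_cancel (f 0 x - f 0 y) (f' x - f' y), sub_eq_neg_add]
        exact norm_add_le_of_le ((norm_neg _).trans_le hsum) hfirst
    _ = (C₁ / (1 - ρ ^ (1 - α) * Θ ^ α) + B * D ^ (1 - α)) * dist x y ^ α := by ring

theorem continuousOn_of_holder {X G : Type*} [PseudoMetricSpace X] [NormedAddCommGroup G]
    {s : Set X} {f : X → G} {C : ℝ} (hα : 0 < α)
    (hf : ∀ x ∈ s, ∀ y ∈ s, ‖f x - f y‖ ≤ C * dist x y ^ α) : ContinuousOn f s := fun x hx => by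
  have hlim : Tendsto (fun y => C * dist y x ^ α) (𝓝[s] x) (𝓝 0) := by
    have hcont : Continuous fun y : X => C * dist y x ^ α := by fun_prop (disch := exact hα.le)
    simpa [hα.ne'] using (hcont.tendsto x).mono_left nhdsWithin_le_nhds
  rw [ContinuousWithinAt, tendsto_iff_norm_sub_tendsto_zero]
  refine squeeze_zero' (Eventually.of_forall fun _ => norm_nonneg _) ?_ hlim
  filter_upwards [self_mem_nhdsWithin] with y hy
  exact hf y hy x hx

theorem exists_tendsto_of_norm_sub_le_geometric {X G : Type*} [NormedAddCommGroup G]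
    [CompleteSpace G] {s : Set X} {u : ℕ → X → G}
    (hρ1 : ρ < 1) (hu : ∀ n, ∀ x ∈ s, ‖u (n + 1) x - u n x‖ ≤ A * ρ ^ n) :
    ∃ v : X → G, ∀ x ∈ s, Tendsto (fun n => u n x) atTop (𝓝 (v x)) ∧
      ∀ n, ‖u n x - v x‖ ≤ A * ρ ^ n / (1 - ρ) := by
  have hdist : ∀ x ∈ s, ∀ n, dist (u n x) (u (n + 1) x) ≤ A * ρ ^ n := fun x hx n => by
    rw [dist_comm, dist_eq_norm]
    exact hu n x hx
  choose! v hv using fun x (hx : x ∈ s) => cauchySeq_tendsto_of_complete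
    (cauchySeq_of_le_geometric ρ A hρ1 (hdist x hx))
  refine ⟨v, fun x hx => ⟨hv x hx, fun n => ?_⟩⟩
  rw [← dist_eq_norm]
  exact dist_le_of_le_geometric_of_tendsto ρ A hρ1 (hdist x hx) (hv x hx) n

variable {E F : Type*} [NormedAddCommGroup E] [NormedSpace ℝ E] [NormedAddCommGroup F]
  [NormedSpace ℝ F] {s : Set E}

theorem hasFDerivWithinAt_of_tendstoUniformlyOn {ι : Type*} {l : Filter ι} [l.NeBot]
    {u : ι → E → F} {u' : ι → E → E →L[ℝ] F} {v : E → F} {v' : E → E →L[ℝ] F}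
    (hs : Convex ℝ s) (hu : ∀ i, ∀ x ∈ s, HasFDerivWithinAt (u i) (u' i x) s x)
    (hv : ∀ x ∈ s, Tendsto (fun i => u i x) l (𝓝 (v x))) (hv' : TendstoUniformlyOn u' v' l s)
    {x : E} (hx : x ∈ s) : HasFDerivWithinAt v (v' x) s x := by
  rw [hasFDerivWithinAt_iff_isLittleO, Asymptotics.isLittleO_iff]
  intro ε hε
  have hclose := Metric.tendstoUniformlyOn_iff.1 hv' (ε / 4) (by positivity)
  obtain ⟨i, hi⟩ := hclose.exists
  have hmean : ∀ y ∈ s, ‖v y - u i y - (v x - u i x)‖ ≤ ε / 2 * ‖y - x‖ := fun y hy => by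
    refine le_of_tendsto (((hv y hy).sub_const _).sub ((hv x hx).sub_const _)).norm ?_
    filter_upwards [hclose] with j hj
    refine hs.norm_image_sub_le_of_norm_hasFDerivWithin_le
      (f := fun z => u j z - u i z) (fun z hz => (hu j z hz).sub (hu i z hz)) (fun z hz => ?_) hx hy
    rw [← dist_eq_norm]
    linarith [dist_triangle_left (u' j z) (u' i z) (v' z), hj z hz, hi z hz]
  have hlinear := hu i x hx
  rw [hasFDerivWithinAt_iff_isLittleO, Asymptotics.isLittleO_iff] at hlinear
  filter_upwards [hlinear (show (0 : ℝ) < ε / 4 by positivity), self_mem_nhdsWithin] with y hy hys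
  have hsplit : v y - v x - v' x (y - x) = (v y - u i y - (v x - u i x)) +
      (u i y - u i x - u' i x (y - x)) - (v' x - u' i x) (y - x) := by
    simp only [_root_.sub_apply]
    abel
  calc ‖v y - v x - v' x (y - x)‖
      ≤ ε / 2 * ‖y - x‖ + ε / 4 * ‖y - x‖ + ε / 4 * ‖y - x‖ := by
        rw [hsplit]
        refine norm_sub_le_of_le (norm_add_le_of_le (hmean y hys) hy) ?_
        exact (v' x - u' i x).le_of_opNorm_le ((dist_eq_norm _ _).symm.trans_le (hi x hx).le) _
    _ = ε * ‖y - x‖ := by ring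

theorem exists_contDiffOn_one_holder_limit [CompleteSpace F] (hs : Convex ℝ s)
    (hs' : UniqueDiffOn ℝ s) (hbdd : Bornology.IsBounded s) {u : ℕ → E → F}
    (hu : ∀ n, ContDiffOn ℝ 2 (u n) s) (hA : 0 ≤ A) (hB : 0 ≤ B) (hρ : 0 ≤ ρ) (hρ1 : ρ < 1)
    (hΘ : 0 ≤ Θ) (hα : 0 < α) (hα1 : α ≤ 1) (hτ : ρ ^ (1 - α) * Θ ^ α < 1)
    (h0 : ∀ n, ∀ x ∈ s, ‖u (n + 1) x - u n x‖ ≤ A * ρ ^ n)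
    (hD : ∀ n, ∀ x ∈ s, ‖fderivWithin ℝ (u (n + 1)) s x - fderivWithin ℝ (u n) s x‖ ≤ A * ρ ^ n)
    (hDD : ∀ n, ∀ x ∈ s, ‖fderivWithin ℝ (fderivWithin ℝ (u n) s) s x‖ ≤ B * Θ ^ n) :
    ∃ v : E → F, ContDiffOn ℝ 1 v s ∧
      (∃ C : ℝ, ∀ x ∈ s, ∀ y ∈ s,
        ‖fderivWithin ℝ v s x - fderivWithin ℝ v s y‖ ≤ C * dist x y ^ α) ∧
      (∀ x ∈ s, Tendsto (fun n => fderivWithin ℝ (u n) s x) atTop (𝓝 (fderivWithin ℝ v s x))) ∧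
      ∀ x ∈ s, ‖v x - u 0 x‖ ≤ A / (1 - ρ) := by
  obtain ⟨v, hv⟩ := exists_tendsto_of_norm_sub_le_geometric hρ1 h0
  obtain ⟨v', hv'⟩ := exists_tendsto_of_norm_sub_le_geometric
    (u := fun n => fderivWithin ℝ (u n) s) hρ1 hD
  have hpow : Tendsto (fun n => A * ρ ^ n / (1 - ρ)) atTop (𝓝 0) := by
    simpa using ((tendsto_pow_atTop_nhds_zero_of_lt_one hρ hρ1).const_mul A).div_const (1 - ρ)
  have hunif : TendstoUniformlyOn (fun n => fderivWithin ℝ (u n) s) v' atTop s := by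
    refine Metric.tendstoUniformlyOn_iff.2 fun ε hε => ?_
    filter_upwards [hpow.eventually (gt_mem_nhds hε)] with n hn x hx
    rw [dist_comm, dist_eq_norm]
    exact ((hv' x hx).2 n).trans_lt hn
  have hderiv : ∀ x ∈ s, HasFDerivWithinAt v (v' x) s x := fun x hx =>
    hasFDerivWithinAt_of_tendstoUniformlyOn hs
      (fun n y hy => ((hu n).differentiableOn two_ne_zero y hy).hasFDerivWithinAt)
      (fun y hy => (hv y hy).1) hunif hx
  have heq : ∀ x ∈ s, fderivWithin ℝ v s x = v' x := fun x hx =>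
    (hderiv x hx).fderivWithin (hs' x hx)
  obtain ⟨C, hC⟩ := exists_holder_of_geometric (f := fun n => fderivWithin ℝ (u n) s) hbdd hA hB hρ
    hΘ hα.le hα1 hτ hD (fun n x hx y hy => by
      rw [dist_eq_norm]
      exact hs.norm_image_sub_le_of_norm_fderivWithin_le
        (((hu n).fderivWithin hs' (m := 1) one_add_one_eq_two.le).differentiableOn one_ne_zero)
        (hDD n) hy hx)
    fun x hx => (hv' x hx).1
  refine ⟨v, ?_, ⟨C, fun x hx y hy => by rw [heq x hx, heq y hy]; exact hC x hx y hy⟩,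
    fun x hx => by rw [heq x hx]; exact (hv' x hx).1, fun x hx => ?_⟩
  · simpa using contDiffOn_succ_of_fderivWithin (n := 0)
      (fun x hx => (hderiv x hx).differentiableWithinAt) (by simp)
      (contDiffOn_zero.2 ((continuousOn_of_holder hα hC).congr heq))
  · rw [norm_sub_rev]
    simpa using (hv x hx).2 0

end Limit

section Iteration

open Filter Topology

theorem exists_growth_factor {C α : ℝ} (hC : 0 ≤ C) {n : ℕ} (hα : α * (1 + n) < 1) :
    ∃ κ : ℝ, 2 ≤ κ ∧ κ⁻¹ ^ (1 - α) * (C * κ ^ n) ^ α < 1 := by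
  have hlim : Tendsto (fun κ : ℝ => C ^ α * κ ^ (-(1 - α * (1 + n)))) atTop (𝓝 0) := by
    simpa using (tendsto_rpow_neg_atTop (sub_pos.2 hα)).const_mul (C ^ α)
  obtain ⟨κ, hκ, hκ2⟩ :=
    ((hlim.eventually (gt_mem_nhds one_pos)).and (eventually_ge_atTop 2)).exists
  refine ⟨κ, hκ2, lt_of_eq_of_lt ?_ hκ⟩
  have hκ0 : 0 < κ := by linarith
  rw [Real.mul_rpow hC (by positivity), ← Real.rpow_neg_one, ← Real.rpow_natCast,
    ← Real.rpow_mul hκ0.le, ← Real.rpow_mul hκ0.le, mul_left_comm, ← Real.rpow_add hκ0]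
  congr 2
  ring

variable {g : EuclideanSpace ℝ (Fin d) →
    EuclideanSpace ℝ (Fin d) →L[ℝ] EuclideanSpace ℝ (Fin d) →L[ℝ] ℝ}

theorem exists_norm_fderivWithin_fderivWithin_le {u : 𝔼 → 𝔽} (hu : ContDiffOn ℝ ∞ u 𝔹) :
    ∃ μ : ℝ, ∀ x ∈ 𝔹, ‖𝔇 (𝔇 u 𝔹) 𝔹 x‖ ≤ μ :=
  (isCompact_closedBall (0 : 𝔼) 1).exists_bound_of_continuousOn
    ((hu.fderivWithin uniqueDiffOn_unitBall (m := ∞) le_rfl).fderivWithin uniqueDiffOn_unitBall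
      (m := ∞) le_rfl).continuousOn

theorem exists_seq_nearIsometry (hg : IsLipschitzMetric g) (hd : 0 < d) :
    ∃ C : ℝ, 1 ≤ C ∧ ∀ κ, 2 ≤ κ → ∃ δ₁ M : ℝ, 0 < δ₁ ∧ 0 < M ∧ ∀ δ μ u, 0 < δ → δ ≤ δ₁ →
      M ≤ μ * δ → NearIsometry g δ μ u → ∃ w : ℕ → 𝔼 → 𝔽, w 0 = u ∧
        (∀ n, NearIsometry g (δ * κ⁻¹ ^ n)
          (μ * (C * κ ^ (2 * Fintype.card (PairIdx (Fin d)))) ^ n) (w n)) ∧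
        (∀ n, ∀ x ∈ 𝔹, ‖w (n + 1) x - w n x‖ ≤ C * δ * κ⁻¹ ^ n) ∧
        ∀ n, ∀ x ∈ 𝔹, ‖𝔇 (w (n + 1)) 𝔹 x - 𝔇 (w n) 𝔹 x‖ ≤ C * δ * κ⁻¹ ^ n := by
  obtain ⟨C, hC, hstage⟩ := exists_stage hg
  refine ⟨C, hC, fun κ hκ => ?_⟩
  obtain ⟨δ₁, M, hδ₁, hM, hstep⟩ := hstage κ hκ
  refine ⟨δ₁, M, hδ₁, hM, fun δ μ u hδ hδ1 hμ hu => ?_⟩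
  set Θ : ℝ := C * κ ^ (2 * Fintype.card (PairIdx (Fin d)))
  have hΘκ : 1 ≤ Θ * κ⁻¹ := by
    have : Nonempty (PairIdx (Fin d)) := ⟨⟨(⟨0, hd⟩, ⟨0, hd⟩), le_rfl⟩⟩
    rw [← div_eq_mul_inv, one_le_div (by positivity)]
    exact (le_self_pow₀ (by linarith) (by positivity)).trans
      (le_mul_of_one_le_left (by positivity) hC)
  have hnext : ∀ n, ∀ w : {w // NearIsometry g (δ * κ⁻¹ ^ n) (μ * Θ ^ n) w},
      ∃ w' : {w' // NearIsometry g (δ * κ⁻¹ ^ (n + 1)) (μ * Θ ^ (n + 1)) w'},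
        (∀ x ∈ 𝔹, ‖𝔇 w'.1 𝔹 x - 𝔇 w.1 𝔹 x‖ ≤ C * δ * κ⁻¹ ^ n) ∧
        ∀ x ∈ 𝔹, ‖w'.1 x - w.1 x‖ ≤ C * δ * κ⁻¹ ^ n := by
    rintro n ⟨w, hw⟩
    have hle : δ * κ⁻¹ ^ n ≤ δ₁ := (mul_le_of_le_one_right hδ.le
      (pow_le_one₀ (by positivity) (inv_le_one_of_one_le₀ (by linarith)))).trans hδ1
    have hμn : M ≤ μ * Θ ^ n * (δ * κ⁻¹ ^ n) := calc
      M ≤ μ * δ * (Θ * κ⁻¹) ^ n :=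
        hμ.trans (le_mul_of_one_le_right (hM.le.trans hμ) (one_le_pow₀ hΘκ))
      _ = μ * Θ ^ n * (δ * κ⁻¹ ^ n) := by rw [mul_pow]; ring
    obtain ⟨v, hv, hv1, hv0⟩ := hstep _ _ w (by positivity) hle hμn hw
    rw [show δ * κ⁻¹ ^ n / κ = δ * κ⁻¹ ^ (n + 1) by ring,
      show Θ * (μ * Θ ^ n) = μ * Θ ^ (n + 1) by ring] at hv
    rw [← mul_assoc] at hv1 hv0
    exact ⟨⟨v, hv⟩, hv1, hv0⟩
  choose next hnext1 hnext0 using hnext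
  let w : (n : ℕ) → {w // NearIsometry g (δ * κ⁻¹ ^ n) (μ * Θ ^ n) w} := fun n =>
    Nat.rec ⟨u, by simpa using hu⟩ next n
  exact ⟨fun n => (w n).1, rfl, fun n => (w n).2, fun n => hnext0 n (w n),
    fun n => hnext1 n (w n)⟩

theorem inducedMetric_eq_of_tendsto {E F : Type*} [NormedAddCommGroup E] [InnerProductSpace ℝ E]
    [NormedAddCommGroup F] [InnerProductSpace ℝ F] {G H : E →L[ℝ] E →L[ℝ] ℝ} {A : E →L[ℝ] F}
    {u : ℕ → E →L[ℝ] F} (hu : Tendsto u atTop (𝓝 A)) {δ : ℕ → ℝ} (hδ : Tendsto δ atTop (𝓝 0))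
    {c : ℝ} (h : ∀ n, ‖G - δ n ^ 2 • H - inducedMetric (u n)‖ ≤ c * δ n ^ 2) :
    inducedMetric A = G := by
  have hδ2 : Tendsto (fun n => δ n ^ 2) atTop (𝓝 0) := by simpa using hδ.pow 2
  have hlim : Tendsto (fun n => ‖G - δ n ^ 2 • H - inducedMetric (u n)‖) atTop
      (𝓝 ‖G - (0 : ℝ) • H - inducedMetric A‖) :=
    ((tendsto_const_nhds.sub (hδ2.smul_const H)).sub
      ((continuous_inducedMetric.tendsto A).comp hu)).norm
  have hle := le_of_tendsto_of_tendsto' hlim (hδ2.const_mul c) h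
  rw [mul_zero, zero_smul, sub_zero, norm_le_zero_iff, sub_eq_zero] at hle
  exact hle.symm

theorem exists_isometry_near (hg : IsLipschitzMetric g) (hd : 0 < d) {α : ℝ} (hα : 0 < α)
    (hαd : α * (1 + (2 * Fintype.card (PairIdx (Fin d)) : ℕ)) < 1) :
    ∃ C δ₁ : ℝ, 0 < C ∧ 0 < δ₁ ∧ ∀ δ u, 0 < δ → δ ≤ δ₁ → ContDiffOn ℝ ∞ u 𝔹 →
      (∀ x ∈ 𝔹, ‖g x - δ ^ 2 • unitMetric d - inducedMetric (𝔇 u 𝔹 x)‖ ≤ metricTol d * δ ^ 2) →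
      ∃ v : 𝔼 → 𝔽, ContDiffOn ℝ 1 v 𝔹 ∧
        (∃ C : ℝ, ∀ x ∈ 𝔹, ∀ y ∈ 𝔹, ‖𝔇 v 𝔹 x - 𝔇 v 𝔹 y‖ ≤ C * dist x y ^ α) ∧
        (∀ x ∈ 𝔹, inducedMetric (𝔇 v 𝔹 x) = g x) ∧ ∀ x ∈ 𝔹, ‖v x - u x‖ ≤ C * δ := by
  obtain ⟨C, hC, hseq⟩ := exists_seq_nearIsometry hg hd
  obtain ⟨κ, hκ, hτ⟩ := exists_growth_factor (zero_le_one.trans hC) hαd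
  obtain ⟨δ₁, M, hδ₁, hM, hseq⟩ := hseq κ hκ
  have hκ1 : κ⁻¹ < 1 := inv_lt_one_of_one_lt₀ (by linarith)
  have hα1 : α ≤ 1 := (le_mul_of_one_le_right hα.le (by simp)).trans hαd.le
  refine ⟨C / (1 - κ⁻¹), δ₁, div_pos (by linarith) (by linarith), hδ₁, fun δ u hδ hδ1 hu hdef => ?_⟩
  obtain ⟨μ, hμ⟩ := exists_norm_fderivWithin_fderivWithin_le hu
  have hμM : M ≤ max μ (M / δ) * δ := (div_le_iff₀ hδ).1 (le_max_right _ _)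
  have hμ0 : 0 ≤ max μ (M / δ) := le_max_of_le_right (by positivity)
  obtain ⟨w, rfl, hw, hw0, hw1⟩ := hseq δ (max μ (M / δ)) u hδ hδ1 hμM
    ⟨hu, hdef, fun x hx => (hμ x hx).trans (le_max_left _ _)⟩
  obtain ⟨v, hv, hvα, hlim, hv0⟩ := exists_contDiffOn_one_holder_limit
    (convex_closedBall (0 : 𝔼) 1) uniqueDiffOn_unitBall isBounded_closedBall
    (fun n => (hw n).contDiffOn.of_le ENat.LEInfty.out) (by positivity) hμ0 (by positivity) hκ1
    (by positivity) hα hα1 hτ hw0 hw1 fun n => (hw n).norm_fderivWithin_fderivWithin_le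
  refine ⟨v, hv, hvα, fun x hx => inducedMetric_eq_of_tendsto (hlim x hx) ?_
    fun n => (hw n).norm_defect_le x hx, fun x hx => (hv0 x hx).trans_eq (by ring)⟩
  simpa using (tendsto_pow_atTop_nhds_zero_of_lt_one (by positivity) hκ1).const_mul δ

end Iteration

section PrimitiveDecomposition

universe u

variable {E : Type u} [NormedAddCommGroup E] [InnerProductSpace ℝ E] [FiniteDimensional ℝ E]

theorem exists_sum_dyad_eq {H : E →L[ℝ] E →L[ℝ] ℝ} (hcomm : ∀ w w', H w w' = H w' w)
    (hpos : ∀ w, 0 ≤ H w w) :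
    ∃ ν : Fin (Module.finrank ℝ E) → E, ∑ i, dyad (ν i) = H := by
  have : CompleteSpace E := FiniteDimensional.complete ℝ E
  let T : E →L[ℝ] E := InnerProductSpace.continuousLinearMapOfBilin H
  have hT (w w' : E) : ⟪T w, w'⟫ = H w w' :=
    InnerProductSpace.continuousLinearMapOfBilin_apply H w w'
  have hsymm : (T : E →ₗ[ℝ] E).IsSymmetric := fun w w' =>
    (hT w w').trans ((hcomm w w').trans (hT w' w).symm) |>.trans (real_inner_comm _ _).symm
  set e := hsymm.eigenvectorBasis rfl
  set lam := hsymm.eigenvalues rfl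
  have hTe (i) : T (e i) = lam i • e i := hsymm.apply_eigenvectorBasis rfl i
  have hlam (i) : 0 ≤ lam i := by
    have h := hpos (e i)
    rwa [← hT, hTe, real_inner_smul_left, real_inner_self_eq_norm_sq, e.norm_eq_one, one_pow,
      mul_one] at h
  refine ⟨fun i => √(lam i) • e i, ?_⟩
  ext w w'
  calc (∑ i, dyad (√(lam i) • e i)) w w' = ∑ i, ⟪T w, e i⟫ * ⟪e i, w'⟫ := by
        simp only [_root_.sum_apply, dyad_apply, real_inner_smul_left]
        refine Finset.sum_congr rfl fun i _ => ?_
        rw [hT, hcomm, ← hT, hTe, real_inner_smul_left, mul_mul_mul_comm,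
          Real.mul_self_sqrt (hlam i), mul_assoc]
    _ = H w w' := by rw [e.sum_inner_mul_inner, hT]

variable {K : Set E}

theorem exists_sum_sq_eq_one (hK : IsCompact K) {ρ : ℝ} (hρ : 0 < ρ) :
    ∃ (t : Finset E) (b : E → E → ℝ), (∀ c ∈ t, c ∈ K) ∧ (∀ c, ContDiffOn ℝ ∞ (b c) K) ∧
      (∀ x ∈ K, ∑ c ∈ t, b c x ^ 2 = 1) ∧ ∀ c x, ρ ≤ dist x c → b c x = 0 := by
  obtain ⟨t, ht, hcover⟩ := hK.elim_nhds_subcover (fun x => ball x (ρ / 2))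
    fun x _ => ball_mem_nhds x (by positivity)
  let f : ∀ c : E, ContDiffBump c := fun c => ⟨ρ / 2, ρ, by positivity, by linarith⟩
  have hpos : ∀ x ∈ K, 0 < ∑ c ∈ t, f c x ^ 2 := fun x hx => by
    obtain ⟨c, hct, hxc⟩ := mem_iUnion₂.1 (hcover hx)
    refine Finset.sum_pos' (fun c _ => sq_nonneg _) ⟨c, hct, ?_⟩
    rw [(f c).one_of_mem_closedBall (ball_subset_closedBall hxc)]
    positivity
  have hsmooth : ContDiff ℝ ∞ fun x => ∑ c ∈ t, f c x ^ 2 :=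
    ContDiff.sum fun c _ => (f c).contDiff.pow 2
  refine ⟨t, fun c x => f c x / √(∑ c ∈ t, f c x ^ 2), ht, fun c => ?_, fun x hx => ?_,
    fun c x hxc => by simp only [(f c).zero_of_le_dist hxc, zero_div]⟩
  · exact (f c).contDiff.contDiffOn.div (hsmooth.contDiffOn.sqrt fun x hx => (hpos x hx).ne')
      fun x hx => (Real.sqrt_pos.2 (hpos x hx)).ne'
  · simp only [div_pow, Real.sq_sqrt (hpos x hx).le]
    rw [← Finset.sum_div, div_self (hpos x hx).ne']

theorem norm_sub_sum_smul_le {ι V : Type*} [NormedAddCommGroup V] [NormedSpace ℝ V] {t : Finset ι}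
    {a : ι → ℝ} (ha : ∀ i ∈ t, 0 ≤ a i) (h1 : ∑ i ∈ t, a i = 1) {y : V} {z : ι → V} {η : ℝ}
    (h : ∀ i ∈ t, a i ≠ 0 → ‖y - z i‖ ≤ η) : ‖y - ∑ i ∈ t, a i • z i‖ ≤ η := by
  calc ‖y - ∑ i ∈ t, a i • z i‖ = ‖∑ i ∈ t, a i • (y - z i)‖ := by
        simp only [smul_sub, Finset.sum_sub_distrib, ← Finset.sum_smul, h1, one_smul]
    _ ≤ ∑ i ∈ t, a i * η := norm_sum_le_of_le _ fun i hi => by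
        rw [norm_smul, Real.norm_of_nonneg (ha i hi)]
        rcases eq_or_ne (a i) 0 with h0 | h0
        · simp [h0]
        · exact mul_le_mul_of_nonneg_left (h i hi h0) (ha i hi)
    _ = η := by rw [← Finset.sum_mul, h1, one_mul]

theorem exists_norm_sub_sum_sq_smul_dyad_le (hK : IsCompact K) {h : E → E →L[ℝ] E →L[ℝ] ℝ}
    (hcont : ContinuousOn h K) (hcomm : ∀ x ∈ K, ∀ w w', h x w w' = h x w' w)
    (hpos : ∀ x ∈ K, ∀ w, 0 ≤ h x w w) {η : ℝ} (hη : 0 < η) :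
    ∃ (ι : Type u) (_ : Fintype ι) (ν : ι → E) (b : ι → E → ℝ),
      (∀ i, ContDiffOn ℝ ∞ (b i) K) ∧ ∀ x ∈ K, ‖h x - ∑ i, b i x ^ 2 • dyad (ν i)‖ ≤ η := by
  obtain ⟨ρ, hρ, hunif⟩ := Metric.uniformContinuousOn_iff_le.1
    (hK.uniformContinuousOn_of_continuous hcont) η hη
  obtain ⟨t, b, ht, hb, hb1, hb0⟩ := exists_sum_sq_eq_one hK hρ
  choose! ν hν using fun x hx => exists_sum_dyad_eq (hcomm x hx) (hpos x hx)
  refine ⟨t × Fin (Module.finrank ℝ E), inferInstance, fun p => ν p.1 p.2, fun p => b p.1,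
    fun p => hb _, fun x hx => ?_⟩
  have hsum : ∑ p : t × Fin (Module.finrank ℝ E), b p.1 x ^ 2 • dyad (ν p.1 p.2) =
      ∑ c ∈ t, b c x ^ 2 • h c := by
    rw [Fintype.sum_prod_type, ← Finset.sum_coe_sort t]
    exact Finset.sum_congr rfl fun c _ => by rw [← hν c (ht c c.2), Finset.smul_sum]
  rw [hsum]
  refine norm_sub_sum_smul_le (fun c _ => sq_nonneg _) (hb1 x hx) fun c hc hbc => ?_
  rw [← dist_eq_norm]
  exact hunif x hx c (ht c hc) (le_of_not_ge fun hxc => hbc (by rw [hb0 c x hxc]; simp))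

end PrimitiveDecomposition

section ApproxIsometric

section Iterate

variable {E F : Type*} [NormedAddCommGroup E] [NormedSpace ℝ E] [NormedAddCommGroup F]
  [InnerProductSpace ℝ F]

/-- `f` is a uniform limit on `s` of smooth maps whose induced metrics tend uniformly to `γ`. The
map `f` itself need not be differentiable, let alone isometric. -/
def ApproxIsometric (s : Set E) (γ : E → E →L[ℝ] E →L[ℝ] ℝ) (f : E → F) : Prop :=
  ∀ η > 0, ∃ v, ContDiffOn ℝ ∞ v s ∧ (∀ x ∈ s, ‖v x - f x‖ ≤ η) ∧
    ∀ x ∈ s, ‖γ x - inducedMetric (𝔇 v s x)‖ ≤ η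

theorem ApproxIsometric.of_forall_exists {s : Set E} {γ : E → E →L[ℝ] E →L[ℝ] ℝ} {f : E → F}
    (h : ∀ η > 0, ∃ f', (∀ x ∈ s, ‖f' x - f x‖ ≤ η) ∧ ApproxIsometric s γ f') :
    ApproxIsometric s γ f := fun η hη => by
  obtain ⟨f', hf', hγ⟩ := h (η / 2) (by positivity)
  obtain ⟨v, hv, hvf, hvγ⟩ := hγ (η / 2) (by positivity)
  refine ⟨v, hv, fun x hx => ?_, fun x hx => (hvγ x hx).trans (by linarith)⟩
  linarith [norm_sub_le_norm_sub_add_norm_sub (v x) (f' x) (f x), hvf x hx, hf' x hx]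

/-- Errors add up linearly along the iteration, so steps with a superlinear error can be combined
to a step of unit size. -/
theorem exists_forall_norm_inducedMetric_sub_le {s : Set E} {w : E → F} {K : Set (E →L[ℝ] F)}
    {H : E → E →L[ℝ] E →L[ℝ] ℝ} {η e : ℝ} {M : ℕ} (hw : ContDiffOn ℝ ∞ w s)
    (hstep : ∀ u, ContDiffOn ℝ ∞ u s → MapsTo (𝔇 u s) s K → ∃ v, ContDiffOn ℝ ∞ v s ∧
      (∀ x ∈ s, ‖v x - u x‖ ≤ η) ∧
      ∀ x ∈ s, ‖inducedMetric (𝔇 v s x) - inducedMetric (𝔇 u s x) - H x‖ ≤ e)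
    (hK : ∀ k ≤ M, ∀ x ∈ s, ∀ A,
      ‖inducedMetric (𝔇 w s x) + (k : ℝ) • H x - inducedMetric A‖ ≤ k * e → A ∈ K) :
    ∀ k ≤ M, ∃ v, ContDiffOn ℝ ∞ v s ∧ (∀ x ∈ s, ‖v x - w x‖ ≤ k * η) ∧
      ∀ x ∈ s, ‖inducedMetric (𝔇 w s x) + (k : ℝ) • H x - inducedMetric (𝔇 v s x)‖ ≤ k * e
  | 0, _ => ⟨w, hw, by simp, by simp⟩
  | k + 1, hk => by
    obtain ⟨u, hu, huw, hum⟩ := exists_forall_norm_inducedMetric_sub_le hw hstep hK k (by lia)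
    obtain ⟨v, hv, hvu, hvm⟩ := hstep u hu fun x hx => hK k (by lia) x hx _ (hum x hx)
    refine ⟨v, hv, fun x hx => ?_, fun x hx => ?_⟩
    · push_cast
      linarith [norm_sub_le_norm_sub_add_norm_sub (v x) (u x) (w x), huw x hx, hvu x hx]
    · have hsplit : inducedMetric (𝔇 w s x) + ((k + 1 : ℕ) : ℝ) • H x - inducedMetric (𝔇 v s x) =
          (inducedMetric (𝔇 w s x) + (k : ℝ) • H x - inducedMetric (𝔇 u s x)) -
            (inducedMetric (𝔇 v s x) - inducedMetric (𝔇 u s x) - H x) := by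
        push_cast
        rw [add_smul, one_smul]
        abel
      rw [hsplit]
      push_cast
      linarith [norm_sub_le_of_le (hum x hx) (hvm x hx)]

theorem exists_nat_mul_sq_eq_one (C : ℝ) {δ₁ e : ℝ} (hδ₁ : 0 < δ₁) (he : 0 < e) :
    ∃ (M : ℕ) (δ : ℝ), 0 < M ∧ 0 < δ ∧ δ ≤ δ₁ ∧ M * δ ^ 2 = 1 ∧ M * (C * δ ^ 4) ≤ e := by
  obtain ⟨M, hM⟩ := exists_nat_gt (max (1 / δ₁ ^ 2) (C / e))
  obtain ⟨hM₁, hM₂⟩ := max_lt_iff.1 hM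
  have hM0 : (0 : ℝ) < M := lt_trans (by positivity) hM₁
  have hδ : √(1 / M) ^ 2 = 1 / (M : ℝ) := Real.sq_sqrt (by positivity)
  refine ⟨M, √(1 / M), by exact_mod_cast hM0, by positivity, ?_, ?_, ?_⟩
  · rw [Real.sqrt_le_left hδ₁.le, div_le_comm₀ hM0 (by positivity)]
    exact hM₁.le
  · rw [hδ, mul_one_div_cancel hM0.ne']
  · calc M * (C * √(1 / M) ^ 4) = M * (C * (√(1 / M) ^ 2) ^ 2) := by ring
      _ = C / M := by rw [hδ]; field_simp
      _ ≤ e := by rw [div_le_comm₀ hM0 he]; exact hM₂.le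

theorem mem_bilipSet_of_norm_add_smul_sub_le {E F : Type*} [NormedAddCommGroup E]
    [NormedSpace ℝ E] [NormedAddCommGroup F] [InnerProductSpace ℝ F] {G H : E →L[ℝ] E →L[ℝ] ℝ}
    {A : E →L[ℝ] F} {b b' c e t : ℝ} (h : ‖G + t • H - inducedMetric A‖ ≤ e)
    (hG : ∀ w, c ^ 2 * ‖w‖ ^ 2 ≤ G w w) (hH : ∀ w, 0 ≤ H w w) (hb : ‖G‖ ≤ b) (hb' : ‖H‖ ≤ b')
    (ht : 0 ≤ t) (ht1 : t ≤ 1) (hec : e ≤ c ^ 2 / 2) (he1 : e ≤ 1) :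
    A ∈ bilipSet E F (c / 2) (b + b' + 1) := by
  have hb0 := (norm_nonneg _).trans hb
  have hb0' := (norm_nonneg _).trans hb'
  refine mem_bilipSet_of_norm_sub_inducedMetric_le (a := c ^ 2) (b := b + b') h
    (fun w => (hG w).trans (le_add_of_nonneg_right (mul_nonneg ht (hH w))))
    (norm_add_le_of_le hb ?_) (by nlinarith) (by nlinarith) (by positivity)
  rw [norm_smul, Real.norm_of_nonneg ht]
  exact (mul_le_of_le_one_left (norm_nonneg _) ht1).trans hb'

end Iterate

variable {s : Set (EuclideanSpace ℝ (Fin d))}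

theorem exists_one_le_and_le_mul_and_div_le {a b c η : ℝ} (ha : 0 < a) (hη : 0 < η) :
    ∃ r : ℝ, 1 ≤ r ∧ b ≤ a * r ∧ c / r ≤ η :=
  ((Filter.eventually_ge_atTop 1).and
    (((Filter.tendsto_id.const_mul_atTop ha).eventually_ge_atTop b).and
      ((tendsto_const_nhds.div_atTop Filter.tendsto_id).eventually_le_const hη))).exists

theorem exists_norm_inducedMetric_sub_sum_le {ι : Type*} [Fintype ι] (ν : ι → 𝔼) {b : ι → 𝔼 → ℝ}
    {K : Set (𝔼 →L[ℝ] 𝔽)} (hsc : IsCompact s) (hs : UniqueDiffOn ℝ s)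
    (hb : ∀ i, ContDiffOn ℝ ∞ (b i) s) (hK : IsCompact K)
    (hKi : K ⊆ {A | Function.Injective A}) :
    ∃ C δ₁ : ℝ, 0 ≤ C ∧ 0 < δ₁ ∧ ∀ (δ η : ℝ) (u : 𝔼 → 𝔽), 0 < δ → δ ≤ δ₁ → 0 < η →
      ContDiffOn ℝ ∞ u s → MapsTo (𝔇 u s) s K → ∃ v, ContDiffOn ℝ ∞ v s ∧
      (∀ x ∈ s, ‖v x - u x‖ ≤ η) ∧
      ∀ x ∈ s, ‖inducedMetric (𝔇 v s x) - inducedMetric (𝔇 u s x) -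
        δ ^ 2 • ∑ i, b i x ^ 2 • dyad (ν i)‖ ≤ C * δ ^ 4 := by
  set m := Fintype.card ι
  choose B hB hbB using fun i =>
    exists_bound_iteratedFDerivWithin hsc subset_rfl hs (hb i) (m + 1)
  set A := 1 + ∑ i, B i
  have hsum : 0 ≤ ∑ i, B i := Finset.sum_nonneg fun i _ => hB i
  have hBA (i : ι) : B i ≤ A := by
    have := Finset.single_le_sum (fun i _ => hB i) (Finset.mem_univ i)
    unfold A
    linarith
  obtain ⟨C, δ₁, hC, hδ₁, h⟩ := exists_corrugation_sum ν hK hKi hs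
    (A := A) (by positivity) Finset.univ 0
  refine ⟨2 * C, min δ₁ 1, by positivity, by positivity, fun δ η u hδ hδ' hη hu hmaps => ?_⟩
  obtain ⟨hδ1, hδ2⟩ := le_min_iff.1 hδ'
  have hDDu : ContDiffOn ℝ ∞ (𝔇 (𝔇 u s) s) s :=
    (hu.fderivWithin hs (m := ∞) le_rfl).fderivWithin hs le_rfl
  obtain ⟨M, _, huM⟩ := exists_bound_iteratedFDerivWithin hsc subset_rfl hs hDDu m
  obtain ⟨r, hr, hMr, hrη⟩ := exists_one_le_and_le_mul_and_div_le (a := A * δ) (b := M) (c := C * δ)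
    (by positivity) hη
  obtain ⟨v, hv⟩ := h δ r (δ ^ 2)⁻¹ u (fun i x => δ * b i x) hδ.le hδ1 (by positivity)
    (one_le_inv₀ (by positivity) |>.2 (pow_le_one₀ hδ.le hδ2)) hu hmaps
    (fun x hx => (JetBound.of_norm_le hDDu (fun j hj => huM x hx j (by simpa using hj)) hr).mono
      hMr (by positivity) le_rfl le_rfl)
    fun i _ x hx => by
      have := (JetBound.of_norm_le (hb i) (fun j hj => hbB i x hx j (by simpa using hj)) hr
        |>.const_smul (N := 0 + (Finset.univ : Finset ι).card + 1) δ hs hx)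
      refine this.mono ?_ (by positivity) le_rfl le_rfl
      rw [abs_of_pos hδ, mul_comm]
      gcongr
      exact hBA i
  refine ⟨v, hv.contDiffOn, fun x hx => (hv.norm_sub_le x hx).trans hrη, fun x hx => ?_⟩
  have := hv.norm_inducedMetric_sub_le x hx
  simp only [mul_pow, mul_smul, ← Finset.smul_sum] at this
  exact this.trans_eq (by field_simp; ring)

theorem exists_norm_inducedMetric_add_sum_sub_le {ι : Type*} [Fintype ι] (ν : ι → 𝔼)
    {b : ι → 𝔼 → ℝ} (hsc : IsCompact s) (hs : UniqueDiffOn ℝ s)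
    (hb : ∀ i, ContDiffOn ℝ ∞ (b i) s) {w : 𝔼 → 𝔽} (hw : ContDiffOn ℝ ∞ w s)
    (hinj : ∀ x ∈ s, Function.Injective (𝔇 w s x)) {η : ℝ} (hη : 0 < η) :
    ∃ v, ContDiffOn ℝ ∞ v s ∧ (∀ x ∈ s, ‖v x - w x‖ ≤ η) ∧ ∀ x ∈ s,
      ‖inducedMetric (𝔇 w s x) + ∑ i, b i x ^ 2 • dyad (ν i) - inducedMetric (𝔇 v s x)‖ ≤ η := by
  set H : 𝔼 → 𝔼 →L[ℝ] 𝔼 →L[ℝ] ℝ := fun x => ∑ i, b i x ^ 2 • dyad (ν i)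
  have hH : ContinuousOn H s := continuousOn_finsetSum _ fun i _ =>
    ((hb i).continuousOn.pow 2).smul continuousOn_const
  have hH0 (x ζ) : 0 ≤ H x ζ ζ := by
    simp only [H, _root_.sum_apply, _root_.smul_apply, dyad_apply, smul_eq_mul]
    exact Finset.sum_nonneg fun i _ => mul_nonneg (sq_nonneg _) (mul_self_nonneg _)
  have hmw : ContinuousOn (fun x => inducedMetric (𝔇 w s x)) s :=
    continuous_inducedMetric.comp_continuousOn (hw.continuousOn_fderivWithin hs (by simp))
  obtain ⟨c, hc, hcw⟩ := exists_mul_sq_le_apply_apply hsc hmw fun x hx ζ hζ =>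
    real_inner_self_pos.2 ((map_ne_zero_iff _ (hinj x hx)).2 hζ)
  obtain ⟨B₁, hB₁⟩ := hsc.exists_bound_of_continuousOn hmw
  obtain ⟨B₂, hB₂⟩ := hsc.exists_bound_of_continuousOn hH
  obtain ⟨C, δ₁, hC, hδ₁, hstep⟩ := exists_norm_inducedMetric_sub_sum_le ν hsc hs hb
    (isCompact_bilipSet (E := 𝔼) (F := 𝔽) (c / 2) (B₁ + B₂ + 1))
    fun A hA => injective_of_mem_bilipSet (half_pos hc) hA
  obtain ⟨M, δ, hM, hδ, hδδ, hMδ, hMe⟩ := exists_nat_mul_sq_eq_one C hδ₁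
    (e := min η (min (c ^ 2 / 2) 1)) (by positivity)
  simp only [le_min_iff] at hMe
  obtain ⟨v, hv, hvw, hvm⟩ := exists_forall_norm_inducedMetric_sub_le (η := η / M)
    (H := fun x => δ ^ 2 • H x) hw
    (fun u hu hmaps => hstep δ (η / M) u hδ hδδ (by positivity) hu hmaps)
    (fun k hk x hx A hA => by
      have hkM : (k : ℝ) ≤ M := mod_cast hk
      have hkδ : k * δ ^ 2 ≤ 1 := hMδ ▸ by gcongr
      have hke : k * (C * δ ^ 4) ≤ M * (C * δ ^ 4) := by gcongr
      exact mem_bilipSet_of_norm_add_smul_sub_le (smul_smul (k : ℝ) (δ ^ 2) (H x) ▸ hA)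
        (hcw x hx) (hH0 x) (hB₁ x hx) (hB₂ x hx) (by positivity) hkδ
        (hke.trans hMe.2.1) (hke.trans hMe.2.2)) M le_rfl
  refine ⟨v, hv, fun x hx => (hvw x hx).trans_eq (mul_div_cancel₀ _ (by positivity)),
    fun x hx => ?_⟩
  have := hvm x hx
  rw [smul_smul, hMδ, one_smul] at this
  exact this.trans hMe.1

theorem approxIsometric_of_immersion (hsc : IsCompact s) (hs : UniqueDiffOn ℝ s)
    {γ : 𝔼 → 𝔼 →L[ℝ] 𝔼 →L[ℝ] ℝ} {w : 𝔼 → 𝔽} (hw : ContDiffOn ℝ ∞ w s)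
    (hinj : ∀ x ∈ s, Function.Injective (𝔇 w s x)) (hγ : ContinuousOn γ s)
    (hcomm : ∀ x ∈ s, ∀ ζ ζ', γ x ζ ζ' = γ x ζ' ζ)
    (hle : ∀ x ∈ s, ∀ ζ, ‖𝔇 w s x ζ‖ ^ 2 ≤ γ x ζ ζ) : ApproxIsometric s γ w := by
  intro η hη
  have hmw : ContinuousOn (fun x => inducedMetric (𝔇 w s x)) s :=
    continuous_inducedMetric.comp_continuousOn (hw.continuousOn_fderivWithin hs (by simp))
  obtain ⟨ι, _, ν, b, hb, hdec⟩ := exists_norm_sub_sum_sq_smul_dyad_le hsc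
    (h := fun x => γ x - inducedMetric (𝔇 w s x)) (hγ.sub hmw)
    (fun x hx ζ ζ' => by simp [hcomm x hx ζ ζ', real_inner_comm])
    (fun x hx ζ => by simpa using hle x hx ζ) (half_pos hη)
  obtain ⟨v, hv, hvw, hvm⟩ :=
    exists_norm_inducedMetric_add_sum_sub_le ν hsc hs hb hw hinj (half_pos hη)
  refine ⟨v, hv, fun x hx => (hvw x hx).trans (by linarith), fun x hx => ?_⟩
  have hsplit : γ x - inducedMetric (𝔇 v s x) =
      (γ x - inducedMetric (𝔇 w s x) - ∑ i, b i x ^ 2 • dyad (ν i)) +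
        (inducedMetric (𝔇 w s x) + ∑ i, b i x ^ 2 • dyad (ν i) - inducedMetric (𝔇 v s x)) := by
    abel
  rw [hsplit]
  linarith [norm_add_le_of_le (hdec x hx) (hvm x hx)]

end ApproxIsometric

section Initialization

theorem nonempty_linearIsometry_succ : Nonempty (𝔼 →ₗᵢ[ℝ] 𝔽) := by
  set B := EuclideanSpace.basisFun (Fin d) ℝ
  set f : 𝔼 →ₗ[ℝ] 𝔽 := B.toBasis.constr ℝ fun i => EuclideanSpace.single i.castSucc (1 : ℝ)
  refine ⟨f.isometryOfOrthonormal (v := B.toBasis) (by simp [B]) ?_⟩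
  have : f ∘ B.toBasis = EuclideanSpace.basisFun (Fin (d + 1)) ℝ ∘ Fin.castSucc := by
    ext i : 1
    simp [f]
  rw [this]
  exact (EuclideanSpace.basisFun (Fin (d + 1)) ℝ).orthonormal.comp _ (Fin.castSucc_injective d)

section Growth

variable {E F : Type*} [NormedAddCommGroup E] [NormedSpace ℝ E] [NormedAddCommGroup F]
  [InnerProductSpace ℝ F] {q : E →L[ℝ] E →L[ℝ] ℝ} {A B : E →L[ℝ] F} {c σ τ : ℝ}

theorem abs_mul_apply_apply_sub_norm_sq_le {ξ : ℝ} (hA : ‖σ ^ 2 • q - inducedMetric A‖ ≤ ξ)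
    (w : E) : |σ ^ 2 * q w w - ‖A w‖ ^ 2| ≤ ξ * ‖w‖ ^ 2 := by
  have h := (σ ^ 2 • q - inducedMetric A).le_of_opNorm₂_le_of_le hA (le_refl ‖w‖) (le_refl ‖w‖)
  simpa [mul_assoc, ← sq, real_inner_self_eq_norm_sq] using h

theorem norm_add_smul_apply_sq_le (hτ : 0 < τ) (hσ : 2 * τ ≤ σ)
    (hA : ‖σ ^ 2 • q - inducedMetric A‖ ≤ τ ^ 2 * c ^ 2)
    (hB : ∀ w, ‖B w‖ ^ 2 + c ^ 2 * ‖w‖ ^ 2 ≤ q w w) (w : E) :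
    ‖(A + τ • B) w‖ ^ 2 ≤ (σ + τ) ^ 2 * q w w := by
  have hAw := (abs_le.1 (abs_mul_apply_apply_sub_norm_sq_le hA w)).1
  have hσ0 : 0 < σ := by linarith
  have htri : ‖(A + τ • B) w‖ ≤ ‖A w‖ + τ * ‖B w‖ := by
    simpa [norm_smul, abs_of_pos hτ] using norm_add_le (A w) (τ • B w)
  refine (pow_le_pow_left₀ (norm_nonneg _) htri 2).trans (le_of_mul_le_mul_left ?_ hσ0)
  calc σ * (‖A w‖ + τ * ‖B w‖) ^ 2 ≤
        (σ + τ) * ‖A w‖ ^ 2 + σ * τ * (σ + τ) * ‖B w‖ ^ 2 := by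
        linarith [mul_nonneg hτ.le (sq_nonneg (‖A w‖ - σ * ‖B w‖))]
    _ ≤ (σ + τ) * (σ ^ 2 * q w w + τ ^ 2 * c ^ 2 * ‖w‖ ^ 2) +
        σ * τ * (σ + τ) * (q w w - c ^ 2 * ‖w‖ ^ 2) := by
        gcongr
        · linarith
        · linarith [hB w]
    _ = σ * ((σ + τ) ^ 2 * q w w) - (σ + τ) * τ * (σ - τ) * (c ^ 2 * ‖w‖ ^ 2) := by ring
    _ ≤ σ * ((σ + τ) ^ 2 * q w w) := by
        have : 0 ≤ σ - τ := by linarith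
        exact sub_le_self _ (by positivity)

theorem injective_add_smul (hc : 0 < c) (hτ : 0 < τ) (hσ : 2 * τ ≤ σ)
    (hA : ‖σ ^ 2 • q - inducedMetric A‖ ≤ τ ^ 2 * c ^ 2)
    (hB : ∀ w, ‖B w‖ ^ 2 + c ^ 2 * ‖w‖ ^ 2 ≤ q w w) : Function.Injective (A + τ • B) := by
  refine (injective_iff_map_eq_zero _).2 fun w hw => norm_le_zero_iff.1 ?_
  have hAw := (abs_le.1 (abs_mul_apply_apply_sub_norm_sq_le hA w)).2
  have hnorm : ‖A w‖ ^ 2 = τ ^ 2 * ‖B w‖ ^ 2 := by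
    have : A w = -(τ • B w) := eq_neg_of_add_eq_zero_left hw
    rw [this, norm_neg, norm_smul, mul_pow, Real.norm_eq_abs, sq_abs]
  have hq : 0 ≤ q w w := le_trans (by positivity) (hB w)
  have hσq : (2 * τ) ^ 2 * q w w ≤ σ ^ 2 * q w w := by gcongr
  have hBτ : τ ^ 2 * (‖B w‖ ^ 2 + c ^ 2 * ‖w‖ ^ 2) ≤ τ ^ 2 * q w w := by
    gcongr
    exact hB w
  have hτq : τ ^ 2 * q w w ≤ 0 := by linarith [mul_nonneg (sq_nonneg τ) hq]
  have hcw : c ^ 2 * ‖w‖ ^ 2 ≤ 0 := by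
    linarith [hB w, sq_nonneg ‖B w‖, nonpos_of_mul_nonpos_right hτq (by positivity)]
  exact (pow_eq_zero_iff two_ne_zero).1
    (le_antisymm (nonpos_of_mul_nonpos_right hcw (by positivity)) (sq_nonneg _)) |>.le

end Growth

variable {s : Set (EuclideanSpace ℝ (Fin d))}
  {γ : EuclideanSpace ℝ (Fin d) → EuclideanSpace ℝ (Fin d) →L[ℝ] EuclideanSpace ℝ (Fin d) →L[ℝ] ℝ}
  {u : EuclideanSpace ℝ (Fin d) → EuclideanSpace ℝ (Fin (d + 1))}

theorem ApproxIsometric.add_smul {f : 𝔼 → 𝔽} {c σ τ : ℝ} (hsc : IsCompact s)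
    (hs : UniqueDiffOn ℝ s) (hγ : ContinuousOn γ s)
    (hcomm : ∀ x ∈ s, ∀ ζ ζ', γ x ζ ζ' = γ x ζ' ζ) (hu : ContDiffOn ℝ ∞ u s) (hc : 0 < c)
    (hlow : ∀ x ∈ s, ∀ ζ, ‖𝔇 u s x ζ‖ ^ 2 + c ^ 2 * ‖ζ‖ ^ 2 ≤ γ x ζ ζ) (hτ : 0 < τ)
    (hσ : 2 * τ ≤ σ) (hf : ApproxIsometric s (fun x => σ ^ 2 • γ x) f) :
    ApproxIsometric s (fun x => (σ + τ) ^ 2 • γ x) (fun x => f x + τ • u x) := by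
  refine .of_forall_exists fun η hη => ?_
  obtain ⟨w, hw, hwf, hwγ⟩ := hf (min η (τ ^ 2 * c ^ 2)) (by positivity)
  have hD (x : 𝔼) (hx : x ∈ s) : 𝔇 (fun y => w y + τ • u y) s x = 𝔇 w s x + τ • 𝔇 u s x := by
    have hux := hu.differentiableOn (by simp) x hx
    rw [fderivWithin_fun_add (hs x hx) (hw.differentiableOn (by simp) x hx) (hux.fun_const_smul τ),
      fderivWithin_fun_const_smul (hs x hx) hux]
  have hwγ' (x : 𝔼) (hx : x ∈ s) : ‖σ ^ 2 • γ x - inducedMetric (𝔇 w s x)‖ ≤ τ ^ 2 * c ^ 2 :=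
    (hwγ x hx).trans (min_le_right _ _)
  refine ⟨fun x => w x + τ • u x, fun x hx => ?_, approxIsometric_of_immersion hsc hs
    (hw.add (hu.const_smul τ)) (fun x hx => ?_) (hγ.fun_const_smul _)
    (fun x hx ζ ζ' => ?_) fun x hx ζ => ?_⟩
  · rw [add_sub_add_right_eq_sub]
    exact (hwf x hx).trans (min_le_left _ _)
  · rw [hD x hx]
    exact injective_add_smul hc hτ hσ (hwγ' x hx) (hlow x hx)
  · simp only [_root_.smul_apply, hcomm x hx ζ ζ']
  · rw [hD x hx]
    exact norm_add_smul_apply_sq_le hτ hσ (hwγ' x hx) (hlow x hx) ζ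

theorem approxIsometric_smul_linearIsometry {c σ : ℝ} (I : 𝔼 →ₗᵢ[ℝ] 𝔽) (hsc : IsCompact s)
    (hs : UniqueDiffOn ℝ s) (hγ : ContinuousOn γ s)
    (hcomm : ∀ x ∈ s, ∀ ζ ζ', γ x ζ ζ' = γ x ζ' ζ) (hc : 0 < c) (hσ : 0 < σ)
    (hlow : ∀ x ∈ s, ∀ ζ, c ^ 2 * ‖ζ‖ ^ 2 ≤ γ x ζ ζ) :
    ApproxIsometric s (fun x => σ ^ 2 • γ x) fun x => (σ * c) • I x := by
  have hD (x : 𝔼) (hx : x ∈ s) :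
      𝔇 (fun x => (σ * c) • I x) s x = (σ * c) • I.toContinuousLinearMap :=
    ((σ * c) • I.toContinuousLinearMap).hasFDerivWithinAt.fderivWithin (hs x hx)
  refine approxIsometric_of_immersion hsc hs
    (((σ * c) • I.toContinuousLinearMap).contDiff.contDiffOn) (fun x hx => ?_) (hγ.fun_const_smul _)
    (fun x hx ζ ζ' => ?_) fun x hx ζ => ?_
  · rw [hD x hx]
    exact (smul_right_injective _ (by positivity : σ * c ≠ 0)).comp I.injective
  · simp only [_root_.smul_apply, hcomm x hx ζ ζ']
  · have := mul_le_mul_of_nonneg_left (hlow x hx ζ) (sq_nonneg σ)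
    simpa [hD x hx, norm_smul, mul_pow, mul_assoc] using this

theorem approxIsometric_add_mul_smul {c τ : ℝ} (I : 𝔼 →ₗᵢ[ℝ] 𝔽) (hsc : IsCompact s)
    (hs : UniqueDiffOn ℝ s) (hγ : ContinuousOn γ s)
    (hcomm : ∀ x ∈ s, ∀ ζ ζ', γ x ζ ζ' = γ x ζ' ζ) (hu : ContDiffOn ℝ ∞ u s) (hc : 0 < c)
    (hlow : ∀ x ∈ s, ∀ ζ, ‖𝔇 u s x ζ‖ ^ 2 + c ^ 2 * ‖ζ‖ ^ 2 ≤ γ x ζ ζ) (hτ : 0 < τ) (k : ℕ) :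
    ApproxIsometric s (fun x => ((k + 2) * τ) ^ 2 • γ x)
      fun x => (2 * τ * c) • I x + (k * τ) • u x := by
  induction k with
  | zero =>
    simpa using approxIsometric_smul_linearIsometry (σ := 2 * τ) I hsc hs hγ hcomm hc
      (by positivity) fun x hx ζ => le_trans (by linarith [sq_nonneg ‖𝔇 u s x ζ‖]) (hlow x hx ζ)
  | succ k ih =>
    have := ih.add_smul hsc hs hγ hcomm hu hc hlow hτ (by gcongr; linarith [k.cast_nonneg (α := ℝ)])
    have hσ : (((k + 1 : ℕ) : ℝ) + 2) * τ = (k + 2) * τ + τ := by push_cast; ring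
    have hk : ((k + 1 : ℕ) : ℝ) * τ = k * τ + τ := by push_cast; ring
    simpa only [hσ, hk, add_smul (k * τ) τ, add_assoc] using this

theorem approxIsometric_of_short (hsc : IsCompact s) (hs : UniqueDiffOn ℝ s)
    (hγ : ContinuousOn γ s) (hcomm : ∀ x ∈ s, ∀ ζ ζ', γ x ζ ζ' = γ x ζ' ζ)
    (hu : ContDiffOn ℝ ∞ u s) {c : ℝ} (hc : 0 < c)
    (hlow : ∀ x ∈ s, ∀ ζ, ‖𝔇 u s x ζ‖ ^ 2 + c ^ 2 * ‖ζ‖ ^ 2 ≤ γ x ζ ζ) :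
    ApproxIsometric s γ u := by
  obtain ⟨I⟩ := nonempty_linearIsometry_succ (d := d)
  refine .of_forall_exists fun η hη => ?_
  obtain ⟨B, hB⟩ := hsc.exists_bound_of_continuousOn (f := fun x => c • I x - u x)
    ((I.continuous.const_smul c).continuousOn.sub hu.continuousOn)
  obtain ⟨m, hm⟩ := exists_nat_gt (2 * |B| / η)
  set τ : ℝ := 1 / (m + 2)
  have hτ : 0 < τ := by positivity
  have hmτ : (m + 2) * τ = 1 := by
    unfold τ
    field_simp
  refine ⟨fun x => (2 * τ * c) • I x + (m * τ) • u x, fun x hx => ?_, ?_⟩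
  · have hsub : (2 * τ * c) • I x + (m * τ) • u x - u x = (2 * τ) • (c • I x - u x) := by
      rw [smul_sub, smul_smul, show m * τ = 1 - 2 * τ by linarith, sub_smul, one_smul]
      abel
    rw [hsub, norm_smul, Real.norm_of_nonneg (by positivity)]
    calc 2 * τ * ‖c • I x - u x‖ ≤ 2 * τ * |B| := by
          gcongr
          exact (hB x hx).trans (le_abs_self _)
      _ ≤ τ * (η * (m + 2)) := by
          rw [div_lt_iff₀ hη] at hm
          nlinarith
      _ = η := by linear_combination η * hmτ
  · simpa [hmτ] using approxIsometric_add_mul_smul I hsc hs hγ hcomm hu hc hlow hτ m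

theorem approxIsometric_unitBall_of_short (hγ : ContinuousOn γ 𝔹)
    (hcomm : ∀ x ∈ 𝔹, ∀ ζ ζ', γ x ζ ζ' = γ x ζ' ζ) (hu : ContDiffOn ℝ 1 u 𝔹) {c : ℝ}
    (hc : 0 < c) (hlow : ∀ x ∈ 𝔹, ∀ ζ, ‖𝔇 u 𝔹 x ζ‖ ^ 2 + c ^ 2 * ‖ζ‖ ^ 2 ≤ γ x ζ ζ) :
    ApproxIsometric 𝔹 γ u := by
  obtain ⟨K, hK⟩ := (isCompact_closedBall (0 : 𝔼) 1).exists_bound_of_continuousOn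
    (hu.continuousOn_fderivWithin uniqueDiffOn_unitBall le_rfl)
  refine .of_forall_exists fun η hη => ?_
  set σ := min η (min 1 (c ^ 2 / (2 * (2 * |K| + 1))))
  have hσ : 0 < σ := by positivity
  have hσ1 : σ ≤ 1 := (min_le_right _ _).trans (min_le_left _ _)
  have hσc : σ * (2 * |K| + 1) ≤ c ^ 2 / 2 := by
    have : σ ≤ c ^ 2 / (2 * (2 * |K| + 1)) := (min_le_right _ _).trans (min_le_right _ _)
    rw [le_div_iff₀ (by positivity)] at this
    linarith
  obtain ⟨w, hw, hwu, hDwu⟩ := exists_contDiffOn_infty_approx hu hσ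
  refine ⟨w, fun x hx => (hwu x hx).trans (min_le_left _ _), approxIsometric_of_short
    (isCompact_closedBall _ _) uniqueDiffOn_unitBall hγ hcomm hw (half_pos hc) fun x hx ζ => ?_⟩
  have hDu : ‖𝔇 u 𝔹 x ζ‖ ≤ |K| * ‖ζ‖ :=
    ((𝔇 u 𝔹 x).le_of_opNorm_le (hK x hx) ζ).trans (by gcongr; exact le_abs_self K)
  have hDw : ‖𝔇 w 𝔹 x ζ‖ ≤ ‖𝔇 u 𝔹 x ζ‖ + σ * ‖ζ‖ := by
    have := (𝔇 w 𝔹 x - 𝔇 u 𝔹 x).le_of_opNorm_le (hDwu x hx) ζ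
    rw [_root_.sub_apply] at this
    linarith [norm_le_norm_add_norm_sub' (𝔇 w 𝔹 x ζ) (𝔇 u 𝔹 x ζ)]
  calc ‖𝔇 w 𝔹 x ζ‖ ^ 2 + (c / 2) ^ 2 * ‖ζ‖ ^ 2
      ≤ (‖𝔇 u 𝔹 x ζ‖ + σ * ‖ζ‖) ^ 2 + (c / 2) ^ 2 * ‖ζ‖ ^ 2 := by gcongr
    _ ≤ ‖𝔇 u 𝔹 x ζ‖ ^ 2 + 2 * (|K| * ‖ζ‖) * (σ * ‖ζ‖) + σ * ‖ζ‖ * (1 * ‖ζ‖) +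
        (c / 2) ^ 2 * ‖ζ‖ ^ 2 := by
      rw [add_sq, sq (σ * ‖ζ‖)]
      gcongr
    _ = ‖𝔇 u 𝔹 x ζ‖ ^ 2 + (σ * (2 * |K| + 1) + (c / 2) ^ 2) * ‖ζ‖ ^ 2 := by ring
    _ ≤ ‖𝔇 u 𝔹 x ζ‖ ^ 2 + c ^ 2 * ‖ζ‖ ^ 2 := by
      gcongr
      linarith [sq_nonneg c]
    _ ≤ γ x ζ ζ := hlow x hx ζ

end Initialization

section Main

theorem add_mul_sq_le_sub_smul_apply {E : Type*} [SeminormedAddCommGroup E] [NormedSpace ℝ E]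
    {q q' : E →L[ℝ] E →L[ℝ] ℝ} {b c δ : ℝ} {w : E} (hδ : 0 ≤ δ) (hδc : δ * (1 + ‖q'‖) ≤ c / 2)
    (h : b + c ^ 2 * ‖w‖ ^ 2 ≤ q w w) :
    b + (c / 2) ^ 2 * ‖w‖ ^ 2 ≤ (q - δ ^ 2 • q') w w := by
  have hq' : q' w w ≤ ‖q'‖ * ‖w‖ * ‖w‖ := (le_abs_self _).trans (q'.le_opNorm₂ w w)
  have hδ2 : δ ^ 2 * ‖q'‖ ≤ (c / 2) ^ 2 := by
    refine le_trans ?_ (pow_le_pow_left₀ (by positivity) hδc 2)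
    rw [mul_pow]
    gcongr
    linarith [sq_nonneg ‖q'‖, norm_nonneg q']
  simp only [_root_.sub_apply, _root_.smul_apply, smul_eq_mul]
  linarith [mul_le_mul_of_nonneg_left hq' (sq_nonneg δ),
    mul_le_mul_of_nonneg_right hδ2 (sq_nonneg ‖w‖), mul_nonneg (sq_nonneg c) (sq_nonneg ‖w‖)]

theorem exists_isometric_immersion (hd : 0 < d)
    {g : EuclideanSpace ℝ (Fin d) →
      EuclideanSpace ℝ (Fin d) →L[ℝ] EuclideanSpace ℝ (Fin d) →L[ℝ] ℝ}
    {L : NNReal} (hg : LipschitzOnWith L g 𝔹)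
    (hcomm : ∀ x ∈ 𝔹, ∀ w w', g x w w' = g x w' w) {u : 𝔼 → 𝔽} (hu : ContDiffOn ℝ 1 u 𝔹)
    (hshort : ∀ x ∈ 𝔹, ∀ w, w ≠ 0 → ‖𝔇 u 𝔹 x w‖ ^ 2 < g x w w) {α : ℝ} (hα : 0 < α)
    (hαd : α * (1 + (2 * Fintype.card (PairIdx (Fin d)) : ℕ)) < 1) {ε : ℝ} (hε : 0 < ε) :
    ∃ v : 𝔼 → 𝔽, ContDiffOn ℝ 1 v 𝔹 ∧
      (∃ C : ℝ, ∀ x ∈ 𝔹, ∀ y ∈ 𝔹, ‖𝔇 v 𝔹 x - 𝔇 v 𝔹 y‖ ≤ C * dist x y ^ α) ∧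
      (∀ x ∈ 𝔹, inducedMetric (𝔇 v 𝔹 x) = g x) ∧ ∀ x ∈ 𝔹, ‖v x - u x‖ ≤ ε := by
  obtain ⟨c, hc, hlow⟩ := exists_mul_sq_le_apply_apply (isCompact_closedBall (0 : 𝔼) 1)
    (g := fun x => g x - inducedMetric (𝔇 u 𝔹 x))
    (hg.continuousOn.sub (continuous_inducedMetric.comp_continuousOn
      (hu.continuousOn_fderivWithin uniqueDiffOn_unitBall le_rfl)))
    fun x hx w hw => by simpa using hshort x hx w hw
  simp only [_root_.sub_apply, inducedMetric_apply, real_inner_self_eq_norm_sq] at hlow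
  obtain ⟨C, δ₁, hC, hδ₁, hnear⟩ := exists_isometry_near ⟨⟨L, hg⟩, hcomm, fun x hx w hw =>
    (sq_nonneg _).trans_lt (hshort x hx w hw)⟩ hd hα hαd
  set δ : ℝ := min (min δ₁ (ε / 2 / C)) (c / (2 * (1 + ‖unitMetric d‖)))
  have hδ : 0 < δ := by positivity
  have hδε : C * δ ≤ ε / 2 := by
    rw [← le_div_iff₀' hC]
    exact (min_le_left _ _).trans (min_le_right _ _)
  have hδc : δ * (1 + ‖unitMetric d‖) ≤ c / 2 := by
    have : δ ≤ c / (2 * (1 + ‖unitMetric d‖)) := min_le_right _ _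
    rw [le_div_iff₀ (by positivity)] at this
    linarith
  obtain ⟨w, hw, hwu, hwg⟩ := approxIsometric_unitBall_of_short
    (hg.continuousOn.sub continuousOn_const)
    (fun x hx ζ ζ' => by simp [hcomm x hx ζ ζ', unitMetric_comm ζ ζ']) hu (half_pos hc)
    (fun x hx ζ => add_mul_sq_le_sub_smul_apply hδ.le hδc (by linarith [hlow x hx ζ]))
    (min (metricTol d * δ ^ 2) (ε / 2)) (lt_min (mul_pos (metricTol_pos d) (by positivity))
      (half_pos hε))
  obtain ⟨v, hv, hvα, hvg, hvw⟩ := hnear δ w hδ ((min_le_left _ _).trans (min_le_left _ _)) hw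
    fun x hx => (hwg x hx).trans (min_le_left _ _)
  refine ⟨v, hv, hvα, hvg, fun x hx => ?_⟩
  linarith [norm_sub_le_norm_sub_add_norm_sub (v x) (w x) (u x), hvw x hx,
    (hwu x hx).trans (min_le_right _ _)]

end Main

section MatrixForm

/-- The bilinear form `(w, w') ↦ wᵀ M w'` of a matrix `M`. -/
def matrixForm (d : ℕ) : Matrix (Fin d) (Fin d) ℝ →ₗ[ℝ]
    EuclideanSpace ℝ (Fin d) →L[ℝ] EuclideanSpace ℝ (Fin d) →L[ℝ] ℝ :=
  (innerForm (.id ℝ _)).toLinearMap ∘ₗ Matrix.toEuclideanCLM.toAlgEquiv.toLinearMap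

theorem matrixForm_apply (M : Matrix (Fin d) (Fin d) ℝ) (w w' : 𝔼) :
    matrixForm d M w w' = w ⬝ᵥ M *ᵥ w' :=
  Matrix.inner_toEuclideanCLM M w w'

theorem exists_lipschitzWith_matrixForm : ∃ K, LipschitzWith K (matrixForm d) :=
  ⟨_, (LinearMap.toContinuousLinearMap (matrixForm d)).lipschitz⟩

theorem matrixForm_injective : Function.Injective (matrixForm d) := fun M N h => by
  ext i j
  simpa [matrixForm_apply] using DFunLike.congr_fun
    (DFunLike.congr_fun h (EuclideanSpace.single i (1 : ℝ))) (EuclideanSpace.single j (1 : ℝ))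

theorem matrixForm_pos {M : Matrix (Fin d) (Fin d) ℝ} (hM : M.PosDef) {w : 𝔼} (hw : w ≠ 0) :
    0 < matrixForm d M w w := by
  rw [matrixForm_apply]
  exact hM.dotProduct_mulVec_pos ((WithLp.ofLp_eq_zero 2).not.2 hw)

theorem matrixForm_comm {M : Matrix (Fin d) (Fin d) ℝ} (hM : M.IsSymm) (w w' : 𝔼) :
    matrixForm d M w w' = matrixForm d M w' w := by
  rw [matrixForm_apply, matrixForm_apply, dotProduct_mulVec, ← mulVec_transpose, hM.eq,
    dotProduct_comm]

theorem jacCB_mulVec {n : ℕ} (u : 𝔼 → EuclideanSpace ℝ (Fin n)) (x w : 𝔼) :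
    JacCB u x *ᵥ w = 𝔇 u 𝔹 x w := by
  ext i
  conv_rhs => rw [← (EuclideanSpace.basisFun (Fin d) ℝ).sum_repr w]
  simp [JacCB, mulVec, dotProduct, mul_comm]

theorem matrixForm_transpose_jacCB_mul_jacCB {n : ℕ} (u : 𝔼 → EuclideanSpace ℝ (Fin n)) (x : 𝔼) :
    matrixForm d ((JacCB u x)ᵀ * JacCB u x) = inducedMetric (𝔇 u 𝔹 x) := by
  ext w w'
  rw [matrixForm_apply, ← mulVec_mulVec, dotProduct_mulVec, vecMul_transpose, jacCB_mulVec,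
    jacCB_mulVec, inducedMetric_apply, EuclideanSpace.inner_eq_star_dotProduct, dotProduct_comm]
  rfl

end MatrixForm

end NashKuiper

open NashKuiper in
theorem conti_deLellis_szekelyhidi_general {d : ℕ} {α : ℝ} (hα : 0 < α)
    (hα' : α < 1 / (1 + 2 * (d * (d + 1) / 2 : ℝ)))
    {g : EuclideanSpace ℝ (Fin d) → Matrix (Fin d) (Fin d) ℝ} {L : NNReal}
    (hg : LipschitzOnWith L g (closedBall (0 : EuclideanSpace ℝ (Fin d)) 1))
    {u₀ : EuclideanSpace ℝ (Fin d) → EuclideanSpace ℝ (Fin (d + 1))}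
    (hu₀ : ContDiffOn ℝ 1 u₀ (closedBall (0 : EuclideanSpace ℝ (Fin d)) 1))
    (hshort : ∀ x ∈ closedBall (0 : EuclideanSpace ℝ (Fin d)) 1,
      (g x - (JacCB u₀ x)ᵀ * JacCB u₀ x).PosDef) {ε : ℝ} (hε : 0 < ε) :
    ∃ u : EuclideanSpace ℝ (Fin d) → EuclideanSpace ℝ (Fin (d + 1)),
      ContDiffOn ℝ 1 u (closedBall (0 : EuclideanSpace ℝ (Fin d)) 1) ∧
      (∃ C : ℝ, ∀ x ∈ closedBall (0 : EuclideanSpace ℝ (Fin d)) 1,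
        ∀ y ∈ closedBall (0 : EuclideanSpace ℝ (Fin d)) 1,
          ‖fderivWithin ℝ u (closedBall (0 : EuclideanSpace ℝ (Fin d)) 1) x -
            fderivWithin ℝ u (closedBall (0 : EuclideanSpace ℝ (Fin d)) 1) y‖ ≤
          C * dist x y ^ α) ∧
      (∀ x ∈ closedBall (0 : EuclideanSpace ℝ (Fin d)) 1, (JacCB u x)ᵀ * JacCB u x = g x) ∧
      (∀ x ∈ closedBall (0 : EuclideanSpace ℝ (Fin d)) 1, dist (u x) (u₀ x) ≤ ε) := by
  rcases Nat.eq_zero_or_pos d with rfl | hd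
  · exact ⟨u₀, hu₀, ⟨0, fun x _ y _ => by simp [Subsingleton.elim x y]⟩,
      fun _ _ => Subsingleton.elim _ _, fun _ _ => by simpa using hε.le⟩
  have hdefect (x : EuclideanSpace ℝ (Fin d)) :
      matrixForm d (g x) = matrixForm d (g x - (JacCB u₀ x)ᵀ * JacCB u₀ x) +
        inducedMetric (fderivWithin ℝ u₀ (closedBall (0 : EuclideanSpace ℝ (Fin d)) 1) x) := by
    rw [map_sub, matrixForm_transpose_jacCB_mul_jacCB, sub_add_cancel]
  obtain ⟨K, hK⟩ := exists_lipschitzWith_matrixForm (d := d)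
  obtain ⟨u, hu, huα, hug, huu₀⟩ := exists_isometric_immersion hd (hK.comp_lipschitzOnWith hg)
    (fun x hx w w' => by
      rw [Function.comp_apply, hdefect]
      simp [-map_sub, matrixForm_comm (isHermitian_iff_isSymm.1 (hshort x hx).isHermitian) w w',
        real_inner_comm]) hu₀
    (fun x hx w hw => by
      rw [Function.comp_apply, hdefect]
      simp [-map_sub, matrixForm_pos (hshort x hx) hw]) hα (by
      push_cast
      rwa [card_pairIdx_fin, ← lt_div_iff₀ (by positivity)]) hε
  refine ⟨u, hu, huα, fun x hx => matrixForm_injective ?_, fun x hx => ?_⟩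
  · rw [matrixForm_transpose_jacCB_mul_jacCB, hug x hx, Function.comp_apply]
  · rw [dist_eq_norm]
    exact huu₀ x hx

/-- **Conti–De Lellis–Székelyhidi (2012).** For a `C²` metric `g` on the closed unit ball
`B̄₁ ⊂ ℝᵈ` and any `α < 1/(1 + 2s_d)` with `s_d = d(d+1)/2`, every `C¹` short map
`u₀ : B̄₁ → ℝ^{d+1}` can be uniformly `ε`-approximated by a `C^{1,α}` isometric immersion. -/
theorem conti_deLellis_szekelyhidi (d : ℕ) (hd : 2 ≤ d)
    (α : ℝ) (hα : 0 < α) (hα' : α < 1 / (1 + 2 * (d * (d + 1) / 2 : ℝ)))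
    (g : EuclideanSpace ℝ (Fin d) → Matrix (Fin d) (Fin d) ℝ)
    (hg_reg : ContDiffOn ℝ 2 g (closedBall (0 : EuclideanSpace ℝ (Fin d)) 1))
    (hg_met : ∀ x ∈ closedBall (0 : EuclideanSpace ℝ (Fin d)) 1, (g x).IsSymm ∧ (g x).PosDef)
    (u₀ : EuclideanSpace ℝ (Fin d) → EuclideanSpace ℝ (Fin (d + 1)))
    (hu₀ : ContDiffOn ℝ 1 u₀ (closedBall (0 : EuclideanSpace ℝ (Fin d)) 1))
    (hshort : ∀ x ∈ closedBall (0 : EuclideanSpace ℝ (Fin d)) 1,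
      (g x - (JacCB u₀ x)ᵀ * JacCB u₀ x).PosDef)
    (ε : ℝ) (hε : 0 < ε) :
    ∃ u : EuclideanSpace ℝ (Fin d) → EuclideanSpace ℝ (Fin (d + 1)),
      ContDiffOn ℝ 1 u (closedBall (0 : EuclideanSpace ℝ (Fin d)) 1) ∧
      (∃ C : ℝ, ∀ x ∈ closedBall (0 : EuclideanSpace ℝ (Fin d)) 1,
        ∀ y ∈ closedBall (0 : EuclideanSpace ℝ (Fin d)) 1,
          ‖fderivWithin ℝ u (closedBall (0 : EuclideanSpace ℝ (Fin d)) 1) x -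
            fderivWithin ℝ u (closedBall (0 : EuclideanSpace ℝ (Fin d)) 1) y‖ ≤
          C * dist x y ^ α) ∧
      (∀ x ∈ closedBall (0 : EuclideanSpace ℝ (Fin d)) 1, (JacCB u x)ᵀ * JacCB u x = g x) ∧
      (∀ x ∈ closedBall (0 : EuclideanSpace ℝ (Fin d)) 1, dist (u x) (u₀ x) ≤ ε) := by
  obtain ⟨L, hL⟩ := ((hg_reg.of_le one_le_two).locallyLipschitzOn
    (convex_closedBall _ _)).exists_lipschitzOnWith_of_compact (isCompact_closedBall _ _)
  exact conti_deLellis_szekelyhidi_general hα hα' hL hu₀ hshort hε
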